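/- arXiv:math/0401091 — 2 statements merged into one kernel-verified Lean document; each statement's English description precedes it below -/
import Mathlib

section
/- Let (X, μ) and (Y, ν) be standard Borel spaces with σ-finite measures, K a countable index set, and let a_k : X → ℂ, b_k : Y → ℂ be bounded measurable functions with Σ_k (sup_x |a_k(x)|)² < ∞ and Σ_k (sup_y |b_k(y)|)² < ∞. Define Δ, Δ̃ : B(L²(X,μ), L²(Y,ν)) → B(L²(X,μ), L²(Y,ν)) by Δ(T) = Σ_{k∈K} M_{b_k} T M_{a_k} and Δ̃(T) = Σ_{k∈K} M_{conj(b_k)} T M_{conj(a_k)}, where M_f denotes multiplication by f and conj denotes complex conjugation. Assume there is a set D ⊆ ℓ²(K) of finite two-dimensional Hausdorff measure such that (a_k(x))_{k∈K} ∈ D for μ-almost every x. Then for every T ∈ B(L²(X,μ), L²(Y,ν)): Δ(T) is Hilbert–Schmidt if and only if Δ̃(T) is Hilbert–Schmidt, and in that case ‖Δ(T)‖₂ = ‖Δ̃(T)‖₂. (Extension of the Fuglede–Weiss theorem: ‖Σ_k B_k X A_k‖₂ = ‖Σ_k B_k* X A_k*‖₂ when the left coefficient family has essential dimension at most 2, with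 the convention that the Hilbert–Schmidt norm of a non-Hilbert–Schmidt operator is ∞.) -/
open MeasureTheory Filter ContinuousLinearMap
open scoped ENNReal NNReal

/-- The squared Hilbert–Schmidt norm of an operator, computed in the Hilbert basis `b`
(the value is independent of the choice of basis); it is `∞` precisely when the operator
is not Hilbert–Schmidt. -/
noncomputable def hsNormSq {E F : Type*} [NormedAddCommGroup E] [InnerProductSpace ℂ E]
    [NormedAddCommGroup F] [InnerProductSpace ℂ F] {ι : Type*} (b : HilbertBasis ι ℂ E)
    (T : E →L[ℂ] F) : ℝ≥0∞ :=
  ∑' i, (‖T (b i)‖₊ : ℝ≥0∞) ^ 2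

/-!
For Hilbert–Schmidt operators `S` and `R`, the commutation relations of the coefficients give
`⟪Δ S, Δ R⟫ = ⟪Δ̃ S, Δ̃ R⟫`, as in the theorem of Weiss. A bounded operator `T` is approximated on
finitely many prescribed vectors by the finite rank operators `T Pₙ`, where `Pₙ` is the projection
onto the span of the components of these vectors relative to a partition of the joint spectrum of
the `Aₖ` into cells of diameters `dⱼ`. The commutators `[Aₖ, Pₙ]` are controlled in Hilbert–Schmidt
norm by `∑ⱼ dⱼ²`, which stays bounded because the two-dimensional Hausdorff measure is finite, and
they tend to zero strongly as the mesh of the partition tends to zero. So if `Δ T` is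
Hilbert–Schmidt, the operators `Δ (T Pₙ)` are bounded in Hilbert–Schmidt norm, and the equality of
the inner products passes to the weak limits of `Δ (T Pₙ)` and `Δ̃ (T Pₙ)`.
-/

open scoped InnerProductSpace Topology

namespace FugledeWeiss

section ENNReal

lemma tsum_mul_sq_le_tsum_sq_mul_tsum_sq {K : Type*} (f g : K → ℝ≥0∞) :
    (∑' k, f k * g k) ^ 2 ≤ (∑' k, f k ^ 2) * ∑' k, g k ^ 2 := by
  have partial_le (F : Finset K) :
      ∑ k ∈ F, f k * g k ≤ ((∑' k, f k ^ 2) * ∑' k, g k ^ 2) ^ (1 / 2 : ℝ) := by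
    refine (ENNReal.inner_le_Lp_mul_Lq F f g Real.HolderConjugate.two_two).trans ?_
    rw [← ENNReal.mul_rpow_of_nonneg _ _ (by norm_num)]
    simp only [ENNReal.rpow_ofNat]
    gcongr <;> exact ENNReal.sum_le_tsum F
  calc (∑' k, f k * g k) ^ 2
      ≤ (((∑' k, f k ^ 2) * ∑' k, g k ^ 2) ^ (1 / 2 : ℝ)) ^ 2 := by
        gcongr
        exact ENNReal.summable.tsum_le_of_sum_le partial_le
    _ = (∑' k, f k ^ 2) * ∑' k, g k ^ 2 := by
        rw [← ENNReal.rpow_ofNat, ← ENNReal.rpow_mul]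
        norm_num

lemma enorm_sub_sq_le {E : Type*} [SeminormedAddCommGroup E] (x y : E) :
    ‖x - y‖ₑ ^ 2 ≤ 2 * (‖x‖ₑ ^ 2 + ‖y‖ₑ ^ 2) := by
  calc ‖x - y‖ₑ ^ 2 ≤ (‖x‖ₑ + ‖y‖ₑ) ^ 2 := by gcongr; exact enorm_sub_le
    _ ≤ 2 * (‖x‖ₑ ^ 2 + ‖y‖ₑ ^ 2) := by
        simpa [show (2 : ℝ) - 1 = 1 by norm_num] using
          ENNReal.rpow_add_le_mul_rpow_add_rpow ‖x‖ₑ ‖y‖ₑ one_le_two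

lemma tsum_enorm_sq_ne_top {K E : Type*} [SeminormedAddCommGroup E] {f : K → E}
    (hf : Summable fun k => ‖f k‖ ^ 2) : ∑' k, ‖f k‖ₑ ^ 2 ≠ ⊤ := by
  simpa only [ENNReal.ofReal_pow (norm_nonneg _), ofReal_norm] using hf.tsum_ofReal_ne_top

end ENNReal

section HilbertSchmidt

variable {H G : Type*} [NormedAddCommGroup H] [InnerProductSpace ℂ H]
  [NormedAddCommGroup G] [InnerProductSpace ℂ G] {ι κ : Type*}

lemma lp_enorm_sq {J E : Type*} [NormedAddCommGroup E] (u : lp (fun _ : J => E) 2) :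
    ‖u‖ₑ ^ 2 = ∑' j, ‖u j‖ₑ ^ 2 := by
  have h : HasSum (fun j => ‖u j‖ ^ 2) (‖u‖ ^ 2) := by
    simpa using lp.hasSum_norm (p := 2) (by norm_num) u
  simpa only [ENNReal.ofReal_tsum_of_nonneg (fun _ => sq_nonneg _) h.summable,
    ENNReal.ofReal_pow (norm_nonneg _), ofReal_norm] using congrArg ENNReal.ofReal h.tsum_eq.symm

lemma memℓp_two_iff_tsum_enorm_sq_ne_top {J E : Type*} [NormedAddCommGroup E] {f : J → E} :
    Memℓp f 2 ↔ ∑' j, ‖f j‖ₑ ^ 2 ≠ ⊤ := by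
  refine ⟨fun hf => ?_, fun hf => memℓp_gen ?_⟩
  · rw [← lp_enorm_sq ⟨f, hf⟩]
    exact ENNReal.pow_ne_top enorm_ne_top
  · simpa using ENNReal.summable_toReal hf

lemma hsNormSq_eq_tsum_enorm_sq (b : HilbertBasis ι ℂ H) (S : H →L[ℂ] G) :
    hsNormSq b S = ∑' i, ‖S (b i)‖ₑ ^ 2 := rfl

lemma tsum_enorm_inner_sq (b : HilbertBasis ι ℂ H) (x : H) :
    ∑' i, ‖⟪b i, x⟫_ℂ‖ₑ ^ 2 = ‖x‖ₑ ^ 2 := by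
  simp only [← b.repr_apply_apply, ← lp_enorm_sq, LinearIsometryEquiv.enorm_map]

lemma hsNormSq_adjoint [CompleteSpace H] [CompleteSpace G] (b : HilbertBasis ι ℂ H)
    (f : HilbertBasis κ ℂ G) (S : H →L[ℂ] G) : hsNormSq f (adjoint S) = hsNormSq b S := by
  calc ∑' j, ‖adjoint S (f j)‖ₑ ^ 2
      = ∑' j, ∑' i, ‖⟪b i, adjoint S (f j)⟫_ℂ‖ₑ ^ 2 := by simp only [tsum_enorm_inner_sq]
    _ = ∑' i, ∑' j, ‖⟪f j, S (b i)⟫_ℂ‖ₑ ^ 2 := by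
        rw [ENNReal.tsum_comm]
        simp only [adjoint_inner_right, ← ofReal_norm, norm_inner_symm]
    _ = ∑' i, ‖S (b i)‖ₑ ^ 2 := by simp only [tsum_enorm_inner_sq]

lemma hsNormSq_star [CompleteSpace H] (b : HilbertBasis ι ℂ H) (S : H →L[ℂ] H) :
    hsNormSq b (star S) = hsNormSq b S :=
  hsNormSq_adjoint b b S

lemma hsNormSq_sub_le (b : HilbertBasis ι ℂ H) (S R : H →L[ℂ] G) :
    hsNormSq b (S - R) ≤ 2 * (hsNormSq b S + hsNormSq b R) := by
  simp only [hsNormSq_eq_tsum_enorm_sq, ← ENNReal.tsum_add, ← ENNReal.tsum_mul_left]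
  exact ENNReal.tsum_le_tsum fun i => enorm_sub_sq_le _ _

lemma hsNormSq_comp_le_left {F : Type*} [NormedAddCommGroup F] [InnerProductSpace ℂ F]
    (b : HilbertBasis ι ℂ H) (L : G →L[ℂ] F) (S : H →L[ℂ] G) :
    hsNormSq b (L ∘L S) ≤ ‖L‖ₑ ^ 2 * hsNormSq b S := by
  simp only [hsNormSq_eq_tsum_enorm_sq, ← ENNReal.tsum_mul_left, ← mul_pow]
  gcongr with i
  exact L.le_opENorm _

lemma hsNormSq_comp_le_right [CompleteSpace H] [CompleteSpace G] (b : HilbertBasis ι ℂ H)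
    (S : H →L[ℂ] G) (R : H →L[ℂ] H) : hsNormSq b (S ∘L R) ≤ ‖R‖ₑ ^ 2 * hsNormSq b S := by
  obtain ⟨_, f, -⟩ := exists_hilbertBasis ℂ G
  have h := hsNormSq_comp_le_left f (adjoint R) (adjoint S)
  rwa [← adjoint_comp, hsNormSq_adjoint b f, hsNormSq_adjoint b f,
    LinearIsometryEquiv.enorm_map] at h

lemma hsNormSq_comp_le_of_norm_le_one [CompleteSpace H] [CompleteSpace G] (b : HilbertBasis ι ℂ H)
    (S : H →L[ℂ] G) {R : H →L[ℂ] H} (hR : ‖R‖ ≤ 1) : hsNormSq b (S ∘L R) ≤ hsNormSq b S := by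
  have hR' : ‖R‖ₑ ≤ 1 := by
    rw [← ofReal_norm]
    exact ENNReal.ofReal_le_one.2 hR
  exact (hsNormSq_comp_le_right b S R).trans (mul_le_of_le_one_left' (pow_le_one' hR' 2))

lemma hsNormSq_starProjection [CompleteSpace H] (b : HilbertBasis ι ℂ H) (V : Submodule ℂ H)
    [FiniteDimensional ℂ V] : hsNormSq b V.starProjection = Module.finrank ℂ V := by
  let v := (stdOrthonormalBasis ℂ V).toHilbertBasis
  calc hsNormSq b V.starProjection = hsNormSq b (adjoint V.subtypeL) := by
        simp only [hsNormSq_eq_tsum_enorm_sq, Submodule.adjoint_subtypeL, ← ofReal_norm,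
          Submodule.starProjection_apply, Submodule.coe_norm]
    _ = hsNormSq v V.subtypeL := hsNormSq_adjoint v b _
    _ = Module.finrank ℂ V := by
        simp [hsNormSq_eq_tsum_enorm_sq, v, ← ofReal_norm, ← Submodule.coe_norm]

/-- The Hilbert–Schmidt operator `S` as the vector `(S (b i))ᵢ` of `ℓ²(ι, G)`: this identifies the
Hilbert–Schmidt operators with a Hilbert space, so that their Hilbert–Schmidt inner product is
the one of `ℓ²(ι, G)`. -/
noncomputable def hsVec (b : HilbertBasis ι ℂ H) (S : H →L[ℂ] G) (hS : hsNormSq b S ≠ ⊤) :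
    lp (fun _ : ι => G) 2 :=
  ⟨fun i => S (b i), memℓp_two_iff_tsum_enorm_sq_ne_top.2 hS⟩

@[simp]
lemma hsVec_apply (b : HilbertBasis ι ℂ H) (S : H →L[ℂ] G) (hS : hsNormSq b S ≠ ⊤) (i : ι) :
    hsVec b S hS i = S (b i) := rfl

lemma enorm_hsVec_sq (b : HilbertBasis ι ℂ H) (S : H →L[ℂ] G) (hS : hsNormSq b S ≠ ⊤) :
    ‖hsVec b S hS‖ₑ ^ 2 = hsNormSq b S :=
  lp_enorm_sq _

lemma hsNormSq_comp_ne_top_left {F : Type*} [NormedAddCommGroup F] [InnerProductSpace ℂ F]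
    {b : HilbertBasis ι ℂ H} (L : G →L[ℂ] F) {S : H →L[ℂ] G} (hS : hsNormSq b S ≠ ⊤) :
    hsNormSq b (L ∘L S) ≠ ⊤ :=
  ne_top_of_le_ne_top (ENNReal.mul_ne_top (ENNReal.pow_ne_top enorm_ne_top) hS)
    (hsNormSq_comp_le_left b L S)

lemma hsNormSq_comp_ne_top_right [CompleteSpace H] [CompleteSpace G] {b : HilbertBasis ι ℂ H}
    {S : H →L[ℂ] G} (hS : hsNormSq b S ≠ ⊤) (R : H →L[ℂ] H) : hsNormSq b (S ∘L R) ≠ ⊤ :=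
  ne_top_of_le_ne_top (ENNReal.mul_ne_top (ENNReal.pow_ne_top enorm_ne_top) hS)
    (hsNormSq_comp_le_right b S R)

lemma hsNormSq_comp_comp_ne_top [CompleteSpace H] [CompleteSpace G] {b : HilbertBasis ι ℂ H}
    (L : G →L[ℂ] G) {S : H →L[ℂ] G} (hS : hsNormSq b S ≠ ⊤) (R : H →L[ℂ] H) :
    hsNormSq b (L ∘L S ∘L R) ≠ ⊤ :=
  hsNormSq_comp_ne_top_left L (hsNormSq_comp_ne_top_right hS R)

lemma norm_hsVec_comp_comp_le [CompleteSpace H] [CompleteSpace G] {b : HilbertBasis ι ℂ H}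
    (L : G →L[ℂ] G) {S : H →L[ℂ] G} (hS : hsNormSq b S ≠ ⊤) (R : H →L[ℂ] H) :
    ‖hsVec b (L ∘L S ∘L R) (hsNormSq_comp_comp_ne_top L hS R)‖ ≤
      ‖L‖ * ‖R‖ * ‖hsVec b S hS‖ := by
  have h : ‖hsVec b (L ∘L S ∘L R) (hsNormSq_comp_comp_ne_top L hS R)‖ₑ ^ 2 ≤
      (‖L‖ₑ * ‖R‖ₑ * ‖hsVec b S hS‖ₑ) ^ 2 := by
    rw [mul_pow, mul_pow, mul_assoc, enorm_hsVec_sq, enorm_hsVec_sq]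
    exact (hsNormSq_comp_le_left b L _).trans (by gcongr; exact hsNormSq_comp_le_right b S R)
  have h' := ENNReal.toReal_mono (by finiteness) ((ENNReal.pow_le_pow_left_iff two_ne_zero).1 h)
  simpa only [ENNReal.toReal_mul, toReal_enorm] using h'

lemma inner_hsVec_comp_left [CompleteSpace G] {b : HilbertBasis ι ℂ H} (L : G →L[ℂ] G)
    {S R : H →L[ℂ] G} (hS : hsNormSq b S ≠ ⊤) (hR : hsNormSq b R ≠ ⊤) :
    ⟪hsVec b (L ∘L S) (hsNormSq_comp_ne_top_left L hS), hsVec b R hR⟫_ℂ =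
      ⟪hsVec b S hS, hsVec b (star L ∘L R) (hsNormSq_comp_ne_top_left _ hR)⟫_ℂ := by
  simp only [lp.inner_eq_tsum, hsVec_apply, comp_apply, star_eq_adjoint, adjoint_inner_right]

lemma inner_eq_inner_of_norm_add_smul_eq {E E' : Type*} [NormedAddCommGroup E]
    [InnerProductSpace ℂ E] [NormedAddCommGroup E'] [InnerProductSpace ℂ E'] {x y : E} {x' y' : E'}
    (h : ∀ z : ℂ, ‖x + z • y‖ = ‖x' + (starRingEnd ℂ) z • y'‖) : ⟪x, y⟫_ℂ = ⟪y', x'⟫_ℂ := by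
  have h_add : ‖x + y‖ = ‖y' + x'‖ := by simpa [add_comm] using h 1
  have h_sub : ‖x - y‖ = ‖y' - x'‖ := by
    simpa [← sub_eq_add_neg, norm_sub_rev y'] using h (-1)
  have h_sub_I : ‖x - Complex.I • y‖ = ‖y' - Complex.I • x'‖ := by
    have h_rot : ‖y' - Complex.I • x'‖ = ‖Complex.I • (y' - Complex.I • x')‖ := by simp [norm_smul]
    simpa [h_rot, smul_sub, smul_smul, ← sub_eq_add_neg, add_comm] using h (-Complex.I)
  have h_add_I : ‖x + Complex.I • y‖ = ‖y' + Complex.I • x'‖ := by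
    have h_rot : ‖y' + Complex.I • x'‖ = ‖Complex.I • (y' + Complex.I • x')‖ := by
      rw [norm_smul, Complex.norm_I, one_mul]
    rw [h_rot, ← norm_neg (_ • _)]
    simpa [smul_smul, add_comm] using h Complex.I
  simp only [inner_eq_sum_norm_sq_div_four, RCLike.I_to_complex, h_add, h_sub, h_sub_I, h_add_I]

-- By polarization, since taking adjoints preserves the Hilbert–Schmidt norm.
lemma inner_hsVec_adjoint [CompleteSpace H] [CompleteSpace G] {b : HilbertBasis ι ℂ H}
    {f : HilbertBasis κ ℂ G} {S R : H →L[ℂ] G} (hS : hsNormSq b S ≠ ⊤) (hR : hsNormSq b R ≠ ⊤)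
    (hS' : hsNormSq f (adjoint S) ≠ ⊤) (hR' : hsNormSq f (adjoint R) ≠ ⊤) :
    ⟪hsVec b S hS, hsVec b R hR⟫_ℂ = ⟪hsVec f (adjoint R) hR', hsVec f (adjoint S) hS'⟫_ℂ := by
  refine inner_eq_inner_of_norm_add_smul_eq fun z => ?_
  have h : ‖hsVec b S hS + z • hsVec b R hR‖ₑ ^ 2 =
      ‖hsVec f (adjoint S) hS' + (starRingEnd ℂ) z • hsVec f (adjoint R) hR'‖ₑ ^ 2 := by
    have h_adjoint := hsNormSq_adjoint b f (S + z • R)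
    rw [map_add, map_smulₛₗ] at h_adjoint
    rw [lp_enorm_sq, lp_enorm_sq]
    exact h_adjoint.symm
  simpa only [enorm_eq_iff_norm_eq] using (ENNReal.pow_right_strictMono two_ne_zero).injective h

lemma inner_hsVec_comp_right [CompleteSpace H] [CompleteSpace G] {b : HilbertBasis ι ℂ H}
    {S R : H →L[ℂ] G} (A : H →L[ℂ] H) (hS : hsNormSq b S ≠ ⊤) (hR : hsNormSq b R ≠ ⊤) :
    ⟪hsVec b (S ∘L A) (hsNormSq_comp_ne_top_right hS A), hsVec b R hR⟫_ℂ =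
      ⟪hsVec b S hS, hsVec b (R ∘L star A) (hsNormSq_comp_ne_top_right hR _)⟫_ℂ := by
  obtain ⟨_, f, -⟩ := exists_hilbertBasis ℂ G
  have adjoint_ne_top {R : H →L[ℂ] G} (hR : hsNormSq b R ≠ ⊤) : hsNormSq f (adjoint R) ≠ ⊤ :=
    (hsNormSq_adjoint b f R).trans_ne hR
  have h := inner_hsVec_comp_left A (adjoint_ne_top hR) (adjoint_ne_top hS)
  simp only [star_eq_adjoint] at h ⊢
  rw [inner_hsVec_adjoint _ hR (adjoint_ne_top (hsNormSq_comp_ne_top_right hS A))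
      (adjoint_ne_top hR),
    inner_hsVec_adjoint hS _ (adjoint_ne_top hS)
      (adjoint_ne_top (hsNormSq_comp_ne_top_right hR _))]
  simp only [adjoint_comp, adjoint_adjoint]
  exact h.symm

lemma inner_hsVec_comp_comp [CompleteSpace H] [CompleteSpace G] {b : HilbertBasis ι ℂ H}
    {S R : H →L[ℂ] G} (L : G →L[ℂ] G) (A : H →L[ℂ] H) (hS : hsNormSq b S ≠ ⊤)
    (hR : hsNormSq b R ≠ ⊤) :
    ⟪hsVec b (L ∘L S ∘L A) (hsNormSq_comp_comp_ne_top L hS A), hsVec b R hR⟫_ℂ =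
      ⟪hsVec b S hS, hsVec b (star L ∘L R ∘L star A) (hsNormSq_comp_comp_ne_top _ hR _)⟫_ℂ := by
  rw [inner_hsVec_comp_left L (hsNormSq_comp_ne_top_right hS A) hR]
  exact inner_hsVec_comp_right A hS (hsNormSq_comp_ne_top_left _ hR)

end HilbertSchmidt

section ElementaryOp

variable {H G : Type*} [NormedAddCommGroup H] [InnerProductSpace ℂ H]
  [NormedAddCommGroup G] [InnerProductSpace ℂ G] {ι K : Type*}
  {A : K → H →L[ℂ] H} {B : K → G →L[ℂ] G}

/-- The elementary operator `T ↦ ∑ₖ Bₖ T Aₖ` with coefficient families `B` and `A`. -/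
noncomputable def elementaryOp (B : K → G →L[ℂ] G) (A : K → H →L[ℂ] H) (T : H →L[ℂ] G) :
    H →L[ℂ] G :=
  ∑' k, B k ∘L T ∘L A k

lemma summable_norm_mul_norm (hB : Summable fun k => ‖B k‖ ^ 2)
    (hA : Summable fun k => ‖A k‖ ^ 2) : Summable fun k => ‖B k‖ * ‖A k‖ :=
  (hB.add hA).of_nonneg_of_le (fun _ => by positivity) fun k => by
    nlinarith [two_mul_le_add_sq ‖B k‖ ‖A k‖, norm_nonneg (B k), norm_nonneg (A k)]

lemma summable_comp_comp [CompleteSpace G] (hB : Summable fun k => ‖B k‖ ^ 2)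
    (hA : Summable fun k => ‖A k‖ ^ 2) (T : H →L[ℂ] G) : Summable fun k => B k ∘L T ∘L A k := by
  refine .of_norm_bounded ((summable_norm_mul_norm hB hA).mul_right ‖T‖) fun k => ?_
  calc ‖B k ∘L T ∘L A k‖ ≤ ‖B k‖ * (‖T‖ * ‖A k‖) :=
        (opNorm_comp_le _ _).trans (by gcongr; exact opNorm_comp_le _ _)
    _ = ‖B k‖ * ‖A k‖ * ‖T‖ := by ring

lemma hasSum_elementaryOp_apply [CompleteSpace G] (hB : Summable fun k => ‖B k‖ ^ 2)
    (hA : Summable fun k => ‖A k‖ ^ 2) (T : H →L[ℂ] G) (x : H) :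
    HasSum (fun k => B k (T (A k x))) (elementaryOp B A T x) :=
  (summable_comp_comp hB hA T).hasSum.mapL (apply ℂ G x)

lemma enorm_elementaryOp_comp_sub_sq_le [CompleteSpace G] (hB : Summable fun k => ‖B k‖ ^ 2)
    (hA : Summable fun k => ‖A k‖ ^ 2) (T : H →L[ℂ] G) (P : H →L[ℂ] H) (x : H) :
    ‖(elementaryOp B A T ∘L P - elementaryOp B A (T ∘L P)) x‖ₑ ^ 2 ≤
      (∑' k, ‖B k‖ₑ ^ 2) * ‖T‖ₑ ^ 2 * ∑' k, ‖⁅A k, P⁆ x‖ₑ ^ 2 := by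
  have h_sum : HasSum (fun k => B k (T (⁅A k, P⁆ x)))
      ((elementaryOp B A T ∘L P - elementaryOp B A (T ∘L P)) x) := by
    simpa [Ring.lie_def] using (hasSum_elementaryOp_apply hB hA T (P x)).sub
      (hasSum_elementaryOp_apply hB hA (T ∘L P) x)
  calc ‖(elementaryOp B A T ∘L P - elementaryOp B A (T ∘L P)) x‖ₑ ^ 2
      ≤ (∑' k, ‖B k‖ₑ * (‖T‖ₑ * ‖⁅A k, P⁆ x‖ₑ)) ^ 2 := by
        rw [← h_sum.tsum_eq]
        gcongr
        refine enorm_tsum_le_tsum_enorm.trans (ENNReal.tsum_le_tsum fun k => ?_)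
        exact ((B k).le_opENorm _).trans (by gcongr; exact T.le_opENorm _)
    _ ≤ (∑' k, ‖B k‖ₑ ^ 2) * ∑' k, (‖T‖ₑ * ‖⁅A k, P⁆ x‖ₑ) ^ 2 :=
        tsum_mul_sq_le_tsum_sq_mul_tsum_sq _ _
    _ = (∑' k, ‖B k‖ₑ ^ 2) * ‖T‖ₑ ^ 2 * ∑' k, ‖⁅A k, P⁆ x‖ₑ ^ 2 := by
        simp only [mul_pow, ENNReal.tsum_mul_left, mul_assoc]

lemma hsNormSq_elementaryOp_comp_sub_le [CompleteSpace G] (b : HilbertBasis ι ℂ H)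
    (hB : Summable fun k => ‖B k‖ ^ 2) (hA : Summable fun k => ‖A k‖ ^ 2) (T : H →L[ℂ] G)
    (P : H →L[ℂ] H) :
    hsNormSq b (elementaryOp B A T ∘L P - elementaryOp B A (T ∘L P)) ≤
      (∑' k, ‖B k‖ₑ ^ 2) * ‖T‖ₑ ^ 2 * ∑' k, hsNormSq b ⁅A k, P⁆ := by
  simp only [hsNormSq_eq_tsum_enorm_sq]
  rw [ENNReal.tsum_comm, ← ENNReal.tsum_mul_left]
  exact ENNReal.tsum_le_tsum fun i => enorm_elementaryOp_comp_sub_sq_le hB hA T P (b i)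

variable [CompleteSpace H] [CompleteSpace G] {b : HilbertBasis ι ℂ H} {S R : H →L[ℂ] G}

lemma exists_hasSum_hsVec_comp_comp (hB : Summable fun k => ‖B k‖ ^ 2)
    (hA : Summable fun k => ‖A k‖ ^ 2) (hS : hsNormSq b S ≠ ⊤) :
    ∃ hΔ : hsNormSq b (elementaryOp B A S) ≠ ⊤,
      HasSum (fun k => hsVec b (B k ∘L S ∘L A k) (hsNormSq_comp_comp_ne_top _ hS _))
        (hsVec b (elementaryOp B A S) hΔ) := by
  have h_summable : Summable fun k =>
      hsVec b (B k ∘L S ∘L A k) (hsNormSq_comp_comp_ne_top _ hS _) :=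
    .of_norm_bounded ((summable_norm_mul_norm hB hA).mul_right _) fun k =>
      norm_hsVec_comp_comp_le (B k) hS (A k)
  obtain ⟨u, hu⟩ := h_summable
  have u_apply (i : ι) : u i = elementaryOp B A S (b i) :=
    (hu.mapL (lp.evalCLM ℂ (fun _ : ι => G) 2 i)).unique (hasSum_elementaryOp_apply hB hA S (b i))
  have hΔ : hsNormSq b (elementaryOp B A S) ≠ ⊤ := by
    simp only [hsNormSq_eq_tsum_enorm_sq, ← u_apply, ← lp_enorm_sq]
    finiteness
  have u_eq : u = hsVec b (elementaryOp B A S) hΔ := lp.ext (funext u_apply)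
  exact ⟨hΔ, u_eq ▸ hu⟩

lemma inner_eq_inner_of_hasSum {E E' : Type*} [NormedAddCommGroup E] [InnerProductSpace ℂ E]
    [NormedAddCommGroup E'] [InnerProductSpace ℂ E'] {u v : K → E} {u' v' : K → E'} {U V : E}
    {U' V' : E'} (hu : HasSum u U) (hv : HasSum v V) (hu' : HasSum u' U') (hv' : HasSum v' V')
    (h : ∀ k l, ⟪u k, v l⟫_ℂ = ⟪u' l, v' k⟫_ℂ) : ⟪U, V⟫_ℂ = ⟪U', V'⟫_ℂ := by
  refine tendsto_nhds_unique (Tendsto.inner hu hv) ((Tendsto.inner hu' hv').congr fun F => ?_)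
  simp only [sum_inner, inner_sum, h]
  exact Finset.sum_comm

lemma inner_hsVec_comp_comp_swap {A A' : H →L[ℂ] H} {B B' : G →L[ℂ] G}
    (hA : Commute A (star A')) (hB : Commute B (star B')) (hS : hsNormSq b S ≠ ⊤)
    (hR : hsNormSq b R ≠ ⊤) :
    ⟪hsVec b (B ∘L S ∘L A) (hsNormSq_comp_comp_ne_top _ hS _),
        hsVec b (B' ∘L R ∘L A') (hsNormSq_comp_comp_ne_top _ hR _)⟫_ℂ =
      ⟪hsVec b (star B' ∘L S ∘L star A') (hsNormSq_comp_comp_ne_top _ hS _),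
        hsVec b (star B ∘L R ∘L star A) (hsNormSq_comp_comp_ne_top _ hR _)⟫_ℂ := by
  have h_comm : star B' ∘L (B ∘L S ∘L A) ∘L star A' = B ∘L (star B' ∘L S ∘L star A') ∘L A := by
    have hBx (y : G) : star B' (B y) = B (star B' y) := DFunLike.congr_fun hB.eq.symm y
    have hAx (x : H) : A (star A' x) = star A' (A x) := DFunLike.congr_fun hA.eq x
    ext x
    simp only [comp_apply, hBx, hAx]
  have h_left := inner_hsVec_comp_comp (star B') (star A')
    (hsNormSq_comp_comp_ne_top B hS A) hR
  have h_right := inner_hsVec_comp_comp B A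
    (hsNormSq_comp_comp_ne_top (star B') hS (star A')) hR
  simp only [star_star, h_comm] at h_left
  exact h_left.symm.trans h_right

lemma inner_hsVec_elementaryOp (hB : Summable fun k => ‖B k‖ ^ 2)
    (hA : Summable fun k => ‖A k‖ ^ 2) (hBn : ∀ k l, Commute (B k) (star (B l)))
    (hAn : ∀ k l, Commute (A k) (star (A l))) (hS : hsNormSq b S ≠ ⊤) (hR : hsNormSq b R ≠ ⊤)
    (hΔS : hsNormSq b (elementaryOp B A S) ≠ ⊤) (hΔR : hsNormSq b (elementaryOp B A R) ≠ ⊤)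
    (hΔS' : hsNormSq b (elementaryOp (star B) (star A) S) ≠ ⊤)
    (hΔR' : hsNormSq b (elementaryOp (star B) (star A) R) ≠ ⊤) :
    ⟪hsVec b _ hΔS, hsVec b _ hΔR⟫_ℂ = ⟪hsVec b _ hΔS', hsVec b _ hΔR'⟫_ℂ := by
  have hB' : Summable fun k => ‖(star B) k‖ ^ 2 := by simpa using hB
  have hA' : Summable fun k => ‖(star A) k‖ ^ 2 := by simpa using hA
  obtain ⟨_, hs⟩ := exists_hasSum_hsVec_comp_comp hB hA hS
  obtain ⟨_, hr⟩ := exists_hasSum_hsVec_comp_comp hB hA hR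
  obtain ⟨_, hs'⟩ := exists_hasSum_hsVec_comp_comp hB' hA' hS
  obtain ⟨_, hr'⟩ := exists_hasSum_hsVec_comp_comp hB' hA' hR
  exact inner_eq_inner_of_hasSum hs hr hs' hr' fun k l =>
    inner_hsVec_comp_comp_swap (hAn k l) (hBn k l) hS hR

end ElementaryOp

section Weak

variable {E E' : Type*} [NormedAddCommGroup E] [InnerProductSpace ℂ E]
  [NormedAddCommGroup E'] [InnerProductSpace ℂ E']

/-- The submodule of the vectors at which the operators `P n` converge to the operator `Q`. -/
def tendstoSubmodule (P : ℕ → E →L[ℂ] E') (Q : E →L[ℂ] E') : Submodule ℂ E where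
  carrier := {x | Tendsto (fun n => P n x) atTop (𝓝 (Q x))}
  add_mem' hx hy := by simpa using hx.add hy
  zero_mem' := by simp
  smul_mem' z _ hx := by simpa using hx.const_smul z

lemma mem_tendstoSubmodule {P : ℕ → E →L[ℂ] E'} {Q : E →L[ℂ] E'} {x : E} :
    x ∈ tendstoSubmodule P Q ↔ Tendsto (fun n => P n x) atTop (𝓝 (Q x)) := Iff.rfl

lemma isClosed_tendstoSubmodule {P : ℕ → E →L[ℂ] E'} {C : ℝ≥0} (hP : ∀ n, ‖P n‖ ≤ C)
    (Q : E →L[ℂ] E') : IsClosed (tendstoSubmodule P Q : Set E) :=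
  (LipschitzWith.uniformEquicontinuous (fun n => P n) C fun n =>
    (P n).lipschitz.weaken (hP n)).equicontinuous.isClosed_setOfPred_tendsto Q.continuous

lemma lp_tendsto_inner_of_tendsto_apply {ι : Type*} {u : ℕ → lp (fun _ : ι => E) 2}
    {v : lp (fun _ : ι => E) 2} {C : ℝ≥0} (hu : ∀ n, ‖u n‖ ≤ C)
    (h : ∀ i, Tendsto (fun n => u n i) atTop (𝓝 (v i))) (w : lp (fun _ : ι => E) 2) :
    Tendsto (fun n => ⟪u n, w⟫_ℂ) atTop (𝓝 ⟪v, w⟫_ℂ) := by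
  classical
  have h_closed := isClosed_tendstoSubmodule (P := fun n => innerSL ℂ (u n)) (C := C)
    (by simpa only [innerSL_apply_norm] using hu) (innerSL ℂ v)
  have h_single (i : ι) (y : E) :
      lp.single 2 i y ∈ tendstoSubmodule (fun n => innerSL ℂ (u n)) (innerSL ℂ v) := by
    simpa [mem_tendstoSubmodule, lp.inner_single_right] using (h i).inner tendsto_const_nhds
  exact h_closed.mem_of_tendsto (lp.hasSum_single (by norm_num) w)
    (.of_forall fun s => Submodule.sum_mem _ fun i _ => h_single i (w i))

lemma norm_eq_norm_of_tendsto_inner {x : ℕ → E} {y : ℕ → E'} {x₀ : E} {y₀ : E'}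
    (hx : ∀ w, Tendsto (fun n => ⟪x n, w⟫_ℂ) atTop (𝓝 ⟪x₀, w⟫_ℂ))
    (hy : ∀ w, Tendsto (fun n => ⟪y n, w⟫_ℂ) atTop (𝓝 ⟪y₀, w⟫_ℂ))
    (h : ∀ m n, ⟪x m, x n⟫_ℂ = ⟪y m, y n⟫_ℂ) : ‖x₀‖ = ‖y₀‖ := by
  have h_left (n : ℕ) : ⟪x₀, x n⟫_ℂ = ⟪y₀, y n⟫_ℂ :=
    tendsto_nhds_unique (hx (x n)) ((hy (y n)).congr fun m => (h m n).symm)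
  have h_symm (n : ℕ) : ⟪y n, y₀⟫_ℂ = ⟪x n, x₀⟫_ℂ := by
    rw [← inner_conj_symm, ← h_left, inner_conj_symm]
  have h_inner : ⟪x₀, x₀⟫_ℂ = ⟪y₀, y₀⟫_ℂ :=
    tendsto_nhds_unique (hx x₀) ((hy y₀).congr h_symm)
  simp only [norm_eq_sqrt_re_inner (𝕜 := ℂ), h_inner]

variable {H G : Type*} [NormedAddCommGroup H] [InnerProductSpace ℂ H]
  [NormedAddCommGroup G] [InnerProductSpace ℂ G] {ι : Type*} {b : HilbertBasis ι ℂ H}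

lemma hsNormSq_le_of_tendsto {S : ℕ → H →L[ℂ] G} {S₀ : H →L[ℂ] G} {C : ℝ≥0∞}
    (hC : ∀ n, hsNormSq b (S n) ≤ C) (hS : ∀ x, Tendsto (fun n => S n x) atTop (𝓝 (S₀ x))) :
    hsNormSq b S₀ ≤ C := by
  refine ENNReal.summable.tsum_le_of_sum_le fun s => ?_
  have h_tendsto : Tendsto (fun n => ∑ i ∈ s, ‖S n (b i)‖ₑ ^ 2) atTop
      (𝓝 (∑ i ∈ s, ‖S₀ (b i)‖ₑ ^ 2)) :=
    tendsto_finsetSum s fun i _ => ENNReal.Tendsto.pow (hS (b i)).enorm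
  exact le_of_tendsto' h_tendsto fun n => (ENNReal.sum_le_tsum s).trans (hC n)

lemma nnnorm_hsVec_le {S : H →L[ℂ] G} {C : ℝ≥0∞} (hC : C ≠ ⊤) (h : hsNormSq b S ≤ C) :
    ‖hsVec b S (ne_top_of_le_ne_top hC h)‖₊ ≤ NNReal.sqrt C.toNNReal := by
  rw [NNReal.le_sqrt_iff_sq_le, ← ENNReal.coe_le_coe, ENNReal.coe_toNNReal hC]
  exact (enorm_hsVec_sq b S _).trans_le h

lemma tendsto_inner_hsVec {S : ℕ → H →L[ℂ] G} {S₀ : H →L[ℂ] G} {C : ℝ≥0∞} (hC : C ≠ ⊤)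
    (h_le : ∀ n, hsNormSq b (S n) ≤ C) (hS : ∀ x, Tendsto (fun n => S n x) atTop (𝓝 (S₀ x)))
    (w : lp (fun _ : ι => G) 2) :
    Tendsto (fun n => ⟪hsVec b (S n) (ne_top_of_le_ne_top hC (h_le n)), w⟫_ℂ) atTop
      (𝓝 ⟪hsVec b S₀ (ne_top_of_le_ne_top hC (hsNormSq_le_of_tendsto h_le hS)), w⟫_ℂ) :=
  lp_tendsto_inner_of_tendsto_apply (v := hsVec b S₀ _) (fun n => nnnorm_hsVec_le hC (h_le n))
    (fun i => hS (b i)) w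

lemma hsNormSq_eq_of_tendsto {S R : ℕ → H →L[ℂ] G} {S₀ R₀ : H →L[ℂ] G} {C : ℝ≥0∞} (hC : C ≠ ⊤)
    (hS : ∀ x, Tendsto (fun n => S n x) atTop (𝓝 (S₀ x)))
    (hR : ∀ x, Tendsto (fun n => R n x) atTop (𝓝 (R₀ x))) (hSC : ∀ n, hsNormSq b (S n) ≤ C)
    (hR_ne_top : ∀ n, hsNormSq b (R n) ≠ ⊤)
    (h : ∀ m n, ⟪hsVec b (S m) (ne_top_of_le_ne_top hC (hSC m)),
        hsVec b (S n) (ne_top_of_le_ne_top hC (hSC n))⟫_ℂ =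
      ⟪hsVec b (R m) (hR_ne_top m), hsVec b (R n) (hR_ne_top n)⟫_ℂ) :
    hsNormSq b S₀ = hsNormSq b R₀ := by
  have hRC (n : ℕ) : hsNormSq b (R n) ≤ C := by
    have h_norm : ‖hsVec b (S n) (ne_top_of_le_ne_top hC (hSC n))‖ =
        ‖hsVec b (R n) (hR_ne_top n)‖ := by
      simp only [norm_eq_sqrt_re_inner (𝕜 := ℂ), h]
    rw [← enorm_hsVec_sq b _ (hR_ne_top n), ← enorm_eq_iff_norm_eq.2 h_norm, enorm_hsVec_sq]
    exact hSC n
  have h_norm := norm_eq_norm_of_tendsto_inner (tendsto_inner_hsVec hC hSC hS)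
    (tendsto_inner_hsVec hC hRC hR) h
  rw [← enorm_hsVec_sq b S₀ (ne_top_of_le_ne_top hC (hsNormSq_le_of_tendsto hSC hS)),
    ← enorm_hsVec_sq b R₀ (ne_top_of_le_ne_top hC (hsNormSq_le_of_tendsto hRC hR)),
    enorm_eq_iff_norm_eq.2 h_norm]

end Weak

section Quasicentral

variable {H G : Type*} [NormedAddCommGroup H] [InnerProductSpace ℂ H]
  [NormedAddCommGroup G] [InnerProductSpace ℂ G] [CompleteSpace G] {ι K : Type*}
  {A : K → H →L[ℂ] H} {B : K → G →L[ℂ] G} {P : ℕ → H →L[ℂ] H}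

lemma tendsto_zero_of_enorm_sq {E : Type*} [NormedAddCommGroup E] {u : ℕ → E}
    (h : Tendsto (fun n => ‖u n‖ₑ ^ 2) atTop (𝓝 0)) : Tendsto u atTop (𝓝 0) := by
  have h_sqrt := ((ENNReal.continuous_rpow_const (y := 1 / 2)).tendsto 0).comp h
  rw [ENNReal.zero_rpow_of_pos (by norm_num)] at h_sqrt
  refine tendsto_zero_iff_enorm_tendsto_zero.2 (h_sqrt.congr fun n => ?_)
  rw [Function.comp, ← ENNReal.rpow_ofNat, ← ENNReal.rpow_mul]
  norm_num

lemma tendsto_zero_of_tsum_enorm_sq {E : Type*} [NormedAddCommGroup E] {u : ℕ → K → E}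
    (h : Tendsto (fun n => ∑' k, ‖u n k‖ₑ ^ 2) atTop (𝓝 0)) (k : K) :
    Tendsto (fun n => u n k) atTop (𝓝 0) :=
  tendsto_zero_of_enorm_sq <| tendsto_of_tendsto_of_tendsto_of_le_of_le tendsto_const_nhds h
    (fun _ => zero_le) fun n => ENNReal.le_tsum (f := fun k => ‖u n k‖ₑ ^ 2) k

lemma tendsto_elementaryOp_comp_apply (hB : Summable fun k => ‖B k‖ ^ 2)
    (hA : Summable fun k => ‖A k‖ ^ 2) (T : H →L[ℂ] G) {x y : H}
    (hP : Tendsto (fun n => P n x) atTop (𝓝 y))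
    (h_lie : Tendsto (fun n => ∑' k, ‖⁅A k, P n⁆ x‖ₑ ^ 2) atTop (𝓝 0)) :
    Tendsto (fun n => elementaryOp B A (T ∘L P n) x) atTop (𝓝 (elementaryOp B A T y)) := by
  have h_bound : Tendsto (fun n => (∑' k, ‖B k‖ₑ ^ 2) * ‖T‖ₑ ^ 2 * ∑' k, ‖⁅A k, P n⁆ x‖ₑ ^ 2)
      atTop (𝓝 0) := by
    have h_const : (∑' k, ‖B k‖ₑ ^ 2) * ‖T‖ₑ ^ 2 ≠ ⊤ :=
      ENNReal.mul_ne_top (tsum_enorm_sq_ne_top hB) (by finiteness)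
    simpa using ENNReal.Tendsto.const_mul h_lie (.inr h_const)
  have h_diff : Tendsto (fun n => (elementaryOp B A T ∘L P n - elementaryOp B A (T ∘L P n)) x)
      atTop (𝓝 0) :=
    tendsto_zero_of_enorm_sq <| tendsto_of_tendsto_of_tendsto_of_le_of_le tendsto_const_nhds
      h_bound (fun _ => zero_le) fun n => enorm_elementaryOp_comp_sub_sq_le hB hA T (P n) x
  simpa using (((elementaryOp B A T).continuous.tendsto y).comp hP).sub h_diff

variable [CompleteSpace H] {b : HilbertBasis ι ℂ H}

/-- A sequence of Hilbert–Schmidt contractions whose commutators with the family `A` are bounded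
in Hilbert–Schmidt norm (summed in squares over the family) and whose commutators with `A` and
`star A` tend strongly to zero. This is a Hilbert–Schmidt version of Voiculescu's quasicentral
approximate units, without the requirement that the sequence converges to the identity. -/
structure IsQuasicentral (b : HilbertBasis ι ℂ H) (A : K → H →L[ℂ] H) (P : ℕ → H →L[ℂ] H) :
    Prop where
  norm_le_one (n : ℕ) : ‖P n‖ ≤ 1
  hsNormSq_ne_top (n : ℕ) : hsNormSq b (P n) ≠ ⊤
  exists_hsNormSq_lie_le : ∃ C ≠ ⊤, ∀ n, ∑' k, hsNormSq b ⁅A k, P n⁆ ≤ C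
  tendsto_lie (x : H) : Tendsto (fun n => ∑' k, ‖⁅A k, P n⁆ x‖ₑ ^ 2) atTop (𝓝 0)
  tendsto_lie_star (x : H) : Tendsto (fun n => ∑' k, ‖⁅star (A k), P n⁆ x‖ₑ ^ 2) atTop (𝓝 0)

namespace IsQuasicentral

lemma exists_hsNormSq_elementaryOp_comp_le (hP : IsQuasicentral b A P)
    (hB : Summable fun k => ‖B k‖ ^ 2) (hA : Summable fun k => ‖A k‖ ^ 2) {T : H →L[ℂ] G}
    (hT : hsNormSq b (elementaryOp B A T) ≠ ⊤) :
    ∃ C ≠ ⊤, ∀ n, hsNormSq b (elementaryOp B A (T ∘L P n)) ≤ C := by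
  obtain ⟨C, hC, hPC⟩ := hP.exists_hsNormSq_lie_le
  have hB_ne_top := tsum_enorm_sq_ne_top hB
  refine ⟨2 * (hsNormSq b (elementaryOp B A T) + (∑' k, ‖B k‖ₑ ^ 2) * ‖T‖ₑ ^ 2 * C),
    by finiteness, fun n => ?_⟩
  have h_comp : hsNormSq b (elementaryOp B A T ∘L P n) ≤ hsNormSq b (elementaryOp B A T) :=
    hsNormSq_comp_le_of_norm_le_one b _ (hP.norm_le_one n)
  calc hsNormSq b (elementaryOp B A (T ∘L P n))
      = hsNormSq b (elementaryOp B A T ∘L P n -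
          (elementaryOp B A T ∘L P n - elementaryOp B A (T ∘L P n))) := by rw [sub_sub_cancel]
    _ ≤ 2 * (hsNormSq b (elementaryOp B A T ∘L P n) +
          hsNormSq b (elementaryOp B A T ∘L P n - elementaryOp B A (T ∘L P n))) :=
        hsNormSq_sub_le b _ _
    _ ≤ 2 * (hsNormSq b (elementaryOp B A T) + (∑' k, ‖B k‖ₑ ^ 2) * ‖T‖ₑ ^ 2 * C) := by
        gcongr
        exact (hsNormSq_elementaryOp_comp_sub_le b hB hA T (P n)).trans (by gcongr; exact hPC n)

lemma hsNormSq_elementaryOp_comp_eq (hP : IsQuasicentral b A P)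
    (hB : Summable fun k => ‖B k‖ ^ 2) (hA : Summable fun k => ‖A k‖ ^ 2)
    (hBn : ∀ k l, Commute (B k) (star (B l))) (hAn : ∀ k l, Commute (A k) (star (A l)))
    {Q : H →L[ℂ] H} (hPQ : ∀ x, Tendsto (fun n => P n x) atTop (𝓝 (Q x))) {T : H →L[ℂ] G}
    (hT : hsNormSq b (elementaryOp B A T) ≠ ⊤) :
    hsNormSq b (elementaryOp B A T ∘L Q) =
      hsNormSq b (elementaryOp (star B) (star A) T ∘L Q) := by
  have hB' : Summable fun k => ‖(star B) k‖ ^ 2 := by simpa using hB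
  have hA' : Summable fun k => ‖(star A) k‖ ^ 2 := by simpa using hA
  have hTP (n : ℕ) : hsNormSq b (T ∘L P n) ≠ ⊤ :=
    hsNormSq_comp_ne_top_left T (hP.hsNormSq_ne_top n)
  obtain ⟨C, hC, h_le⟩ := hP.exists_hsNormSq_elementaryOp_comp_le hB hA hT
  exact hsNormSq_eq_of_tendsto hC
    (fun x => tendsto_elementaryOp_comp_apply hB hA T (hPQ x) (hP.tendsto_lie x))
    (fun x => tendsto_elementaryOp_comp_apply hB' hA' T (hPQ x) (hP.tendsto_lie_star x)) h_le
    (fun n => (exists_hasSum_hsVec_comp_comp hB' hA' (hTP n)).1)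
    fun m n => inner_hsVec_elementaryOp hB hA hBn hAn (hTP m) (hTP n) _ _ _ _

end IsQuasicentral

end Quasicentral

section Transfer

variable {H G : Type*} [NormedAddCommGroup H] [InnerProductSpace ℂ H]
  [NormedAddCommGroup G] [InnerProductSpace ℂ G] {ι K : Type*}
  {A : K → H →L[ℂ] H} {B : K → G →L[ℂ] G} {P : ℕ → H →L[ℂ] H}

lemma lie_comp_of_commute {S P Q : H →L[ℂ] H} (hQ : Commute Q S) : ⁅S, P ∘L Q⁆ = ⁅S, P⁆ ∘L Q := by
  simp only [Ring.lie_def, ← mul_def, sub_mul, mul_assoc, hQ.eq]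

lemma apply_mem_tendstoSubmodule_one {S : H →L[ℂ] H}
    (h_lie : ∀ x, Tendsto (fun n => ⁅S, P n⁆ x) atTop (𝓝 0)) {x : H}
    (hx : x ∈ tendstoSubmodule P 1) : S x ∈ tendstoSubmodule P 1 := by
  rw [mem_tendstoSubmodule] at hx ⊢
  simpa [Ring.lie_def] using ((S.continuous.tendsto _).comp hx).sub (h_lie x)

variable [CompleteSpace H] [CompleteSpace G] {b : HilbertBasis ι ℂ H}

lemma commute_starProjection {V : Submodule ℂ H} [V.HasOrthogonalProjection] {S : H →L[ℂ] H}
    (hS : ∀ x ∈ V, S x ∈ V) (hS' : ∀ x ∈ V, star S x ∈ V) : Commute V.starProjection S := by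
  have orthogonal_invariant (y : H) (hy : y ∈ Vᗮ) : S y ∈ Vᗮ := fun x hx => by
    rw [← adjoint_inner_left]
    exact hy _ (hS' x hx)
  ext x
  obtain ⟨y, hy, z, hz, rfl⟩ := V.exists_add_mem_mem_orthogonal x
  simp [V.starProjection_eq_self_iff.2 hy, V.starProjection_eq_self_iff.2 (hS y hy),
    V.starProjection_apply_eq_zero_iff.2 hz,
    V.starProjection_apply_eq_zero_iff.2 (orthogonal_invariant z hz)]

namespace IsQuasicentral

lemma comp_of_commute (hP : IsQuasicentral b A P) {Q : H →L[ℂ] H} (hQ : ‖Q‖ ≤ 1)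
    (hQA : ∀ k, Commute Q (A k)) (hQA' : ∀ k, Commute Q (star (A k))) :
    IsQuasicentral b A fun n => P n ∘L Q where
  norm_le_one n := (opNorm_comp_le _ _).trans (mul_le_one₀ (hP.norm_le_one n) (norm_nonneg _) hQ)
  hsNormSq_ne_top n := hsNormSq_comp_ne_top_right (hP.hsNormSq_ne_top n) Q
  exists_hsNormSq_lie_le := by
    obtain ⟨C, hC, h_le⟩ := hP.exists_hsNormSq_lie_le
    refine ⟨C, hC, fun n => (ENNReal.tsum_le_tsum fun k => ?_).trans (h_le n)⟩
    rw [lie_comp_of_commute (hQA k)]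
    exact hsNormSq_comp_le_of_norm_le_one b _ hQ
  tendsto_lie x := by
    simpa only [lie_comp_of_commute (hQA _), comp_apply] using hP.tendsto_lie (Q x)
  tendsto_lie_star x := by
    simpa only [lie_comp_of_commute (hQA' _), comp_apply] using hP.tendsto_lie_star (Q x)

lemma exists_hsNormSq_elementaryOp_comp_eq (hP : IsQuasicentral b A P)
    (hB : Summable fun k => ‖B k‖ ^ 2) (hA : Summable fun k => ‖A k‖ ^ 2)
    (hBn : ∀ k l, Commute (B k) (star (B l))) (hAn : ∀ k l, Commute (A k) (star (A l)))
    {T : H →L[ℂ] G} (hT : hsNormSq b (elementaryOp B A T) ≠ ⊤) :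
    ∃ Q : H →L[ℂ] H, ‖Q‖ ≤ 1 ∧ (∀ x, Tendsto (fun n => P n x) atTop (𝓝 x) → Q x = x) ∧
      hsNormSq b (elementaryOp B A T ∘L Q) =
        hsNormSq b (elementaryOp (star B) (star A) T ∘L Q) := by
  have h_lie (k : K) (x : H) : Tendsto (fun n => ⁅A k, P n⁆ x) atTop (𝓝 0) :=
    tendsto_zero_of_tsum_enorm_sq (hP.tendsto_lie x) k
  have h_lie_star (k : K) (x : H) : Tendsto (fun n => ⁅star (A k), P n⁆ x) atTop (𝓝 0) :=
    tendsto_zero_of_tsum_enorm_sq (hP.tendsto_lie_star x) k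
  -- The operators `A k` and `star (A k)` leave `V` invariant, so the projection onto it commutes
  -- with them and may be used to cut down `P`.
  let V := tendstoSubmodule P 1
  have hV : IsClosed (V : Set H) := isClosed_tendstoSubmodule (C := 1) hP.norm_le_one 1
  have := hV.completeSpace_coe
  have h_commute {S : H →L[ℂ] H} (hS : ∀ x, Tendsto (fun n => ⁅S, P n⁆ x) atTop (𝓝 0))
      (hS' : ∀ x, Tendsto (fun n => ⁅star S, P n⁆ x) atTop (𝓝 0)) : Commute V.starProjection S :=
    commute_starProjection (fun x => apply_mem_tendstoSubmodule_one hS)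
      (fun x => apply_mem_tendstoSubmodule_one hS')
  have hPQ : IsQuasicentral b A fun n => P n ∘L V.starProjection :=
    hP.comp_of_commute V.starProjection_norm_le
      (fun k => h_commute (h_lie k) (h_lie_star k))
      (fun k => h_commute (h_lie_star k) (by simpa only [star_star] using h_lie k))
  have h_tendsto (x : H) : Tendsto (fun n => (P n ∘L V.starProjection) x) atTop
      (𝓝 (V.starProjection x)) := V.starProjection_apply_mem x
  exact ⟨V.starProjection, V.starProjection_norm_le,
    fun x hx => V.starProjection_eq_self_iff.2 hx,
    hPQ.hsNormSq_elementaryOp_comp_eq hB hA hBn hAn h_tendsto hT⟩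

end IsQuasicentral

lemma hsNormSq_elementaryOp_star_le (hB : Summable fun k => ‖B k‖ ^ 2)
    (hA : Summable fun k => ‖A k‖ ^ 2) (hBn : ∀ k l, Commute (B k) (star (B l)))
    (hAn : ∀ k l, Commute (A k) (star (A l)))
    (h_unit : ∀ s : Finset H, ∃ P, IsQuasicentral b A P ∧
      ∀ x ∈ s, Tendsto (fun n => P n x) atTop (𝓝 x)) (T : H →L[ℂ] G) :
    hsNormSq b (elementaryOp (star B) (star A) T) ≤ hsNormSq b (elementaryOp B A T) := by
  classical
  by_cases hT : hsNormSq b (elementaryOp B A T) = ⊤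
  · exact hT ▸ le_top
  refine ENNReal.summable.tsum_le_of_sum_le fun I => ?_
  obtain ⟨P, hP, hPI⟩ := h_unit (I.image b)
  obtain ⟨Q, hQ_norm, hQ_fix, hQ⟩ := hP.exists_hsNormSq_elementaryOp_comp_eq hB hA hBn hAn hT
  have hQI (i : ι) (hi : i ∈ I) : Q (b i) = b i := hQ_fix _ (hPI _ (Finset.mem_image_of_mem b hi))
  calc ∑ i ∈ I, ‖elementaryOp (star B) (star A) T (b i)‖ₑ ^ 2
      = ∑ i ∈ I, ‖(elementaryOp (star B) (star A) T ∘L Q) (b i)‖ₑ ^ 2 :=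
        Finset.sum_congr rfl fun i hi => by rw [comp_apply, hQI i hi]
    _ ≤ hsNormSq b (elementaryOp (star B) (star A) T ∘L Q) := ENNReal.sum_le_tsum I
    _ = hsNormSq b (elementaryOp B A T ∘L Q) := hQ.symm
    _ ≤ hsNormSq b (elementaryOp B A T) := hsNormSq_comp_le_of_norm_le_one b _ hQ_norm

end Transfer

section SpectralPartition

variable {H : Type*} [NormedAddCommGroup H] [InnerProductSpace ℂ H] [CompleteSpace H]
  {ι J K : Type*} {A : K → H →L[ℂ] H} {E : J → H →L[ℂ] H} {c : J → K → ℂ} {d : J → ℝ≥0∞}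

/-- A decomposition of the Hilbert space into mutually orthogonal ranges of projections `E j` that
reduce the family `A`, on the `j`-th of which `A` is within `d j`, in the `ℓ²` sense, of the
scalar family `c j`. The projections sum to the identity, which is encoded by their having no
common kernel. -/
structure IsSpectralPartition (A : K → H →L[ℂ] H) (E : J → H →L[ℂ] H) (c : J → K → ℂ)
    (d : J → ℝ≥0∞) : Prop where
  isStarProjection (j : J) : IsStarProjection (E j)
  mul_eq_zero : Pairwise fun i j => E i * E j = 0
  eq_zero {x : H} (hx : ∀ j, E j x = 0) : x = 0
  commute (j : J) (k : K) : Commute (E j) (A k)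
  tsum_le (j : J) (x : H) :
    ∑' k, ‖A k (E j x) - c j k • E j x‖ₑ ^ 2 ≤ d j ^ 2 * ‖E j x‖ₑ ^ 2

/-- The deviation `∑ⱼ (Aₖ - c j k) Eⱼ` of `Aₖ` from the operator that is equal to the scalar `c j k`
on the range of `E j` for `j ∈ F`, and to `Aₖ` on the complement of these ranges. -/
noncomputable def blockDeviation (A : K → H →L[ℂ] H) (E : J → H →L[ℂ] H) (c : J → K → ℂ)
    (F : Finset J) (k : K) : H →L[ℂ] H :=
  ∑ j ∈ F, (A k - c j k • 1) * E j

/-- The span of the components `E j x` with `j ∈ F` of the vectors `x ∈ s`. -/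
def blockSpan (E : J → H →L[ℂ] H) (F : Finset J) (s : Finset H) : Submodule ℂ H :=
  Submodule.span ℂ (Set.image2 (fun j x => E j x) F s)

instance (E : J → H →L[ℂ] H) (F : Finset J) (s : Finset H) :
    FiniteDimensional ℂ (blockSpan E F s) :=
  FiniteDimensional.span_of_finite ℂ (F.finite_toSet.image2 _ s.finite_toSet)

namespace IsSpectralPartition

lemma apply_apply_self (h : IsSpectralPartition A E c d) (j : J) (x : H) : E j (E j x) = E j x :=
  DFunLike.congr_fun (h.isStarProjection j).isIdempotentElem x

lemma apply_apply_of_ne (h : IsSpectralPartition A E c d) {i j : J} (hij : i ≠ j) (x : H) :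
    E i (E j x) = 0 :=
  DFunLike.congr_fun (h.mul_eq_zero hij) x

lemma orthogonalFamily (h : IsSpectralPartition A E c d) :
    OrthogonalFamily ℂ (fun j => (E j).range) fun j => (E j).range.subtypeₗᵢ := by
  rintro i j hij ⟨_, x, rfl⟩ ⟨_, y, rfl⟩
  have h_adjoint : adjoint (E i) = E i := (h.isStarProjection i).isSelfAdjoint
  simpa [h_adjoint, h.apply_apply_of_ne hij] using (adjoint_inner_right (E i) x (E j y)).symm

lemma enorm_sum_apply_sq (h : IsSpectralPartition A E c d) (F : Finset J) (u : J → H) :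
    ‖∑ j ∈ F, E j (u j)‖ₑ ^ 2 = ∑ j ∈ F, ‖E j (u j)‖ₑ ^ 2 := by
  have h_norm : ‖∑ j ∈ F, E j (u j)‖ ^ 2 = ∑ j ∈ F, ‖E j (u j)‖ ^ 2 :=
    h.orthogonalFamily.norm_sum (fun j => ⟨E j (u j), u j, rfl⟩) F
  simpa [ENNReal.ofReal_sum_of_nonneg, ENNReal.ofReal_pow] using congrArg ENNReal.ofReal h_norm

lemma isStarProjection_sum (h : IsSpectralPartition A E c d) (F : Finset J) :
    IsStarProjection (∑ j ∈ F, E j) where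
  isIdempotentElem := by
    rw [IsIdempotentElem, Finset.sum_mul_sum]
    refine Finset.sum_congr rfl fun i hi => ?_
    rw [Finset.sum_eq_single_of_mem i hi fun j _ hji => h.mul_eq_zero hji.symm]
    exact (h.isStarProjection i).isIdempotentElem
  isSelfAdjoint := isSelfAdjoint_sum F fun j _ => (h.isStarProjection j).isSelfAdjoint

lemma sum_enorm_apply_sq_le (h : IsSpectralPartition A E c d) (F : Finset J) (x : H) :
    ∑ j ∈ F, ‖E j x‖ₑ ^ 2 ≤ ‖x‖ₑ ^ 2 := by
  rw [← h.enorm_sum_apply_sq F fun _ => x, ← sum_apply]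
  gcongr
  rw [enorm_le_iff_norm_le]
  exact (le_opNorm _ x).trans
    (mul_le_of_le_one_left (norm_nonneg x) (h.isStarProjection_sum F).norm_le)

lemma hasSum_apply (h : IsSpectralPartition A E c d) (x : H) : HasSum (fun j => E j x) x := by
  have h_sq : Summable fun j => ‖E j x‖ ^ 2 := by
    have h_le : ∑' j, ‖E j x‖ₑ ^ 2 ≤ ‖x‖ₑ ^ 2 :=
      ENNReal.summable.tsum_le_of_sum_le fun F => h.sum_enorm_apply_sq_le F x
    simpa using ENNReal.summable_toReal (ne_top_of_le_ne_top (by finiteness) h_le)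
  obtain ⟨y, hy⟩ : Summable fun j => E j x :=
    (h.orthogonalFamily.summable_iff_norm_sq_summable fun j => ⟨E j x, x, rfl⟩).2 h_sq
  have h_component (i : J) : E i y = E i x := by
    have h_single : HasSum (fun j => E i (E j x)) (E i (E i x)) :=
      hasSum_single i fun j hj => h.apply_apply_of_ne hj.symm x
    rw [(hy.mapL (E i)).unique h_single, h.apply_apply_self]
  have hyx : y - x = 0 := h.eq_zero fun j => by rw [map_sub, h_component, sub_self]
  rwa [sub_eq_zero.1 hyx] at hy

protected lemma star (h : IsSpectralPartition A E c d) (hA : ∀ k, IsStarNormal (A k)) :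
    IsSpectralPartition (star A) E (star c) d where
  isStarProjection := h.isStarProjection
  mul_eq_zero := h.mul_eq_zero
  eq_zero := h.eq_zero
  commute j k := by
    simpa only [(h.isStarProjection j).isSelfAdjoint.star_eq, Pi.star_apply] using
      (h.commute j k).star_star
  tsum_le j x := by
    refine (ENNReal.tsum_le_tsum fun k => ?_).trans (h.tsum_le j x)
    have h_normal : IsStarNormal (A k - c j k • 1) := by
      rw [isStarNormal_iff, star_sub, star_smul, star_one]
      exact ((hA k).star_comm_self.sub_right ((Commute.one_right _).smul_right _)).sub_left
        ((Commute.one_left _).smul_left _)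
    have h_norm := isStarNormal_iff_norm_eq_adjoint.1 h_normal (E j x)
    rw [← star_eq_adjoint, star_sub, star_smul, star_one] at h_norm
    exact (congrArg (· ^ 2) (enorm_eq_iff_norm_eq.2 h_norm)).ge

lemma star_blockDeviation (h : IsSpectralPartition A E c d) (F : Finset J) (k : K) :
    star (blockDeviation A E c F k) = blockDeviation (star A) E (star c) F k := by
  simp only [blockDeviation, star_sum]
  refine Finset.sum_congr rfl fun j _ => ?_
  have h_comm : Commute (E j) (A k - c j k • 1) :=
    (h.commute j k).sub_right ((Commute.one_right _).smul_right _)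
  rw [← h_comm.eq, star_mul, star_sub, star_smul, star_one,
    (h.isStarProjection j).isSelfAdjoint.star_eq]
  rfl

lemma tsum_enorm_blockDeviation_sq_le (h : IsSpectralPartition A E c d) (F : Finset J) (x : H) :
    ∑' k, ‖blockDeviation A E c F k x‖ₑ ^ 2 ≤ ∑ j ∈ F, d j ^ 2 * ‖E j x‖ₑ ^ 2 := by
  have h_apply (j : J) (k : K) :
      ((A k - c j k • 1) * E j) x = E j (A k (E j x) - c j k • E j x) := by
    have h_comm := DFunLike.congr_fun (h.commute j k).eq (E j x)
    simp_all [h.apply_apply_self]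
  calc ∑' k, ‖blockDeviation A E c F k x‖ₑ ^ 2
      = ∑' k, ∑ j ∈ F, ‖A k (E j x) - c j k • E j x‖ₑ ^ 2 := by
        refine tsum_congr fun k => ?_
        simp only [blockDeviation, sum_apply, h_apply, h.enorm_sum_apply_sq]
        simp only [← h_apply]
        rfl
    _ = ∑ j ∈ F, ∑' k, ‖A k (E j x) - c j k • E j x‖ₑ ^ 2 :=
        Summable.tsum_finsetSum fun _ _ => ENNReal.summable
    _ ≤ ∑ j ∈ F, d j ^ 2 * ‖E j x‖ₑ ^ 2 := Finset.sum_le_sum fun j _ => h.tsum_le j x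

lemma tsum_enorm_blockDeviation_sq_le_of_le (h : IsSpectralPartition A E c d) {ε : ℝ≥0∞}
    (hε : ∀ j, d j ≤ ε) (F : Finset J) (x : H) :
    ∑' k, ‖blockDeviation A E c F k x‖ₑ ^ 2 ≤ ε ^ 2 * ‖x‖ₑ ^ 2 := by
  calc ∑' k, ‖blockDeviation A E c F k x‖ₑ ^ 2
      ≤ ∑ j ∈ F, ε ^ 2 * ‖E j x‖ₑ ^ 2 :=
        (h.tsum_enorm_blockDeviation_sq_le F x).trans (by gcongr with j; exact hε j)
    _ ≤ ε ^ 2 * ‖x‖ₑ ^ 2 := by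
        rw [← Finset.mul_sum]
        gcongr
        exact h.sum_enorm_apply_sq_le F x

lemma sub_blockDeviation_apply_mem_blockSpan (h : IsSpectralPartition A E c d) (F : Finset J)
    (s : Finset H) (k : K) {x : H} (hx : x ∈ blockSpan E F s) :
    (A k - blockDeviation A E c F k) x ∈ blockSpan E F s := by
  suffices blockSpan E F s ≤ (blockSpan E F s).comap
      (A k - blockDeviation A E c F k).toLinearMap from this hx
  refine Submodule.span_le.2 ?_
  rintro _ ⟨i, hi, y, hy, rfl⟩
  have h_single : blockDeviation A E c F k (E i y) = (A k - c i k • 1) (E i y) := by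
    rw [blockDeviation, sum_apply, Finset.sum_eq_single_of_mem i hi fun j _ hji => by
      rw [mul_def, comp_apply, h.apply_apply_of_ne hji, map_zero], mul_def, comp_apply,
      h.apply_apply_self]
  have h_scalar : (A k - blockDeviation A E c F k) (E i y) = c i k • E i y := by
    rw [sub_apply, h_single]
    simp
  have h_mem : E i y ∈ blockSpan E F s := Submodule.subset_span ⟨i, hi, y, hy, rfl⟩
  simpa only [SetLike.mem_coe, Submodule.mem_comap, coe_coe, h_scalar] using
    Submodule.smul_mem _ (c i k) h_mem

lemma lie_starProjection_blockSpan (h : IsSpectralPartition A E c d)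
    (hA : ∀ k, IsStarNormal (A k)) (F : Finset J) (s : Finset H) (k : K) :
    ⁅A k, (blockSpan E F s).starProjection⁆ =
      ⁅blockDeviation A E c F k, (blockSpan E F s).starProjection⁆ := by
  have h_commute : Commute (blockSpan E F s).starProjection (A k - blockDeviation A E c F k) := by
    refine commute_starProjection
      (fun x => h.sub_blockDeviation_apply_mem_blockSpan F s k) fun x hx => ?_
    rw [star_sub, h.star_blockDeviation]
    exact (h.star hA).sub_blockDeviation_apply_mem_blockSpan F s k hx
  have h_eq := h_commute.eq
  rw [mul_sub, sub_mul] at h_eq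
  rw [Ring.lie_def, Ring.lie_def, sub_eq_sub_iff_sub_eq_sub, h_eq]

lemma apply_mem_span_image_of_mem_blockSpan (h : IsSpectralPartition A E c d) (F : Finset J)
    (s : Finset H) (j : J) {x : H} (hx : x ∈ blockSpan E F s) :
    E j x ∈ Submodule.span ℂ (E j '' s) := by
  suffices blockSpan E F s ≤ (Submodule.span ℂ (E j '' s)).comap (E j).toLinearMap from this hx
  refine Submodule.span_le.2 ?_
  rintro _ ⟨i, -, y, hy, rfl⟩
  obtain rfl | hij := eq_or_ne j i
  · simpa only [SetLike.mem_coe, Submodule.mem_comap, coe_coe, h.apply_apply_self] using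
      Submodule.subset_span (Set.mem_image_of_mem _ hy)
  · simp [h.apply_apply_of_ne hij]

lemma hsNormSq_comp_starProjection_blockSpan_le (h : IsSpectralPartition A E c d)
    (b : HilbertBasis ι ℂ H) (F : Finset J) (s : Finset H) (j : J) :
    hsNormSq b (E j ∘L (blockSpan E F s).starProjection) ≤ s.card := by
  classical
  let V := Submodule.span ℂ (E j '' s)
  have : FiniteDimensional ℂ V := FiniteDimensional.span_of_finite ℂ (s.finite_toSet.image _)
  have h_factor : E j ∘L (blockSpan E F s).starProjection =
      V.starProjection ∘L (E j ∘L (blockSpan E F s).starProjection) := by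
    ext x
    exact (V.starProjection_eq_self_iff.2 (h.apply_mem_span_image_of_mem_blockSpan F s j
      (Submodule.starProjection_apply_mem _ x))).symm
  have h_norm : ‖E j ∘L (blockSpan E F s).starProjection‖ ≤ 1 :=
    (opNorm_comp_le _ _).trans (mul_le_one₀ (h.isStarProjection j).norm_le (norm_nonneg _)
      (Submodule.starProjection_norm_le _))
  have h_finrank : Module.finrank ℂ V ≤ s.card := by
    have h_card := finrank_span_finset_le_card (R := ℂ) (s.image (E j))
    rw [Finset.coe_image] at h_card
    exact h_card.trans Finset.card_image_le
  calc hsNormSq b (E j ∘L (blockSpan E F s).starProjection)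
      ≤ hsNormSq b V.starProjection := by
        rw [h_factor]
        exact hsNormSq_comp_le_of_norm_le_one b _ h_norm
    _ ≤ s.card := by
        rw [hsNormSq_starProjection]
        exact_mod_cast h_finrank

lemma tsum_hsNormSq_blockDeviation_comp_le (h : IsSpectralPartition A E c d)
    (b : HilbertBasis ι ℂ H) (F : Finset J) (s : Finset H) :
    ∑' k, hsNormSq b (blockDeviation A E c F k ∘L (blockSpan E F s).starProjection) ≤
      s.card * ∑' j, d j ^ 2 := by
  let P := (blockSpan E F s).starProjection
  calc ∑' k, hsNormSq b (blockDeviation A E c F k ∘L P)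
      = ∑' i, ∑' k, ‖blockDeviation A E c F k (P (b i))‖ₑ ^ 2 := ENNReal.tsum_comm
    _ ≤ ∑' i, ∑ j ∈ F, d j ^ 2 * ‖E j (P (b i))‖ₑ ^ 2 :=
        ENNReal.tsum_le_tsum fun i => h.tsum_enorm_blockDeviation_sq_le F (P (b i))
    _ = ∑ j ∈ F, d j ^ 2 * hsNormSq b (E j ∘L P) := by
        rw [Summable.tsum_finsetSum fun _ _ => ENNReal.summable]
        simp only [ENNReal.tsum_mul_left]
        rfl
    _ ≤ ∑ j ∈ F, d j ^ 2 * s.card := by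
        gcongr with j
        exact h.hsNormSq_comp_starProjection_blockSpan_le b F s j
    _ ≤ s.card * ∑' j, d j ^ 2 := by
        rw [← Finset.sum_mul, mul_comm]
        gcongr
        exact ENNReal.sum_le_tsum F

lemma tsum_hsNormSq_lie_starProjection_le (h : IsSpectralPartition A E c d)
    (hA : ∀ k, IsStarNormal (A k)) (b : HilbertBasis ι ℂ H) (F : Finset J) (s : Finset H) :
    ∑' k, hsNormSq b ⁅A k, (blockSpan E F s).starProjection⁆ ≤
      4 * (s.card * ∑' j, d j ^ 2) := by
  let P := (blockSpan E F s).starProjection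
  have h_right (k : K) : hsNormSq b (P ∘L blockDeviation A E c F k) =
      hsNormSq b (blockDeviation (star A) E (star c) F k ∘L P) := by
    rw [← hsNormSq_star b, ← mul_def, star_mul, h.star_blockDeviation,
      (isSelfAdjoint_starProjection _).star_eq, mul_def]
  calc ∑' k, hsNormSq b ⁅A k, P⁆
      ≤ ∑' k, 2 * (hsNormSq b (blockDeviation A E c F k ∘L P) +
          hsNormSq b (blockDeviation (star A) E (star c) F k ∘L P)) :=
        ENNReal.tsum_le_tsum fun k => by
          rw [h.lie_starProjection_blockSpan hA, ← h_right]
          exact hsNormSq_sub_le b _ _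
    _ ≤ 2 * (s.card * ∑' j, d j ^ 2 + s.card * ∑' j, d j ^ 2) := by
        rw [ENNReal.tsum_mul_left, ENNReal.tsum_add]
        gcongr
        · exact h.tsum_hsNormSq_blockDeviation_comp_le b F s
        · exact (h.star hA).tsum_hsNormSq_blockDeviation_comp_le b F s
    _ = 4 * (s.card * ∑' j, d j ^ 2) := by ring

lemma tsum_enorm_lie_starProjection_apply_sq_le (h : IsSpectralPartition A E c d)
    (hA : ∀ k, IsStarNormal (A k)) {ε : ℝ≥0∞} (hε : ∀ j, d j ≤ ε) (F : Finset J) (s : Finset H)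
    (x : H) :
    ∑' k, ‖⁅A k, (blockSpan E F s).starProjection⁆ x‖ₑ ^ 2 ≤ 4 * (ε ^ 2 * ‖x‖ₑ ^ 2) := by
  let P := (blockSpan E F s).starProjection
  have enorm_P_le (y : H) : ‖P y‖ₑ ≤ ‖y‖ₑ :=
    enorm_le_iff_norm_le.2 (Submodule.norm_starProjection_apply_le _ y)
  calc ∑' k, ‖⁅A k, P⁆ x‖ₑ ^ 2
      ≤ ∑' k, 2 * (‖blockDeviation A E c F k (P x)‖ₑ ^ 2 +
          ‖blockDeviation A E c F k x‖ₑ ^ 2) :=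
        ENNReal.tsum_le_tsum fun k => by
          rw [h.lie_starProjection_blockSpan hA]
          refine (enorm_sub_sq_le _ _).trans (mul_le_mul_right (add_le_add_right ?_ _) 2)
          exact pow_le_pow_left' (enorm_P_le _) 2
    _ ≤ 2 * (ε ^ 2 * ‖x‖ₑ ^ 2 + ε ^ 2 * ‖x‖ₑ ^ 2) := by
        rw [ENNReal.tsum_mul_left, ENNReal.tsum_add]
        gcongr
        · refine (h.tsum_enorm_blockDeviation_sq_le_of_le hε F (P x)).trans ?_
          gcongr
          exact enorm_P_le x
        · exact h.tsum_enorm_blockDeviation_sq_le_of_le hε F x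
    _ = 4 * (ε ^ 2 * ‖x‖ₑ ^ 2) := by ring

end IsSpectralPartition

end SpectralPartition

section FinePartition

variable {H G : Type*} [NormedAddCommGroup H] [InnerProductSpace ℂ H]
  [NormedAddCommGroup G] [InnerProductSpace ℂ G] [CompleteSpace G] {ι J K : Type*}
  {A : K → H →L[ℂ] H} {B : K → G →L[ℂ] G}

lemma enorm_starProjection_sub_le (V : Submodule ℂ H) [V.HasOrthogonalProjection] (x : H) {y : H}
    (hy : y ∈ V) : ‖V.starProjection x - x‖ₑ ≤ ‖y - x‖ₑ := by
  rw [enorm_le_iff_norm_le, norm_sub_rev, norm_sub_rev y, V.starProjection_minimal]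
  exact ciInf_le ⟨0, Set.forall_mem_range.2 fun _ => norm_nonneg _⟩ (⟨y, hy⟩ : V)

variable [CompleteSpace H]

/-- The family `A` has countable spectral partitions of arbitrarily small mesh for which the sums
of the squared diameters stay bounded. This is how the joint spectrum of `A` having
dimension at most two enters the argument. -/
def HasFineSpectralPartitions (A : K → H →L[ℂ] H) : Prop :=
  ∃ C ≠ ⊤, ∀ ε > 0, ∃ (E : ℕ → H →L[ℂ] H) (c : ℕ → K → ℂ) (d : ℕ → ℝ≥0∞),
    IsSpectralPartition A E c d ∧ (∀ j, d j ≤ ε) ∧ ∑' j, d j ^ 2 ≤ C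

lemma IsSpectralPartition.exists_enorm_starProjection_sub_le {E : J → H →L[ℂ] H} {c : J → K → ℂ}
    {d : J → ℝ≥0∞} (h : IsSpectralPartition A E c d) (s : Finset H) {ε : ℝ≥0∞} (hε : 0 < ε) :
    ∃ F : Finset J, ∀ x ∈ s, ‖(blockSpan E F s).starProjection x - x‖ₑ ≤ ε := by
  have h_tendsto (x : H) : Tendsto (fun F => ‖∑ j ∈ F, E j x - x‖ₑ) atTop (𝓝 0) := by
    simpa using (Tendsto.sub_const (h.hasSum_apply x) x).enorm
  obtain ⟨F, hF⟩ := ((Finset.eventually_all s).2 fun x _ =>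
    (h_tendsto x).eventually_le_const hε).exists
  refine ⟨F, fun x hx => (enorm_starProjection_sub_le _ x ?_).trans (hF x hx)⟩
  exact Submodule.sum_mem _ fun j hj => Submodule.subset_span ⟨j, hj, x, hx, rfl⟩

namespace HasFineSpectralPartitions

protected lemma star (h : HasFineSpectralPartitions A) (hA : ∀ k, IsStarNormal (A k)) :
    HasFineSpectralPartitions (star A) := by
  obtain ⟨C, hC, h⟩ := h
  refine ⟨C, hC, fun ε hε => ?_⟩
  obtain ⟨E, c, d, hE, hd, hdC⟩ := h ε hε
  exact ⟨E, star c, d, hE.star hA, hd, hdC⟩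

lemma exists_isQuasicentral (h : HasFineSpectralPartitions A) (hA : ∀ k, IsStarNormal (A k))
    (b : HilbertBasis ι ℂ H) (s : Finset H) :
    ∃ P, IsQuasicentral b A P ∧ ∀ x ∈ s, Tendsto (fun n => P n x) atTop (𝓝 x) := by
  obtain ⟨C, hC, h⟩ := h
  let ε : ℕ → ℝ≥0∞ := fun n => (n : ℝ≥0∞)⁻¹
  have ε_pos (n : ℕ) : 0 < ε n := ENNReal.inv_pos.2 (ENNReal.natCast_ne_top n)
  have tendsto_ε : Tendsto ε atTop (𝓝 0) := ENNReal.tendsto_inv_nat_nhds_zero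
  choose E c d hE hd hdC using fun n => h (ε n) (ε_pos n)
  choose F hF using fun n => (hE n).exists_enorm_starProjection_sub_le s (ε_pos n)
  have h_vanish (x : H) : Tendsto (fun n => 4 * (ε n ^ 2 * ‖x‖ₑ ^ 2)) atTop (𝓝 0) := by
    have hx : ‖x‖ₑ ^ 2 ≠ ⊤ := by finiteness
    simpa using ENNReal.Tendsto.const_mul (ENNReal.Tendsto.mul_const
      (ENNReal.Tendsto.pow tendsto_ε (n := 2)) (.inr hx)) (.inr (ENNReal.ofNat_ne_top (n := 4)))
  refine ⟨fun n => (blockSpan (E n) (F n) s).starProjection, ⟨?_, ?_, ?_, ?_, ?_⟩, ?_⟩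
  · exact fun n => Submodule.starProjection_norm_le _
  · exact fun n => by simp [hsNormSq_starProjection]
  · refine ⟨4 * (s.card * C), by finiteness, fun n => ?_⟩
    refine ((hE n).tsum_hsNormSq_lie_starProjection_le hA b (F n) s).trans ?_
    gcongr
    exact hdC n
  · exact fun x => tendsto_of_tendsto_of_tendsto_of_le_of_le tendsto_const_nhds (h_vanish x)
      (fun _ => zero_le) fun n =>
        (hE n).tsum_enorm_lie_starProjection_apply_sq_le hA (hd n) (F n) s x
  · exact fun x => tendsto_of_tendsto_of_tendsto_of_le_of_le tendsto_const_nhds (h_vanish x)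
      (fun _ => zero_le) fun n =>
        ((hE n).star hA).tsum_enorm_lie_starProjection_apply_sq_le
          (fun k => (hA k).star) (hd n) (F n) s x
  · intro x hx
    rw [← tendsto_sub_nhds_zero_iff, tendsto_zero_iff_enorm_tendsto_zero]
    exact tendsto_of_tendsto_of_tendsto_of_le_of_le tendsto_const_nhds tendsto_ε
      (fun _ => zero_le) fun n => hF n x hx

theorem hsNormSq_elementaryOp_star (h : HasFineSpectralPartitions A)
    (hA : Summable fun k => ‖A k‖ ^ 2) (hAn : ∀ k l, Commute (A k) (star (A l)))
    (hB : Summable fun k => ‖B k‖ ^ 2) (hBn : ∀ k l, Commute (B k) (star (B l)))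
    (b : HilbertBasis ι ℂ H) (T : H →L[ℂ] G) :
    hsNormSq b (elementaryOp (star B) (star A) T) = hsNormSq b (elementaryOp B A T) := by
  have hA_normal (k : K) : IsStarNormal (A k) := ⟨(hAn k k).symm⟩
  have hA_star_normal (k : K) : IsStarNormal (star A k) := (hA_normal k).star
  refine le_antisymm (hsNormSq_elementaryOp_star_le hB hA hBn hAn
    (h.exists_isQuasicentral hA_normal b) T) ?_
  have h_le := hsNormSq_elementaryOp_star_le (B := star B) (A := star A) (by simpa using hB)
    (by simpa using hA) (fun k l => by simpa using (hBn l k).symm)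
    (fun k l => by simpa using (hAn l k).symm)
    ((h.star hA_normal).exists_isQuasicentral hA_star_normal b) T
  simpa only [star_star] using h_le

end HasFineSpectralPartitions

end FinePartition

section MultiplicationOperator

variable {X : Type*} [MeasurableSpace X] {μ : Measure X} {g h : X → ℂ}
  {M N : Lp ℂ 2 μ →L[ℂ] Lp ℂ 2 μ}

/-- The bounded operator `M` on `L²(μ)` is the multiplication operator `f ↦ g f`. -/
def IsMultiplicationBy (g : X → ℂ) (M : Lp ℂ 2 μ →L[ℂ] Lp ℂ 2 μ) : Prop :=
  ∀ f : Lp ℂ 2 μ, ⇑(M f) =ᵐ[μ] fun x => g x * f x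

lemma exists_isMultiplicationBy (hg : MemLp g ∞ μ) :
    ∃ M : Lp ℂ 2 μ →L[ℂ] Lp ℂ 2 μ, IsMultiplicationBy g M := by
  refine ⟨(mul ℂ ℂ).holderL μ ∞ 2 2 hg.toLp, fun f => ?_⟩
  filter_upwards [coeFn_holder (r := 2) (mul ℂ ℂ) hg.toLp f, hg.coeFn_toLp] with x hx hgx
  simpa [hgx] using hx

namespace IsMultiplicationBy

lemma ext (hM : IsMultiplicationBy g M) (hN : IsMultiplicationBy g N) : M = N :=
  ContinuousLinearMap.ext fun f => Lp.ext ((hM f).trans (hN f).symm)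

protected lemma zero : IsMultiplicationBy 0 (0 : Lp ℂ 2 μ →L[ℂ] Lp ℂ 2 μ) := fun f => by
  filter_upwards [Lp.coeFn_zero ℂ 2 μ] with x hx
  rw [zero_apply, hx, Pi.zero_apply, zero_mul]

protected lemma mul (hM : IsMultiplicationBy g M) (hN : IsMultiplicationBy h N) :
    IsMultiplicationBy (g * h) (M * N) := fun f => by
  filter_upwards [hM (N f), hN f] with x hMx hNx
  rw [mul_def, comp_apply, hMx, hNx, Pi.mul_apply, mul_assoc]

protected lemma commute (hM : IsMultiplicationBy g M) (hN : IsMultiplicationBy h N) :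
    Commute M N :=
  (hM.mul hN).ext (by simpa only [mul_comm] using hN.mul hM)

lemma sub_smul_one (hM : IsMultiplicationBy g M) (c : ℂ) :
    IsMultiplicationBy (fun x => g x - c) (M - c • 1) := fun f => by
  filter_upwards [Lp.coeFn_sub (M f) (c • f), Lp.coeFn_smul c f, hM f] with x h_sub h_smul hMx
  change (M f - c • f : Lp ℂ 2 μ) x = _
  rw [h_sub, Pi.sub_apply, h_smul, hMx, Pi.smul_apply, smul_eq_mul, sub_mul]

lemma norm_le (hM : IsMultiplicationBy g M) {C : ℝ} (hC : 0 ≤ C) (hg : ∀ x, ‖g x‖ ≤ C) :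
    ‖M‖ ≤ C := by
  refine opNorm_le_bound _ hC fun f => Lp.norm_le_mul_norm_of_ae_le_mul ?_
  filter_upwards [hM f] with x hx
  rw [hx, norm_mul]
  gcongr
  exact hg x

lemma summable_norm_sq {K : Type*} {g : K → X → ℂ} {M : K → Lp ℂ 2 μ →L[ℂ] Lp ℂ 2 μ}
    (hM : ∀ k, IsMultiplicationBy (g k) (M k)) {C : K → ℝ} (hg : ∀ k x, ‖g k x‖ ≤ C k)
    (hC : Summable fun k => C k ^ 2) : Summable fun k => ‖M k‖ ^ 2 := by
  refine hC.of_nonneg_of_le (fun _ => sq_nonneg _) fun k => ?_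
  rw [← sq_abs (C k)]
  gcongr
  exact (hM k).norm_le (abs_nonneg _) fun x => (hg k x).trans (le_abs_self _)

lemma star_apply (hM : IsMultiplicationBy g M) (f : Lp ℂ 2 μ) : star M f = star (M (star f)) := by
  refine ext_inner_right ℂ fun u => ?_
  rw [star_eq_adjoint, adjoint_inner_left, L2.inner_def, L2.inner_def]
  refine integral_congr_ae ?_
  filter_upwards [hM u, hM (star f), Lp.coeFn_star f, Lp.coeFn_star (M (star f))]
    with x hMu hMf hf hMf_star
  simp only [hMu, hMf, hf, hMf_star, Pi.star_apply, RCLike.inner_apply, RCLike.star_def, map_mul,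
    Complex.conj_conj]
  ring

protected lemma star (hM : IsMultiplicationBy g M) :
    IsMultiplicationBy (fun x => starRingEnd ℂ (g x)) (star M) := fun f => by
  rw [hM.star_apply]
  filter_upwards [hM (star f), Lp.coeFn_star f, Lp.coeFn_star (M (star f))] with x hMf hf hMf_star
  simp only [hMf, hf, hMf_star, Pi.star_apply, RCLike.star_def, map_mul, Complex.conj_conj]

lemma eq_adjoint (hM : IsMultiplicationBy g M)
    (hN : IsMultiplicationBy (fun x => starRingEnd ℂ (g x)) N) : N = adjoint M :=
  hN.ext hM.star

lemma isStarProjection {Z : Set X} (hM : IsMultiplicationBy (Z.indicator 1) M) :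
    IsStarProjection M where
  isIdempotentElem := (hM.mul hM).ext (by rwa [← Set.inter_indicator_one, Set.inter_self])
  isSelfAdjoint := hM.star.ext (by
    convert hM using 2 with x
    by_cases hx : x ∈ Z <;> simp [hx])

end IsMultiplicationBy

lemma Lp_two_enorm_sq {E : Type*} [NormedAddCommGroup E] (f : Lp E 2 μ) :
    ‖f‖ₑ ^ 2 = ∫⁻ x, ‖f x‖ₑ ^ 2 ∂μ := by
  simpa [Lp.enorm_def] using
    eLpNorm_nnreal_pow_eq_lintegral (f := f) (μ := μ) (p := 2) two_ne_zero

lemma tsum_enorm_isMultiplicationBy_sq {K : Type*} [Countable K] {g : K → X → ℂ}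
    {M : K → Lp ℂ 2 μ →L[ℂ] Lp ℂ 2 μ} (hg : ∀ k, Measurable (g k))
    (hM : ∀ k, IsMultiplicationBy (g k) (M k)) (f : Lp ℂ 2 μ) :
    ∑' k, ‖M k f‖ₑ ^ 2 = ∫⁻ x, (∑' k, ‖g k x‖ₑ ^ 2) * ‖f x‖ₑ ^ 2 ∂μ := by
  have h_term (k : K) : ‖M k f‖ₑ ^ 2 = ∫⁻ x, ‖g k x‖ₑ ^ 2 * ‖f x‖ₑ ^ 2 ∂μ := by
    rw [Lp_two_enorm_sq]
    refine lintegral_congr_ae ?_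
    filter_upwards [hM k f] with x hx
    rw [hx, enorm_mul, mul_pow]
  simp only [h_term, ← ENNReal.tsum_mul_right]
  exact (lintegral_tsum fun k => ((hg k).enorm.pow_const 2).aemeasurable.mul
    ((Lp.aestronglyMeasurable f).enorm.pow_const 2)).symm

end MultiplicationOperator

section HausdorffMeasure

lemma exists_cover_of_hausdorffMeasure_lt {E : Type*} [EMetricSpace E] [MeasurableSpace E]
    [BorelSpace E] {p : ℝ} {D : Set E} {C r : ℝ≥0∞} (hD : Measure.hausdorffMeasure p D < C)
    (hr : 0 < r) :
    ∃ t : ℕ → Set E, D ⊆ ⋃ n, t n ∧ (∀ n, Metric.ediam (t n) ≤ r) ∧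
      ∑' n, ⨆ _ : (t n).Nonempty, Metric.ediam (t n) ^ p < C := by
  rw [Measure.hausdorffMeasure_apply] at hD
  have h_lt := (le_iSup₂ r hr).trans_lt hD
  simpa only [iInf_lt_iff, exists_prop] using h_lt

lemma exists_closedEBall_cover_of_hausdorffMeasure_lt {E : Type*} [EMetricSpace E] [Nonempty E]
    [MeasurableSpace E] [BorelSpace E] {p : ℝ} (hp : 0 < p) {D : Set E} {C r : ℝ≥0∞}
    (hD : Measure.hausdorffMeasure p D < C) (hr : 0 < r) :
    ∃ (c : ℕ → E) (d : ℕ → ℝ≥0∞), D ⊆ ⋃ n, Metric.closedEBall (c n) (d n) ∧ (∀ n, d n ≤ r) ∧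
      ∑' n, d n ^ p < C := by
  obtain ⟨t, hDt, ht_le, ht_sum⟩ := exists_cover_of_hausdorffMeasure_lt hD hr
  have h_ball (n : ℕ) : ∃ c, t n ⊆ Metric.closedEBall c (Metric.ediam (t n)) := by
    obtain h_empty | ⟨c, hc⟩ := (t n).eq_empty_or_nonempty
    · simp [h_empty]
    · exact ⟨c, fun x hx => Metric.edist_le_ediam_of_mem hx hc⟩
  choose c hc using h_ball
  refine ⟨c, fun n => Metric.ediam (t n), hDt.trans (Set.iUnion_mono hc), ht_le,
    ht_sum.trans_le' (ENNReal.tsum_le_tsum fun n => ?_)⟩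
  obtain h_empty | h_nonempty := (t n).eq_empty_or_nonempty
  · simp [h_empty, hp]
  · simp [h_nonempty]

end HausdorffMeasure

section JointSpectrum

variable {X : Type*} [MeasurableSpace X] {μ : Measure X} {K : Type*} [Countable K] {a : K → X → ℂ}
  {A : K → Lp ℂ 2 μ →L[ℂ] Lp ℂ 2 μ}

lemma isSpectralPartition_of_isMultiplicationBy_indicator {J : Type*} [Countable J] {Z : J → Set X}
    {E : J → Lp ℂ 2 μ →L[ℂ] Lp ℂ 2 μ} {c : J → K → ℂ} {d : J → ℝ≥0∞}
    (ha : ∀ k, Measurable (a k)) (hA : ∀ k, IsMultiplicationBy (a k) (A k))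
    (hE : ∀ j, IsMultiplicationBy ((Z j).indicator 1) (E j))
    (h_disjoint : Pairwise (Function.onFun Disjoint Z)) (h_cover : ∀ᵐ x ∂μ, ∃ j, x ∈ Z j)
    (h_le : ∀ j, ∀ x ∈ Z j, ∑' k, ‖a k x - c j k‖ₑ ^ 2 ≤ d j ^ 2) :
    IsSpectralPartition A E c d where
  isStarProjection j := (hE j).isStarProjection
  mul_eq_zero i j hij := ((hE i).mul (hE j)).ext (by
    rw [← Set.inter_indicator_one, (h_disjoint hij).inter_eq, Set.indicator_empty']
    exact .zero)
  eq_zero {f} hf := by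
    refine Lp.eq_zero_iff_ae_eq_zero.2 ?_
    filter_upwards [h_cover, ae_all_iff.2 fun j => hE j f, Lp.coeFn_zero ℂ 2 μ]
      with x ⟨j, hxj⟩ hEx h_zero
    have hfx := hEx j
    rw [hf, h_zero, Set.indicator_of_mem hxj, Pi.one_apply, one_mul] at hfx
    exact hfx.symm
  commute j k := (hE j).commute (hA k)
  tsum_le j f := by
    calc ∑' k, ‖A k (E j f) - c j k • E j f‖ₑ ^ 2
        = ∫⁻ x, (∑' k, ‖a k x - c j k‖ₑ ^ 2) * ‖E j f x‖ₑ ^ 2 ∂μ :=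
          tsum_enorm_isMultiplicationBy_sq (fun k => (ha k).sub_const _)
            (fun k => (hA k).sub_smul_one (c j k)) (E j f)
      _ ≤ ∫⁻ x, d j ^ 2 * ‖E j f x‖ₑ ^ 2 ∂μ := by
          refine lintegral_mono_ae ?_
          filter_upwards [hE j f] with x hx
          by_cases hxj : x ∈ Z j
          · gcongr
            exact h_le j x hxj
          · simp [hx, hxj]
      _ = d j ^ 2 * ‖E j f‖ₑ ^ 2 := by
          rw [lintegral_const_mul'' _ ((Lp.aestronglyMeasurable _).enorm.pow_const 2),
            Lp_two_enorm_sq]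

lemma exists_isSpectralPartition_of_cover (ha : ∀ k, Measurable (a k))
    (hA : ∀ k, IsMultiplicationBy (a k) (A k)) {c : ℕ → K → ℂ} {d : ℕ → ℝ≥0∞}
    (h_cover : ∀ᵐ x ∂μ, ∃ j, ∑' k, ‖a k x - c j k‖ₑ ^ 2 ≤ d j ^ 2) :
    ∃ E, IsSpectralPartition A E c d := by
  let W (j : ℕ) : Set X := {x | ∑' k, ‖a k x - c j k‖ₑ ^ 2 ≤ d j ^ 2}
  have hW (j : ℕ) : MeasurableSet (W j) :=
    measurableSet_le (.tsum fun k => ((ha k).sub_const _).enorm.pow_const 2) measurable_const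
  have h_indicator (j : ℕ) : MemLp ((disjointed W j).indicator (1 : X → ℂ)) ∞ μ :=
    (memLp_top_const 1).indicator (.disjointed hW j)
  choose E hE using fun j => exists_isMultiplicationBy (h_indicator j)
  refine ⟨E, isSpectralPartition_of_isMultiplicationBy_indicator ha hA hE (disjoint_disjointed W)
    ?_ fun j x hx => disjointed_subset W j hx⟩
  simpa only [← Set.mem_iUnion, iUnion_disjointed] using
    h_cover.mono fun x hx => Set.mem_iUnion.2 hx

theorem hasFineSpectralPartitions_of_hausdorffMeasure_lt_top
    [MeasurableSpace (lp (fun _ : K => ℂ) 2)] [BorelSpace (lp (fun _ : K => ℂ) 2)]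
    (ha : ∀ k, Measurable (a k)) (hA : ∀ k, IsMultiplicationBy (a k) (A k))
    {D : Set (lp (fun _ : K => ℂ) 2)} (hD : Measure.hausdorffMeasure 2 D < ⊤)
    (haD : ∀ᵐ x ∂μ, ∃ lam ∈ D, ∀ k, lam k = a k x) :
    HasFineSpectralPartitions A := by
  obtain ⟨C, hDC, hC⟩ := exists_between hD
  refine ⟨C, hC.ne, fun ε hε => ?_⟩
  obtain ⟨c, d, hDcd, hd, hdC⟩ :=
    exists_closedEBall_cover_of_hausdorffMeasure_lt two_pos hDC hε
  have h_cover : ∀ᵐ x ∂μ, ∃ j, ∑' k, ‖a k x - c j k‖ₑ ^ 2 ≤ d j ^ 2 := by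
    filter_upwards [haD] with x ⟨lam, hlam, hx⟩
    obtain ⟨j, hj⟩ := Set.mem_iUnion.1 (hDcd hlam)
    refine ⟨j, ?_⟩
    rw [Metric.mem_closedEBall, edist_eq_enorm_sub] at hj
    calc ∑' k, ‖a k x - c j k‖ₑ ^ 2 = ‖lam - c j‖ₑ ^ 2 := by simp [lp_enorm_sq, hx]
      _ ≤ d j ^ 2 := by gcongr
  obtain ⟨E, hE⟩ := exists_isSpectralPartition_of_cover ha hA h_cover
  exact ⟨E, fun j => c j, d, hE, hd, by simpa using hdC.le⟩

end JointSpectrum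

end FugledeWeiss

open FugledeWeiss in
theorem hsNormSq_eq_hsNormSq_tilde_general
    {X : Type*} [MeasurableSpace X] {μ : Measure X}
    {G : Type*} [NormedAddCommGroup G] [InnerProductSpace ℂ G] [CompleteSpace G]
    {K : Type*} [Countable K]
    [MeasurableSpace (lp (fun _ : K => ℂ) 2)] [BorelSpace (lp (fun _ : K => ℂ) 2)]
    {a : K → X → ℂ} (ha : ∀ k, Measurable (a k))
    {A : K → (Lp ℂ 2 μ →L[ℂ] Lp ℂ 2 μ)} (hA : ∀ k, IsMultiplicationBy (a k) (A k))
    (hA_summable : Summable fun k => ‖A k‖ ^ 2)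
    {B : K → (G →L[ℂ] G)} (hB : ∀ k l, Commute (B k) (star (B l)))
    (hB_summable : Summable fun k => ‖B k‖ ^ 2)
    {D : Set (lp (fun _ : K => ℂ) 2)} (hD : Measure.hausdorffMeasure 2 D < ⊤)
    (haD : ∀ᵐ x ∂μ, ∃ lam ∈ D, ∀ k, lam k = a k x)
    {ι : Type*} (bas : HilbertBasis ι ℂ (Lp ℂ 2 μ)) (T : Lp ℂ 2 μ →L[ℂ] G) :
    hsNormSq bas (∑' k, B k ∘L T ∘L A k) =
      hsNormSq bas (∑' k, adjoint (B k) ∘L T ∘L adjoint (A k)) :=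
  ((hasFineSpectralPartitions_of_hausdorffMeasure_lt_top ha hA hD haD).hsNormSq_elementaryOp_star
    hA_summable (fun k l => (hA k).commute (hA l).star) hB_summable hB bas T).symm

/-- Extension of the Fuglede–Weiss theorem: for the multiplication operator
`Δ(T) = ∑ k M_{b k} T M_{a k}` with commuting normal coefficients whose left coefficient
family has essential Hausdorff dimension at most 2, and its formal adjoint
`Δ̃(T) = ∑ k M_{conj (b k)} T M_{conj (a k)}`, one has `‖Δ(T)‖₂ = ‖Δ̃(T)‖₂` for every
bounded operator `T` (the common value possibly being `∞`). -/
theorem hsNormSq_eq_hsNormSq_tilde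
    {X Y : Type*} [MeasurableSpace X] [MeasurableSpace Y]
    [StandardBorelSpace X] [StandardBorelSpace Y]
    (μ : Measure X) (ν : Measure Y) [SigmaFinite μ] [SigmaFinite ν]
    {K : Type*} [Countable K]
    [MeasurableSpace (lp (fun _ : K => ℂ) 2)] [BorelSpace (lp (fun _ : K => ℂ) 2)]
    (a : K → X → ℂ) (b : K → Y → ℂ)
    (ha : ∀ k, Measurable (a k)) (hb : ∀ k, Measurable (b k))
    (Ca Cb : K → ℝ)
    (haC : ∀ k x, ‖a k x‖ ≤ Ca k) (hbC : ∀ k y, ‖b k y‖ ≤ Cb k)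
    (hCa : Summable fun k => Ca k ^ 2) (hCb : Summable fun k => Cb k ^ 2)
    (Ma : K → (Lp ℂ 2 μ →L[ℂ] Lp ℂ 2 μ)) (Mb : K → (Lp ℂ 2 ν →L[ℂ] Lp ℂ 2 ν))
    (Mac : K → (Lp ℂ 2 μ →L[ℂ] Lp ℂ 2 μ)) (Mbc : K → (Lp ℂ 2 ν →L[ℂ] Lp ℂ 2 ν))
    (hMa : ∀ (k : K) (f : Lp ℂ 2 μ), ⇑(Ma k f) =ᵐ[μ] fun x => a k x * f x)
    (hMb : ∀ (k : K) (g : Lp ℂ 2 ν), ⇑(Mb k g) =ᵐ[ν] fun y => b k y * g y)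
    (hMac : ∀ (k : K) (f : Lp ℂ 2 μ),
      ⇑(Mac k f) =ᵐ[μ] fun x => (starRingEnd ℂ) (a k x) * f x)
    (hMbc : ∀ (k : K) (g : Lp ℂ 2 ν),
      ⇑(Mbc k g) =ᵐ[ν] fun y => (starRingEnd ℂ) (b k y) * g y)
    (D : Set (lp (fun _ : K => ℂ) 2))
    (hD : Measure.hausdorffMeasure 2 D < ⊤)
    (haD : ∀ᵐ x ∂μ, ∃ lam : lp (fun _ : K => ℂ) 2, lam ∈ D ∧ ∀ k, lam k = a k x)
    {ι : Type*} (bas : HilbertBasis ι ℂ (Lp ℂ 2 μ))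
    (T : Lp ℂ 2 μ →L[ℂ] Lp ℂ 2 ν) :
    hsNormSq bas (∑' k, Mb k ∘L T ∘L Ma k) = hsNormSq bas (∑' k, Mbc k ∘L T ∘L Mac k) := by
  have hMb_commute (k l : K) : Commute (Mb k) (star (Mb l)) :=
    FugledeWeiss.IsMultiplicationBy.commute (hMb k) (.star (hMb l))
  obtain rfl : Mac = fun k => adjoint (Ma k) := funext fun k =>
    FugledeWeiss.IsMultiplicationBy.eq_adjoint (hMa k) (hMac k)
  obtain rfl : Mbc = fun k => adjoint (Mb k) := funext fun k =>
    FugledeWeiss.IsMultiplicationBy.eq_adjoint (hMb k) (hMbc k)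
  exact hsNormSq_eq_hsNormSq_tilde_general ha hMa
    (FugledeWeiss.IsMultiplicationBy.summable_norm_sq hMa haC hCa) hMb_commute
    (FugledeWeiss.IsMultiplicationBy.summable_norm_sq hMb hbC hCb) hD haD bas T
end

section
/- Let H₁ and H₂ be separable complex Hilbert spaces, k ≥ 2, let A₁, …, A_k be pairwise commuting bounded normal operators on H₁, and let B₁, …, B_k be pairwise commuting bounded normal operators on H₂. Define Δ : B(H₁, H₂) → B(H₁, H₂) by Δ(T) = Σ_{i=1}^k B_i T A_i. Then ker Δ^{k−1} = ker Δ^k; that is, the ascent of Δ is at most k − 1. -/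
open ContinuousLinearMap

/-!
Let `Δ ^ k T = 0`. It suffices to show `Δ ^ (k - 1) T A l = 0` for every `l`, since `Z A l = 0`
means `A l Z* = 0` by normality, and then `Z Z* = 0` if `Z` is in the range of `Δ`. Cutting `H₁`
down by spectral projections of `A l* A l` makes `A l` invertible, and dividing by it makes
`A l = 1`.

Joint spectral projections of the other `k - 1` operators cut `H₁` at stage `n` into
`4 ^ (n (k - 1))` cells, on each of which every `A i` is within `O(2 ^ (-n))` of a scalar `c i`.
There `Δ` is an `O(2 ^ (-n))` perturbation of left multiplication by the normal operator
`N = ∑ i, c i B i`. A vector whose orbit under `N` grows at most like `ρ ^ m` satisfies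
`‖N v‖ ≤ ρ ‖v‖`, and it follows that `Δ ^ r T` has norm `O(2 ^ (-n r))` on each cell.

Let `Y = Δ ^ (k - 2) T` and `Z = Δ Y`, so `Δ Z = 0`, and let `W n` be the span of the components of
a fixed vector `x` in the cells of stage `n`. Summing over the cells, `Z` has Hilbert-Schmidt norm
`O(1)` on `W n`, uniformly in `n`. Up to the error of `W n` not being invariant, `‖Z‖² = ⟨Z, Δ Y⟩`
is `⟨Δ* Z, Y⟩`, and by normality `Δ Z = 0` makes `Δ* Z` small; the error is controlled by the
increments of the bounded increasing sequence `‖Z|W n‖²`, which tend to zero. Hence `Z x = 0`.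
-/

open Filter Topology

/-! ### Orbits of normal operators -/

section Growth

theorem le_mul_of_log_convex_of_le_geometric {u : ℕ → ℝ} {K ρ : ℝ} (hρ : 0 < ρ)
    (hu : ∀ n, 0 ≤ u n) (hconvex : ∀ n, u (n + 1) ^ 2 ≤ u n * u (n + 2))
    (hgrowth : ∀ n, u n ≤ K * ρ ^ n) : u 1 ≤ ρ * u 0 := by
  by_contra! hlt
  have hu₁ : 0 < u 1 := (mul_nonneg hρ.le (hu 0)).trans_lt hlt
  have hu₀ : 0 < u 0 := (hu 0).lt_of_ne' fun h ↦ by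
    have := hconvex 0
    simp only [h, zero_mul, zero_add] at this
    exact (pow_pos hu₁ 2).not_ge this
  obtain ⟨q, hq⟩ : ∃ q, q = u 1 / u 0 := ⟨_, rfl⟩
  have hρq : ρ < q := by rwa [hq, lt_div_iff₀ hu₀]
  have hq₀ : 0 < q := hρ.trans hρq
  have ratio_ge : ∀ n, 0 < u n ∧ q * u n ≤ u (n + 1) := by
    intro n
    induction n with
    | zero => exact ⟨hu₀, by rw [hq, div_mul_cancel₀ _ hu₀.ne']⟩
    | succ n ih =>
      obtain ⟨hpos, hle⟩ := ih
      refine ⟨(mul_pos hq₀ hpos).trans_le hle, le_of_mul_le_mul_left ?_ hpos⟩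
      nlinarith [hconvex n, hu (n + 1)]
  have geometric_le : ∀ n, q ^ n * u 0 ≤ u n := by
    intro n
    induction n with
    | zero => simp
    | succ n ih =>
      calc q ^ (n + 1) * u 0 = q * (q ^ n * u 0) := by ring
        _ ≤ q * u n := by gcongr
        _ ≤ u (n + 1) := (ratio_ge n).2
  obtain ⟨n, hn⟩ := pow_unbounded_of_one_lt (K / u 0) ((one_lt_div hρ).2 hρq)
  rw [div_pow, div_lt_div_iff₀ hu₀ (by positivity)] at hn
  linarith [geometric_le n, hgrowth n]

theorem exists_norm_pow_apply_le_of_add_pow_apply_eq_zero {V : Type*} [NormedAddCommGroup V]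
    [NormedSpace ℂ V] {L R : V →L[ℂ] V} (hLR : Commute L R) {ρ : ℝ} (hρ : 0 < ρ)
    (hR : ‖R‖ ≤ ρ) (M : ℕ) {Z : V} (hZ : ((L + R) ^ M) Z = 0) :
    ∃ K : ℝ, ∀ n, ‖(L ^ n) Z‖ ≤ K * (2 * ρ) ^ n := by
  induction M generalizing Z with
  | zero => exact ⟨0, fun n ↦ by simp_all⟩
  | succ M ih =>
    obtain ⟨K', hK'⟩ := ih (Z := (L + R) Z) (by rwa [pow_succ] at hZ)
    refine ⟨max ‖Z‖ (K' / ρ), fun n ↦ ?_⟩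
    induction n with
    | zero => simp
    | succ n ihn =>
      set K := max ‖Z‖ (K' / ρ)
      have hK : K' ≤ ρ * K := (div_le_iff₀' hρ).1 (le_max_right _ _)
      have hstep : (L ^ (n + 1)) Z = (L ^ n) ((L + R) Z) - R ((L ^ n) Z) := by
        have hcomm : (L ^ n) (R Z) = R ((L ^ n) Z) := congr($((hLR.pow_left n).eq) Z)
        rw [pow_succ, mul_apply_eq_comp, add_apply, map_add, hcomm, add_sub_cancel_right]
      calc ‖(L ^ (n + 1)) Z‖ ≤ ‖(L ^ n) ((L + R) Z)‖ + ‖R ((L ^ n) Z)‖ :=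
            hstep ▸ norm_sub_le _ _
        _ ≤ K' * (2 * ρ) ^ n + ρ * (K * (2 * ρ) ^ n) :=
            add_le_add (hK' n) (R.le_of_opNorm_le_of_le hR ihn)
        _ ≤ ρ * K * (2 * ρ) ^ n + ρ * (K * (2 * ρ) ^ n) := by gcongr
        _ = K * (2 * ρ) ^ (n + 1) := by ring

theorem norm_apply_le_of_norm_pow_apply_le {H : Type*} [NormedAddCommGroup H]
    [InnerProductSpace ℂ H] [CompleteSpace H] {N : H →L[ℂ] H} (hN : IsStarNormal N) {x : H}
    {K ρ : ℝ} (hρ : 0 < ρ) (hgrowth : ∀ n, ‖(N ^ n) x‖ ≤ K * ρ ^ n) : ‖N x‖ ≤ ρ * ‖x‖ := by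
  refine le_mul_of_log_convex_of_le_geometric (u := fun n ↦ ‖(N ^ n) x‖) hρ
    (fun _ ↦ norm_nonneg _) (fun n ↦ ?_) hgrowth
  set y := (N ^ n) x
  have hN₁ : (N ^ (n + 1)) x = N y := by rw [pow_succ', mul_apply_eq_comp]
  have hN₂ : (N ^ (n + 2)) x = N (N y) := by rw [pow_succ', mul_apply_eq_comp, hN₁]
  calc ‖(N ^ (n + 1)) x‖ ^ 2 = RCLike.re (inner ℂ y (adjoint N (N y))) := by
        rw [hN₁, apply_norm_sq_eq_inner_adjoint_right, comp_apply]
    _ ≤ ‖y‖ * ‖adjoint N (N y)‖ := re_inner_le_norm _ _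
    _ = ‖y‖ * ‖(N ^ (n + 2)) x‖ := by
        rw [hN₂, isStarNormal_iff_norm_eq_adjoint.1 hN (N y)]

end Growth

/-! ### Elementary operators -/

section ElementaryOperator

variable {ι : Type*} [Fintype ι] {H₁ H₂ : Type*}
  [NormedAddCommGroup H₁] [InnerProductSpace ℂ H₁]
  [NormedAddCommGroup H₂] [InnerProductSpace ℂ H₂]

/-- The elementary operator `Δ(T) = ∑ i, B i T A i` on `B(H₁, H₂)`, as a bounded operator, so that
its iterates are powers in a ring. -/
noncomputable def elementaryOperator (A : ι → H₁ →L[ℂ] H₁) (B : ι → H₂ →L[ℂ] H₂) :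
    (H₁ →L[ℂ] H₂) →L[ℂ] (H₁ →L[ℂ] H₂) :=
  ∑ i, postcomp H₁ (B i) ∘L precomp H₂ (A i)

variable {A : ι → H₁ →L[ℂ] H₁} {B : ι → H₂ →L[ℂ] H₂}

theorem elementaryOperator_apply (T : H₁ →L[ℂ] H₂) :
    elementaryOperator A B T = ∑ i, B i ∘L T ∘L A i := by
  simp [elementaryOperator]

theorem elementaryOperator_apply_apply (T : H₁ →L[ℂ] H₂) (x : H₁) :
    elementaryOperator A B T x = ∑ i, B i (T (A i x)) := by
  simp [elementaryOperator_apply]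

theorem elementaryOperator_apply_apply_of_eq_smul_add {c : ι → ℂ} {v : H₁} {w : ι → H₁}
    (hv : ∀ i, A i v = c i • v + w i) (T : H₁ →L[ℂ] H₂) :
    elementaryOperator A B T v = (∑ i, c i • B i) (T v) + ∑ i, B i (T (w i)) := by
  simp [elementaryOperator_apply_apply, hv, Finset.sum_add_distrib, sum_apply]

theorem elementaryOperator_pow_apply_comp {A' : ι → H₁ →L[ℂ] H₁} {Φ : H₁ →L[ℂ] H₁}
    (h : ∀ i, A i ∘L Φ = Φ ∘L A' i) (n : ℕ) (T : H₁ →L[ℂ] H₂) :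
    (elementaryOperator A B ^ n) T ∘L Φ = (elementaryOperator A' B ^ n) (T ∘L Φ) := by
  induction n generalizing T with
  | zero => rfl
  | succ n ih =>
    rw [pow_succ, mul_apply_eq_comp, ih, pow_succ, mul_apply_eq_comp, elementaryOperator_apply,
      elementaryOperator_apply]
    simp only [finsetSum_comp, comp_assoc, h]

theorem norm_elementaryOperator_le {a : ℝ} (hA : ∀ i, ‖A i‖ ≤ a) :
    ‖elementaryOperator A B‖ ≤ (∑ i, ‖B i‖) * a := by
  have ha : 0 ≤ (∑ i, ‖B i‖) * a := by
    rw [Finset.sum_mul]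
    exact Finset.sum_nonneg fun i _ ↦ mul_nonneg (norm_nonneg _) ((norm_nonneg _).trans (hA i))
  refine opNorm_le_bound _ ha fun T ↦ ?_
  rw [elementaryOperator_apply, Finset.sum_mul, Finset.sum_mul]
  refine norm_sum_le_of_le _ fun i _ ↦ ?_
  calc ‖B i ∘L T ∘L A i‖ ≤ ‖B i‖ * (‖T‖ * ‖A i‖) :=
        (opNorm_comp_le _ _).trans (by gcongr; exact opNorm_comp_le _ _)
    _ ≤ ‖B i‖ * (‖T‖ * a) := by gcongr; exact hA i
    _ = ‖B i‖ * a * ‖T‖ := by ring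

theorem elementaryOperator_eq_postcomp_add (c : ι → ℂ) :
    elementaryOperator A B =
      postcomp H₁ (∑ i, c i • B i) + elementaryOperator (fun i ↦ A i - c i • 1) B := by
  ext T x
  simp [elementaryOperator_apply_apply]

theorem commute_postcomp_elementaryOperator {N : H₂ →L[ℂ] H₂} (hN : ∀ i, Commute N (B i)) :
    Commute (postcomp H₁ N) (elementaryOperator A B) := by
  ext T x
  simp only [mul_apply_eq_comp, postcomp_apply, comp_apply, elementaryOperator_apply_apply,
    map_sum]
  exact Finset.sum_congr rfl fun i _ ↦ congr($((hN i).eq) _)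

theorem postcomp_pow_apply (N : H₂ →L[ℂ] H₂) (n : ℕ) (T : H₁ →L[ℂ] H₂) :
    (postcomp H₁ N ^ n) T = (N ^ n) ∘L T := by
  induction n with
  | zero => rfl
  | succ n ih => rw [pow_succ', mul_apply_eq_comp, ih, postcomp_apply, pow_succ', ← comp_assoc]; rfl

end ElementaryOperator

theorem isStarNormal_sum_smul {R ι : Type*} [CStarAlgebra R] [Fintype ι] {b : ι → R}
    (hb : ∀ i, IsStarNormal (b i)) (hcomm : ∀ i j, Commute (b i) (b j)) (c : ι → ℂ) :
    IsStarNormal (∑ i, c i • b i) := by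
  refine ⟨?_⟩
  simp only [star_sum, star_smul]
  exact .sum_left _ _ _ fun i _ ↦ .sum_right _ _ _ fun j _ ↦
    (((hb i).commute_star_left (hcomm i j)).smul_left _).smul_right _

section NearScalar

variable {ι : Type*} [Fintype ι] {H₁ H₂ : Type*}
  [NormedAddCommGroup H₁] [InnerProductSpace ℂ H₁]
  [NormedAddCommGroup H₂] [InnerProductSpace ℂ H₂] [CompleteSpace H₂]
  {A : ι → H₁ →L[ℂ] H₁} {B : ι → H₂ →L[ℂ] H₂}
  (hB : ∀ i, IsStarNormal (B i)) (hBcomm : ∀ i j, Commute (B i) (B j))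
include hB hBcomm

theorem norm_elementaryOperator_apply_le_of_near_scalar {c : ι → ℂ} {ρ : ℝ} (hρ : 0 < ρ)
    (hA : ‖elementaryOperator (fun i ↦ A i - c i • 1) B‖ ≤ ρ) {M : ℕ} {Z : H₁ →L[ℂ] H₂}
    (hZ : (elementaryOperator A B ^ M) Z = 0) : ‖elementaryOperator A B Z‖ ≤ 3 * ρ * ‖Z‖ := by
  set R := elementaryOperator (fun i ↦ A i - c i • 1) B
  set N := ∑ i, c i • B i
  have hN : IsStarNormal N := isStarNormal_sum_smul hB hBcomm c
  have hNR : Commute (postcomp H₁ N) R := commute_postcomp_elementaryOperator fun j ↦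
    .sum_left _ _ _ fun i _ ↦ (hBcomm i j).smul_left _
  have hsplit : elementaryOperator A B = postcomp H₁ N + R := elementaryOperator_eq_postcomp_add c
  rw [hsplit] at hZ
  obtain ⟨K, hK⟩ := exists_norm_pow_apply_le_of_add_pow_apply_eq_zero hNR hρ hA M hZ
  have hNZ : ‖N ∘L Z‖ ≤ 2 * ρ * ‖Z‖ := by
    refine opNorm_le_bound _ (by positivity) fun x ↦ ?_
    have hgrowth (n : ℕ) : ‖(N ^ n) (Z x)‖ ≤ K * ‖x‖ * (2 * ρ) ^ n := by
      have := (postcomp_pow_apply N n Z ▸ hK n : ‖(N ^ n) ∘L Z‖ ≤ _)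
      exact (le_of_opNorm_le _ this x).trans_eq (by ring)
    calc ‖N (Z x)‖ ≤ 2 * ρ * ‖Z x‖ :=
          norm_apply_le_of_norm_pow_apply_le hN (by positivity) hgrowth
      _ ≤ 2 * ρ * (‖Z‖ * ‖x‖) := by gcongr; exact le_opNorm _ _
      _ = 2 * ρ * ‖Z‖ * ‖x‖ := by ring
  calc ‖elementaryOperator A B Z‖ ≤ ‖N ∘L Z‖ + ‖R Z‖ := by
        rw [hsplit, add_apply, postcomp_apply]
        exact norm_add_le _ _
    _ ≤ 2 * ρ * ‖Z‖ + ρ * ‖Z‖ := add_le_add hNZ (le_of_opNorm_le _ hA _)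
    _ = 3 * ρ * ‖Z‖ := by ring

theorem norm_elementaryOperator_pow_apply_le_of_near_scalar {c : ι → ℂ} {ρ : ℝ} (hρ : 0 < ρ)
    (hA : ‖elementaryOperator (fun i ↦ A i - c i • 1) B‖ ≤ ρ) {M : ℕ} {Z : H₁ →L[ℂ] H₂}
    (hZ : (elementaryOperator A B ^ M) Z = 0) (r : ℕ) :
    ‖(elementaryOperator A B ^ r) Z‖ ≤ (3 * ρ) ^ r * ‖Z‖ := by
  induction r with
  | zero => simp
  | succ r ih =>
    have hker : (elementaryOperator A B ^ M) ((elementaryOperator A B ^ r) Z) = 0 := by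
      rw [← mul_apply_eq_comp, ← pow_add, add_comm, pow_add, mul_apply_eq_comp, hZ, map_zero]
    calc ‖(elementaryOperator A B ^ (r + 1)) Z‖
        = ‖elementaryOperator A B ((elementaryOperator A B ^ r) Z)‖ := by
          rw [pow_succ', mul_apply_eq_comp]
      _ ≤ 3 * ρ * ‖(elementaryOperator A B ^ r) Z‖ :=
          norm_elementaryOperator_apply_le_of_near_scalar hB hBcomm hρ hA hker
      _ ≤ 3 * ρ * ((3 * ρ) ^ r * ‖Z‖) := by gcongr
      _ = (3 * ρ) ^ (r + 1) * ‖Z‖ := by ring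

/-- Off the range of `E` the tuple is replaced by the scalars `c`, which makes it globally close
to scalars without changing `Δ^r T ∘ E`. -/
theorem norm_elementaryOperator_pow_apply_comp_le [CompleteSpace H₁] {E : H₁ →L[ℂ] H₁}
    (hE : IsStarProjection E) (hAE : ∀ i, Commute (A i) E) {ε : ℝ} (hε : 0 < ε)
    (hscalar : ∀ i, ∃ c : ℂ, ‖(A i - c • 1) * E‖ ≤ ε) {M : ℕ} {T : H₁ →L[ℂ] H₂}
    (hT : (elementaryOperator A B ^ M) T = 0) (r : ℕ) :
    ‖(elementaryOperator A B ^ r) T ∘L E‖ ≤ (3 * ((1 + ∑ i, ‖B i‖) * ε)) ^ r * ‖T‖ := by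
  choose c hc using hscalar
  set A' : ι → H₁ →L[ℂ] H₁ := fun i ↦ c i • 1 + (A i - c i • 1) * E
  have hAA' (i : ι) : A i ∘L E = E ∘L A' i := by
    change A i * E = E * (c i • 1 + (A i - c i • 1) * E)
    have hcomm : Commute (A i - c i • 1) E := (hAE i).sub_left ((Commute.one_left E).smul_left _)
    rw [mul_add, ← mul_assoc, ← hcomm.eq, mul_assoc, hE.isIdempotentElem.eq, sub_mul]
    simp
  have hnear : ‖elementaryOperator (fun i ↦ A' i - c i • 1) B‖ ≤ (1 + ∑ i, ‖B i‖) * ε := by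
    refine (norm_elementaryOperator_le (a := ε) fun i ↦ ?_).trans ?_
    · simpa [A'] using hc i
    · gcongr; linarith
  have hρ : 0 < (1 + ∑ i, ‖B i‖) * ε := by positivity
  rw [elementaryOperator_pow_apply_comp hAA']
  refine (norm_elementaryOperator_pow_apply_le_of_near_scalar hB hBcomm hρ hnear (M := M)
    (Z := T ∘L E) ?_ r).trans ?_
  · rw [← elementaryOperator_pow_apply_comp hAA', hT, zero_comp]
  · gcongr
    exact (opNorm_comp_le _ _).trans (mul_le_of_le_one_right (norm_nonneg _) hE.norm_le)

end NearScalar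

/-! ### Spectral projections of half-lines -/

section SpectralCut

variable {H : Type*} [NormedAddCommGroup H] [InnerProductSpace ℂ H] [CompleteSpace H]

/-- The truncation `(h - c)⁺` of a self-adjoint operator `h`, as a continuous function of `h`. -/
noncomputable def excess (h : H →L[ℂ] H) (c : ℝ) : H →L[ℂ] H :=
  cfc (fun t : ℝ ↦ max (t - c) 0) h

/-- The spectral projection of a self-adjoint operator `h` for the half-line `(c, ∞)`, obtained
without Borel functional calculus as the projection onto the orthogonal complement of
`ker (h - c)⁺`. -/
noncomputable def spectralCut (h : H →L[ℂ] H) (c : ℝ) : H →L[ℂ] H :=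
  1 - (LinearMap.ker (excess h c).toLinearMap).starProjection

variable {h : H →L[ℂ] H} {c d : ℝ}

theorem excess_nonneg : 0 ≤ excess h c :=
  cfc_nonneg fun _ _ ↦ le_max_right _ _

theorem isStarProjection_spectralCut : IsStarProjection (spectralCut h c) :=
  isStarProjection_starProjection.one_sub

theorem spectralCut_mul_eq_zero_iff {X : H →L[ℂ] H} :
    spectralCut h c * X = 0 ↔ excess h c * X = 0 := by
  simp only [ContinuousLinearMap.ext_iff, mul_apply_eq_comp, zero_apply]
  refine forall_congr' fun x ↦ ?_
  rw [spectralCut, sub_apply, sub_eq_zero, eq_comm, one_apply_eq_self,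
    Submodule.starProjection_eq_self_iff]
  rfl

theorem excess_mul_one_sub_spectralCut : excess h c * (1 - spectralCut h c) = 0 :=
  spectralCut_mul_eq_zero_iff.1 isStarProjection_spectralCut.mul_one_sub_self

theorem excess_mul_spectralCut : excess h c * spectralCut h c = excess h c := by
  simpa [mul_sub, sub_eq_zero, eq_comm] using excess_mul_one_sub_spectralCut (h := h) (c := c)

theorem commute_spectralCut (hh : IsSelfAdjoint h) {W : H →L[ℂ] H} (hW : Commute W h) :
    Commute W (spectralCut h c) := by
  set F := spectralCut h c with hF
  have invariant {V : H →L[ℂ] H} (hV : Commute V h) : F * (V * (1 - F)) = 0 := by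
    have hVX : Commute (excess h c) V := hV.symm.cfc_real _
    rw [hF, spectralCut_mul_eq_zero_iff, ← mul_assoc, hVX.eq, mul_assoc,
      excess_mul_one_sub_spectralCut, mul_zero]
  have hWstar : Commute (star W) h := by simpa only [hh.star_eq] using hW.star_star
  have hinv : F * W = F * W * F := by
    simpa [mul_sub, mul_assoc, sub_eq_zero] using invariant hW
  have hinv_star : W * F = F * W * F := by
    have := congr(star $(invariant hWstar))
    simpa [isStarProjection_spectralCut.isSelfAdjoint.star_eq, hF, sub_mul, mul_assoc,
      sub_eq_zero] using this
  exact hinv_star.trans hinv.symm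

theorem spectralCut_mul_spectralCut_of_le (hcd : c ≤ d) :
    spectralCut h d * spectralCut h c = spectralCut h d := by
  obtain rfl | hlt := hcd.eq_or_lt
  · exact isStarProjection_spectralCut.isIdempotentElem
  have hpos (t : ℝ) : 0 < max (t - c) (d - c) := lt_max_of_lt_right (sub_pos.2 hlt)
  have hcont : Continuous fun t : ℝ ↦ max (t - d) 0 / max (t - c) (d - c) :=
    .div (by fun_prop) (by fun_prop) fun t ↦ (hpos t).ne'
  have hfactor : excess h d =
      cfc (fun t : ℝ ↦ max (t - d) 0 / max (t - c) (d - c)) h * excess h c := by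
    rw [excess, excess, ← cfc_mul _ _ h hcont.continuousOn (by fun_prop)]
    refine cfc_congr fun t _ ↦ ?_
    obtain htd | hdt := le_total t d
    · simp [htd]
    · have : c < t := hlt.trans_le hdt
      simp [hdt, this.le, (sub_pos.2 this).ne']
  have hzero : spectralCut h d * (1 - spectralCut h c) = 0 := by
    rw [spectralCut_mul_eq_zero_iff, hfactor, mul_assoc, excess_mul_one_sub_spectralCut, mul_zero]
  simpa [mul_sub, sub_eq_zero, eq_comm] using hzero

theorem spectralCut_mul_spectralCut (hh : IsSelfAdjoint h) (c d : ℝ) :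
    spectralCut h c * spectralCut h d = spectralCut h (max c d) := by
  have hcomm : Commute (spectralCut h c) (spectralCut h d) :=
    commute_spectralCut hh (commute_spectralCut hh (.refl h)).symm
  obtain hcd | hdc := le_total c d
  · rw [hcomm.eq, spectralCut_mul_spectralCut_of_le hcd, max_eq_right hcd]
  · rw [spectralCut_mul_spectralCut_of_le hdc, max_eq_left hdc]

theorem cfc_mul_one_sub_spectralCut {f : ℝ → ℝ} (hf : Continuous f) :
    cfc f h * (1 - spectralCut h c) =
      cfc (fun t ↦ f t - max (t - c) 0) h * (1 - spectralCut h c) := by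
  rw [cfc_sub f _ h, sub_mul, ← excess, excess_mul_one_sub_spectralCut, sub_zero]

theorem sub_smul_one_mul_spectralCut (hh : IsSelfAdjoint h) (c : ℝ) :
    (h - (c : ℂ) • 1) * spectralCut h c = excess h c := by
  set deficit := cfc (fun t : ℝ ↦ max (c - t) 0) h
  have hsplit : h - (c : ℂ) • 1 = excess h c - deficit := by
    rw [excess, ← cfc_sub _ _ h]
    trans cfc (fun t : ℝ ↦ t - c) h
    · rw [cfc_sub .., cfc_id' .., cfc_const .., Algebra.algebraMap_eq_smul_one]
      rfl
    · refine cfc_congr fun t _ ↦ ?_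
      obtain htc | hct := le_total t c
      · simp [htc]
      · simp [hct]
  have hprod : excess h c * deficit = 0 := by
    rw [excess, ← cfc_mul _ _ h, ← cfc_zero ℝ h]
    refine cfc_congr fun t _ ↦ ?_
    obtain htc | hct := le_total t c
    · simp [htc]
    · simp [hct]
  have hdeficit : deficit * spectralCut h c = 0 := by
    rw [((commute_spectralCut hh ((Commute.refl h).cfc_real _)).eq :
      deficit * spectralCut h c = spectralCut h c * deficit), spectralCut_mul_eq_zero_iff, hprod]
  rw [hsplit, sub_mul, excess_mul_spectralCut, hdeficit, sub_zero]

theorem norm_mul_one_sub_spectralCut_le (hh : 0 ≤ h) (hc : 0 ≤ c) :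
    ‖h * (1 - spectralCut h c)‖ ≤ c := by
  have hsa : IsSelfAdjoint h := .of_nonneg hh
  have hcut := cfc_mul_one_sub_spectralCut (h := h) (c := c) continuous_id
  rw [cfc_id ℝ h] at hcut
  rw [hcut]
  refine (norm_mul_le _ _).trans ((mul_le_of_le_one_right (norm_nonneg _)
    isStarProjection_spectralCut.one_sub.norm_le).trans (norm_cfc_le hc fun t ht ↦ ?_))
  have ht₀ : 0 ≤ t := spectrum_nonneg_of_nonneg hh ht
  rw [id, Real.norm_eq_abs, abs_le]
  obtain htc | hct := le_total t c
  · rw [max_eq_right (sub_nonpos.2 htc)]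
    constructor <;> linarith
  · rw [max_eq_left (sub_nonneg.2 hct)]
    constructor <;> linarith

theorem spectralCut_of_norm_le (hh : IsSelfAdjoint h) (hc : ‖h‖ ≤ c) : spectralCut h c = 0 := by
  have hexcess : excess h c = 0 := by
    rw [excess, ← cfc_zero ℝ h]
    refine cfc_congr fun t ht ↦ max_eq_right (sub_nonpos.2 ?_)
    exact (le_abs_self t).trans
      ((IsometricContinuousFunctionalCalculus.norm_spectrum_le h ht).trans hc)
  simpa [hexcess] using (spectralCut_mul_eq_zero_iff (h := h) (c := c) (X := 1)).2

theorem spectralCut_of_lt_neg_norm (hh : IsSelfAdjoint h) (hc : c < -‖h‖) :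
    spectralCut h c = 1 := by
  have hunit : IsUnit (excess h c) := (isUnit_cfc_iff _ h).2 fun t ht ↦ by
    have := neg_le_of_abs_le
      (IsometricContinuousFunctionalCalculus.norm_spectrum_le h ht)
    exact (lt_max_of_lt_left (by linarith)).ne'
  have := hunit.mul_right_eq_zero.1 excess_mul_one_sub_spectralCut
  exact (sub_eq_zero.1 this).symm

end SpectralCut

/-! ### Refining resolutions of the identity -/

section SpectralBand

variable {H : Type*} [NormedAddCommGroup H] [InnerProductSpace ℂ H] [CompleteSpace H]

/-- The spectral projection of a self-adjoint operator `h` for the interval `(a, b]`, where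
`a ≤ b`. -/
noncomputable def spectralBand (h : H →L[ℂ] H) (a b : ℝ) : H →L[ℂ] H :=
  spectralCut h a - spectralCut h b

variable {h : H →L[ℂ] H} {a b c d : ℝ}

theorem isStarProjection_spectralBand (hab : a ≤ b) :
    IsStarProjection (spectralBand h a b) :=
  isStarProjection_spectralCut.sub_of_mul_eq_left isStarProjection_spectralCut <| by
    rw [spectralCut_mul_spectralCut_of_le hab]

theorem commute_spectralBand (hh : IsSelfAdjoint h) {W : H →L[ℂ] H} (hW : Commute W h) :
    Commute W (spectralBand h a b) :=
  (commute_spectralCut hh hW).sub_right (commute_spectralCut hh hW)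

theorem spectralBand_mul_spectralBand (hh : IsSelfAdjoint h) :
    spectralBand h a b * spectralBand h c d =
      spectralCut h (max a c) - spectralCut h (max a d) -
        (spectralCut h (max b c) - spectralCut h (max b d)) := by
  simp only [spectralBand, sub_mul, mul_sub, spectralCut_mul_spectralCut hh]
  abel

theorem spectralBand_mul_spectralBand_eq_zero_of_le (hh : IsSelfAdjoint h) (hab : a ≤ b)
    (hbc : b ≤ c) (hcd : c ≤ d) : spectralBand h a b * spectralBand h c d = 0 := by
  rw [spectralBand_mul_spectralBand hh, max_eq_right hbc, max_eq_right (hbc.trans hcd),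
    max_eq_right (hab.trans hbc), max_eq_right (hab.trans (hbc.trans hcd)), sub_self]

theorem spectralBand_mul_spectralBand_eq_zero_of_ge (hh : IsSelfAdjoint h) (hab : a ≤ b)
    (hda : d ≤ a) (hcd : c ≤ d) : spectralBand h a b * spectralBand h c d = 0 := by
  rw [(commute_spectralBand hh (commute_spectralBand hh (.refl h)).symm).eq,
    spectralBand_mul_spectralBand_eq_zero_of_le hh hcd hda hab]

theorem spectralBand_mul_spectralBand_of_subset (hh : IsSelfAdjoint h) (hab : a ≤ b)
    (hca : c ≤ a) (hbd : b ≤ d) :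
    spectralBand h a b * spectralBand h c d = spectralBand h a b := by
  rw [spectralBand_mul_spectralBand hh, max_eq_left hca, max_eq_right (hab.trans hbd),
    max_eq_left (hca.trans hab), max_eq_right hbd, sub_sub_sub_cancel_right, spectralBand]

theorem norm_sub_smul_one_mul_spectralBand_le (hh : IsSelfAdjoint h) (hab : a ≤ b) :
    ‖(h - (a : ℂ) • 1) * spectralBand h a b‖ ≤ b - a := by
  have hband : spectralBand h a b = spectralCut h a * (1 - spectralCut h b) := by
    rw [spectralBand, mul_sub, mul_one, spectralCut_mul_spectralCut hh, max_eq_right hab]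
  rw [hband, ← mul_assoc, sub_smul_one_mul_spectralCut hh, excess,
    cfc_mul_one_sub_spectralCut (by fun_prop)]
  refine (norm_mul_le _ _).trans ((mul_le_of_le_one_right (norm_nonneg _)
    isStarProjection_spectralCut.one_sub.norm_le).trans
      (norm_cfc_le (sub_nonneg.2 hab) fun t _ ↦ ?_))
  calc |max (t - a) 0 - max (t - b) 0| ≤ |t - a - (t - b)| := abs_max_sub_max_le_abs _ _ _
    _ = b - a := by rw [sub_sub_sub_cancel_left, abs_of_nonneg (sub_nonneg.2 hab)]

end SpectralBand

/-- A sequence of finite orthogonal decompositions of the identity of `H`, indexed by `n`, in which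
every projection of a later stage lies under one projection of each earlier stage. -/
structure RefiningResolution (H : Type*) [NormedAddCommGroup H] [InnerProductSpace ℂ H]
    [CompleteSpace H] where
  Cell : ℕ → Type
  [fintypeCell : ∀ n, Fintype (Cell n)]
  proj : ∀ n, Cell n → H →L[ℂ] H
  isStarProjection_proj : ∀ n j, IsStarProjection (proj n j)
  proj_mul_proj_of_ne : ∀ {n i j}, i ≠ j → proj n i * proj n j = 0
  sum_proj : ∀ n, ∑ j, proj n j = 1
  proj_mul_proj_of_le : ∀ {n m}, n ≤ m → ∀ j i,
    proj m j * proj n i = 0 ∨ proj m j * proj n i = proj m j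

attribute [instance] RefiningResolution.fintypeCell

namespace RefiningResolution

variable {H : Type*} [NormedAddCommGroup H] [InnerProductSpace ℂ H] [CompleteSpace H]

/-- The `j`-th of the points that cut `[-r, r]` into `2 ^ n` equal intervals. -/
noncomputable def dyadicPoint (r : ℝ) (n j : ℕ) : ℝ := 2 * r * (j / 2 ^ n) - r

theorem dyadicPoint_mono {r : ℝ} (hr : 0 ≤ r) (n : ℕ) : Monotone (dyadicPoint r n) := by
  intro i j hij
  unfold dyadicPoint
  gcongr

theorem dyadicPoint_mul_two_pow (r : ℝ) (n t j : ℕ) :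
    dyadicPoint r (n + t) (j * 2 ^ t) = dyadicPoint r n j := by
  simp only [dyadicPoint, pow_add, Nat.cast_mul, Nat.cast_pow, Nat.cast_ofNat]
  rw [mul_div_mul_right _ _ (by positivity)]

/-- The dyadic spectral projections of a self-adjoint operator `h`. The spectrum of `h` lies in
the interior of the subdivided interval, so the half-open intervals cover it. -/
noncomputable def dyadic (h : H →L[ℂ] H) (hh : IsSelfAdjoint h) : RefiningResolution H where
  Cell n := Fin (2 ^ n)
  proj n j := spectralBand h (dyadicPoint (‖h‖ + 1) n j) (dyadicPoint (‖h‖ + 1) n (j + 1))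
  isStarProjection_proj n j :=
    isStarProjection_spectralBand (dyadicPoint_mono (by positivity) n (Nat.le_succ _))
  proj_mul_proj_of_ne {n i j} hij := by
    have mono := dyadicPoint_mono (r := ‖h‖ + 1) (by positivity) n
    rcases Nat.lt_or_gt_of_ne (Fin.val_ne_of_ne hij) with hlt | hgt
    · exact spectralBand_mul_spectralBand_eq_zero_of_le hh (mono (Nat.le_succ _)) (mono hlt)
        (mono (Nat.le_succ _))
    · exact spectralBand_mul_spectralBand_eq_zero_of_ge hh (mono (Nat.le_succ _)) (mono hgt)
        (mono (Nat.le_succ _))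
  sum_proj n := by
    have hright : dyadicPoint (‖h‖ + 1) n (2 ^ n) = ‖h‖ + 1 := by simp [dyadicPoint]; ring
    have hleft : dyadicPoint (‖h‖ + 1) n 0 = -(‖h‖ + 1) := by simp [dyadicPoint]
    rw [Fin.sum_univ_eq_sum_range fun j ↦ spectralBand h (dyadicPoint (‖h‖ + 1) n j)
      (dyadicPoint (‖h‖ + 1) n (j + 1))]
    simp only [spectralBand]
    rw [Finset.sum_range_sub' (fun j ↦ spectralCut h (dyadicPoint (‖h‖ + 1) n j)), hleft, hright,
      spectralCut_of_lt_neg_norm hh (by linarith), spectralCut_of_norm_le hh (by linarith),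
      sub_zero]
  proj_mul_proj_of_le {n m} hnm j i := by
    obtain ⟨t, rfl⟩ := Nat.exists_eq_add_of_le hnm
    have mono := dyadicPoint_mono (r := ‖h‖ + 1) (by positivity) (n + t)
    rw [← dyadicPoint_mul_two_pow _ n t i, ← dyadicPoint_mul_two_pow _ n t (i + 1)]
    have hcoarse : (i : ℕ) * 2 ^ t ≤ (i + 1) * 2 ^ t := Nat.mul_le_mul_right _ (Nat.le_succ _)
    rcases lt_or_ge (j : ℕ) (i * 2 ^ t) with hlt | hge
    · exact .inl (spectralBand_mul_spectralBand_eq_zero_of_le hh (mono (Nat.le_succ _))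
        (mono hlt) (mono hcoarse))
    rcases lt_or_ge (j : ℕ) ((i + 1) * 2 ^ t) with hlt' | hge'
    · exact .inr (spectralBand_mul_spectralBand_of_subset hh (mono (Nat.le_succ _))
        (mono hge) (mono hlt'))
    · exact .inl (spectralBand_mul_spectralBand_eq_zero_of_ge hh (mono (Nat.le_succ _))
        (mono hge') (mono hcoarse))

theorem exists_norm_sub_smul_mul_dyadic_proj_le {h : H →L[ℂ] H} (hh : IsSelfAdjoint h) (n : ℕ)
    (j : (dyadic h hh).Cell n) :
    ∃ c : ℂ, ‖(h - c • 1) * (dyadic h hh).proj n j‖ ≤ 2 * (‖h‖ + 1) / 2 ^ n := by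
  obtain ⟨j, hj⟩ := j
  refine ⟨_, (norm_sub_smul_one_mul_spectralBand_le hh
    (dyadicPoint_mono (by positivity) n (Nat.le_succ j))).trans_eq ?_⟩
  simp only [dyadicPoint, Nat.succ_eq_add_one]
  push_cast
  ring

/-- The common refinement of two commuting resolutions. -/
noncomputable def inf (R S : RefiningResolution H)
    (hRS : ∀ n i m j, Commute (R.proj n i) (S.proj m j)) : RefiningResolution H where
  Cell n := R.Cell n × S.Cell n
  proj n j := R.proj n j.1 * S.proj n j.2
  isStarProjection_proj n j :=
    (R.isStarProjection_proj n j.1).mul (S.isStarProjection_proj n j.2) (hRS _ _ _ _)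
  proj_mul_proj_of_ne {n i j} hij := by
    rw [(hRS n j.1 n i.2).symm.mul_mul_mul_comm]
    by_cases h : i.1 = j.1
    · rw [S.proj_mul_proj_of_ne fun h' ↦ hij (Prod.ext h h'), mul_zero]
    · rw [R.proj_mul_proj_of_ne h, zero_mul]
  sum_proj n := by
    simp only [Fintype.sum_prod_type, ← Finset.mul_sum, S.sum_proj, mul_one, R.sum_proj]
  proj_mul_proj_of_le {n m} hnm j i := by
    rw [(hRS n i.1 m j.2).symm.mul_mul_mul_comm]
    rcases R.proj_mul_proj_of_le hnm j.1 i.1 with h | h <;>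
      rcases S.proj_mul_proj_of_le hnm j.2 i.2 with h' | h' <;> simp [h, h']

/-- The resolution with the single projection `1` at every stage. -/
noncomputable def trivial : RefiningResolution H where
  Cell _ := Unit
  proj _ _ := 1
  isStarProjection_proj _ _ := .one _
  proj_mul_proj_of_ne hij := absurd rfl hij
  sum_proj _ := by simp
  proj_mul_proj_of_le _ _ _ := by simp

/-- At stage `n` the operator `a` is within `K / 2 ^ n` of a scalar on every cell. -/
def NearlyScalar (R : RefiningResolution H) (a : H →L[ℂ] H) (K : ℝ) : Prop :=
  ∀ n j, ∃ c : ℂ, ‖(a - c • 1) * R.proj n j‖ ≤ K / 2 ^ n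

variable {R S : RefiningResolution H} {a b : H →L[ℂ] H} {K L : ℝ}

theorem NearlyScalar.mono (ha : R.NearlyScalar a K) (hKL : K ≤ L) : R.NearlyScalar a L :=
  fun n j ↦ (ha n j).imp fun _ hc ↦ hc.trans (by gcongr)

theorem NearlyScalar.add_I_smul (ha : R.NearlyScalar a K) (hb : R.NearlyScalar b L) :
    R.NearlyScalar (a + Complex.I • b) (K + L) := by
  intro n j
  obtain ⟨c, hc⟩ := ha n j
  obtain ⟨d, hd⟩ := hb n j
  refine ⟨c + Complex.I * d, ?_⟩
  have hsplit : (a + Complex.I • b - (c + Complex.I * d) • 1) * R.proj n j =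
      (a - c • 1) * R.proj n j + Complex.I • ((b - d • 1) * R.proj n j) := by
    rw [← smul_mul_assoc, ← add_mul]
    congr 1
    module
  rw [hsplit, add_div]
  exact norm_add_le_of_le hc (by rwa [norm_smul, Complex.norm_I, one_mul])

theorem nearlyScalar_one (hK : 0 ≤ K) : R.NearlyScalar 1 K :=
  fun n j ↦ ⟨1, by simpa using by positivity⟩

theorem norm_proj_le (R : RefiningResolution H) (n : ℕ) (j : R.Cell n) : ‖R.proj n j‖ ≤ 1 :=
  (R.isStarProjection_proj n j).norm_le

theorem NearlyScalar.inf_left {hRS : ∀ n i m j, Commute (R.proj n i) (S.proj m j)}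
    (ha : R.NearlyScalar a K) : (R.inf S hRS).NearlyScalar a K := by
  intro n j
  obtain ⟨c, hc⟩ := ha n j.1
  refine ⟨c, ?_⟩
  change ‖(a - c • 1) * (R.proj n j.1 * S.proj n j.2)‖ ≤ _
  rw [← mul_assoc]
  exact (norm_mul_le _ _).trans
    ((mul_le_of_le_one_right (norm_nonneg _) (S.norm_proj_le n j.2)).trans hc)

theorem NearlyScalar.inf_right {hRS : ∀ n i m j, Commute (R.proj n i) (S.proj m j)}
    (ha : S.NearlyScalar a K) : (R.inf S hRS).NearlyScalar a K := by
  intro n j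
  obtain ⟨c, hc⟩ := ha n j.2
  refine ⟨c, ?_⟩
  change ‖(a - c • 1) * (R.proj n j.1 * S.proj n j.2)‖ ≤ _
  rw [(hRS _ _ _ _).eq, ← mul_assoc]
  exact (norm_mul_le _ _).trans
    ((mul_le_of_le_one_right (norm_nonneg _) (R.norm_proj_le n j.1)).trans hc)

theorem exists_nearlyScalar_of_isStarNormal (ha : IsStarNormal a) :
    ∃ R : RefiningResolution H, (∀ n, Fintype.card (R.Cell n) = (2 ^ n) ^ 2) ∧
      (∀ W, Commute W a → ∀ n j, Commute W (R.proj n j)) ∧ ∃ K, R.NearlyScalar a K := by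
  set x := (realPart a : H →L[ℂ] H) with hx
  set y := (imaginaryPart a : H →L[ℂ] H) with hy
  have hx_comm {W : H →L[ℂ] H} (hW : Commute W a) : Commute W x := by
    rw [hx, realPart_apply_coe]
    exact (hW.add_right (ha.commute_star_right hW)).smul_right _
  have hy_comm {W : H →L[ℂ] H} (hW : Commute W a) : Commute W y := by
    rw [hy, imaginaryPart_apply_coe]
    exact ((hW.sub_right (ha.commute_star_right hW)).smul_right _).smul_right _
  set R := dyadic x (realPart a).2
  set S := dyadic y (imaginaryPart a).2
  have hR {W : H →L[ℂ] H} (hW : Commute W a) n j : Commute W (R.proj n j) :=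
    commute_spectralBand (realPart a).2 (hx_comm hW)
  have hS {W : H →L[ℂ] H} (hW : Commute W a) n j : Commute W (S.proj n j) :=
    commute_spectralBand (imaginaryPart a).2 (hy_comm hW)
  have hRS n i m j : Commute (R.proj n i) (S.proj m j) := hS (hR (.refl a) n i).symm m j
  refine ⟨R.inf S hRS, fun n ↦ ?_, fun W hW n j ↦ (hR hW n j.1).mul_right (hS hW n j.2), ?_⟩
  · exact (Fintype.card_prod (Fin (2 ^ n)) (Fin (2 ^ n))).trans (by simp [sq])
  · have hxR : R.NearlyScalar x _ := exists_norm_sub_smul_mul_dyadic_proj_le (realPart a).2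
    have hyS : S.NearlyScalar y _ := exists_norm_sub_smul_mul_dyadic_proj_le (imaginaryPart a).2
    exact ⟨_, realPart_add_I_smul_imaginaryPart a ▸ hxR.inf_left.add_I_smul hyS.inf_right⟩

theorem exists_nearlyScalar_of_commute {ι : Type*} (s : Finset ι) {a : ι → H →L[ℂ] H}
    (ha : ∀ i, IsStarNormal (a i)) (hcomm : ∀ i j, Commute (a i) (a j)) :
    ∃ R : RefiningResolution H, (∀ n, Fintype.card (R.Cell n) = ((2 ^ n) ^ s.card) ^ 2) ∧
      (∀ W, (∀ i ∈ s, Commute W (a i)) → ∀ n j, Commute W (R.proj n j)) ∧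
      ∃ K, ∀ i ∈ s, R.NearlyScalar (a i) K := by
  classical
  induction s using Finset.induction_on with
  | empty =>
    exact ⟨trivial, fun _ ↦ Fintype.card_unit.trans (by simp), fun W _ _ _ ↦ .one_right W, 0,
      by simp⟩
  | insert l s hl ih =>
    obtain ⟨R, hRcard, hRcomm, K, hK⟩ := ih
    obtain ⟨S, hScard, hScomm, L, hL⟩ := exists_nearlyScalar_of_isStarNormal (ha l)
    have hRS n i m j : Commute (R.proj n i) (S.proj m j) :=
      hScomm _ (hRcomm _ (fun i' _ ↦ hcomm l i') n i).symm m j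
    refine ⟨R.inf S hRS, fun n ↦ ?_, fun W hW n j ↦ ?_, max K L, fun i hi ↦ ?_⟩
    · rw [Finset.card_insert_of_notMem hl, pow_succ _ s.card, mul_pow, ← hRcard, ← hScard]
      exact Fintype.card_prod _ _
    · exact (hRcomm W (fun i hi ↦ hW i (Finset.mem_insert_of_mem hi)) n j.1).mul_right
        (hScomm W (hW l (Finset.mem_insert_self l s)) n j.2)
    · obtain rfl | hi := Finset.mem_insert.1 hi
      · exact hL.inf_right.mono (le_max_right _ _)
      · exact (hK i hi).inf_left.mono (le_max_left _ _)

end RefiningResolution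

/-! ### Hilbert-Schmidt sums -/

section Subspaces

variable {H I : Type*} [NormedAddCommGroup H] [InnerProductSpace ℂ H] [Fintype I]
  {U V : Submodule ℂ H} [U.HasOrthogonalProjection] [V.HasOrthogonalProjection]

theorem sum_norm_inner_sq_eq_norm_starProjection_sq (u : OrthonormalBasis I ℂ U) (g : H) :
    ∑ i, ‖inner ℂ (u i : H) g‖ ^ 2 = ‖U.starProjection g‖ ^ 2 := by
  rw [Submodule.starProjection_apply, Submodule.norm_coe, ← u.sum_sq_norm_inner_right]
  simp

theorem norm_starProjection_sub_starProjection_sq (hUV : U ≤ V) (g : H) :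
    ‖V.starProjection g - U.starProjection g‖ ^ 2 =
      ‖V.starProjection g‖ ^ 2 - ‖U.starProjection g‖ ^ 2 := by
  have horth : inner ℂ (V.starProjection g - U.starProjection g) (U.starProjection g) = 0 := by
    have hmem := U.starProjection_apply_mem g
    rw [inner_sub_left, V.inner_starProjection_left_eq_right,
      V.starProjection_eq_self_iff.2 (hUV hmem), U.inner_starProjection_left_eq_right,
      U.starProjection_eq_self_iff.2 hmem, sub_self]
  have hpyth := norm_add_sq_eq_norm_sq_add_norm_sq_of_inner_eq_zero _ _ horth
  rw [sub_add_cancel] at hpyth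
  linarith

end Subspaces

section HilbertSchmidt

variable {H H₂ : Type*} [NormedAddCommGroup H] [InnerProductSpace ℂ H] [CompleteSpace H]
  [NormedAddCommGroup H₂] [InnerProductSpace ℂ H₂] [CompleteSpace H₂]
  {I J L : Type*} [Fintype I] [Fintype J] [Fintype L]

theorem hasSum_sum_norm_inner_adjoint_sq {κ : Type*} (b : HilbertBasis κ ℂ H₂)
    (S : H →L[ℂ] H₂) (w : J → H) :
    HasSum (fun k ↦ ∑ j, ‖inner ℂ (w j) (adjoint S (b k))‖ ^ 2) (∑ j, ‖S (w j)‖ ^ 2) := by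
  refine hasSum_sum fun j _ ↦ ?_
  have hterm (k : κ) : inner ℂ (S (w j)) (b k) * inner ℂ (b k) (S (w j)) =
      ((‖inner ℂ (w j) (adjoint S (b k))‖ ^ 2 : ℝ) : ℂ) := by
    rw [adjoint_inner_right, ← inner_conj_symm (b k), Complex.mul_conj, Complex.normSq_eq_norm_sq]
  have hparseval := b.hasSum_inner_mul_inner (S (w j)) (S (w j))
  simp only [hterm, inner_self_eq_norm_sq_to_K] at hparseval
  rw [← Complex.hasSum_ofReal, Complex.ofReal_pow]
  exact hparseval

theorem sum_norm_apply_sq_le_of_sum_norm_inner_sq_le {w : L → H} {u : I → H} {v : J → H} {t : ℝ}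
    (h : ∀ g, ∑ l, ‖inner ℂ (w l) g‖ ^ 2 ≤
      t * (∑ j, ‖inner ℂ (v j) g‖ ^ 2 - ∑ i, ‖inner ℂ (u i) g‖ ^ 2)) (S : H →L[ℂ] H₂) :
    ∑ l, ‖S (w l)‖ ^ 2 ≤ t * (∑ j, ‖S (v j)‖ ^ 2 - ∑ i, ‖S (u i)‖ ^ 2) := by
  obtain ⟨_, b, -⟩ := exists_hilbertBasis ℂ H₂
  exact hasSum_le (fun k ↦ h _) (hasSum_sum_norm_inner_adjoint_sq b S w)
    (((hasSum_sum_norm_inner_adjoint_sq b S v).sub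
      (hasSum_sum_norm_inner_adjoint_sq b S u)).mul_left t)

theorem sum_norm_inner_apply_sq_le {e : L → H} (he : Orthonormal ℂ e) {R : H →L[ℂ] H} {η : ℝ}
    (hR : ‖R‖ ≤ η) (g : H) : ∑ l, ‖inner ℂ (R (e l)) g‖ ^ 2 ≤ η ^ 2 * ‖g‖ ^ 2 := by
  simp only [← adjoint_inner_right R]
  calc ∑ l, ‖inner ℂ (e l) (adjoint R g)‖ ^ 2 ≤ ‖adjoint R g‖ ^ 2 :=
        he.sum_inner_products_le _
    _ ≤ (η * ‖g‖) ^ 2 := by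
        gcongr
        exact le_of_opNorm_le _ (by rwa [LinearIsometryEquiv.norm_map]) g
    _ = η ^ 2 * ‖g‖ ^ 2 := mul_pow _ _ _

variable {U V : Submodule ℂ H} [U.HasOrthogonalProjection] [V.HasOrthogonalProjection]

theorem sum_norm_apply_starProjection_sq_le (hUV : U ≤ V) (u : OrthonormalBasis I ℂ U)
    (v : OrthonormalBasis J ℂ V) {e : L → H} (he : Orthonormal ℂ e) {R : H →L[ℂ] H} {η : ℝ}
    (hR : ‖R‖ ≤ η) (hRU : ∀ l, R (e l) ∈ Uᗮ) (S : H →L[ℂ] H₂) :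
    ∑ l, ‖S (V.starProjection (R (e l)))‖ ^ 2 ≤
      η ^ 2 * (∑ j, ‖S (v j)‖ ^ 2 - ∑ i, ‖S (u i)‖ ^ 2) := by
  refine sum_norm_apply_sq_le_of_sum_norm_inner_sq_le
    (w := fun l ↦ V.starProjection (R (e l))) (fun g ↦ ?_) S
  rw [sum_norm_inner_sq_eq_norm_starProjection_sq u, sum_norm_inner_sq_eq_norm_starProjection_sq v,
    ← norm_starProjection_sub_starProjection_sq hUV]
  convert sum_norm_inner_apply_sq_le he hR (V.starProjection g - U.starProjection g) using 4 with l
  rw [inner_sub_right, U.inner_left_of_mem_orthogonal (U.starProjection_apply_mem g) (hRU l),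
    sub_zero, V.inner_starProjection_left_eq_right]

theorem sum_norm_apply_sub_starProjection_sq_le (hUV : U ≤ V) (u : OrthonormalBasis I ℂ U)
    (v : OrthonormalBasis J ℂ V) (S : H →L[ℂ] H₂) :
    ∑ j, ‖S (v j - U.starProjection (v j))‖ ^ 2 ≤ ∑ j, ‖S (v j)‖ ^ 2 - ∑ i, ‖S (u i)‖ ^ 2 := by
  have he : Orthonormal ℂ fun j ↦ (v j : H) := v.orthonormal.comp_linearIsometry V.subtypeₗᵢ
  have h := sum_norm_apply_starProjection_sq_le (R := 1 - U.starProjection) hUV u v he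
    isStarProjection_starProjection.one_sub.norm_le
    (fun j ↦ U.sub_starProjection_mem_orthogonal _) S
  have hmem (j : J) : (v j : H) - U.starProjection (v j) ∈ V :=
    V.sub_mem (v j).2 (hUV (U.starProjection_apply_mem _))
  simpa [V.starProjection_eq_self_iff.2 (hmem _)] using h

theorem sum_norm_apply_sq_mono (hUV : U ≤ V) (u : OrthonormalBasis I ℂ U)
    (v : OrthonormalBasis J ℂ V) (S : H →L[ℂ] H₂) :
    ∑ i, ‖S (u i)‖ ^ 2 ≤ ∑ j, ‖S (v j)‖ ^ 2 :=
  sub_nonneg.1 <| (Finset.sum_nonneg fun _ _ ↦ by positivity).trans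
    (sum_norm_apply_sub_starProjection_sq_le hUV u v S)

theorem sum_inner_apply_starProjection_eq (hUV : U ≤ V) (u : OrthonormalBasis I ℂ U)
    (v : OrthonormalBasis J ℂ V) (R D : H →L[ℂ] H) :
    ∑ j, inner ℂ (R (v j)) (D (U.starProjection (v j))) = ∑ i, inner ℂ (R (u i)) (D (u i)) := by
  have hexpand (j : J) : inner ℂ (R (v j)) (D (U.starProjection (v j))) =
      ∑ i, inner ℂ (u i : H) (v j) * inner ℂ (v j : H) (adjoint R (D (u i))) := by
    simp [u.starProjection_eq_sum_rankOne, map_sum, adjoint_inner_right]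
  simp only [hexpand]
  rw [Finset.sum_comm]
  refine Finset.sum_congr rfl fun i _ ↦ ?_
  rw [← adjoint_inner_right]
  simpa using v.sum_inner_mul_inner ⟨u i, hUV (u i).2⟩
    (V.orthogonalProjectionOnto (adjoint R (D (u i))))

end HilbertSchmidt

/-! ### Vanishing along almost invariant subspaces -/

section OffCorner

variable {H : Type*} [NormedAddCommGroup H] [InnerProductSpace ℂ H]

/-- The corner `(1 - P) A P` of `A`, with `P` the orthogonal projection onto `U`: it measures how
far `A` is from leaving `U` invariant. -/
noncomputable def offCorner (U : Submodule ℂ H) [U.HasOrthogonalProjection] (A : H →L[ℂ] H) :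
    H →L[ℂ] H :=
  (1 - U.starProjection) * A * U.starProjection

variable {U V : Submodule ℂ H} [U.HasOrthogonalProjection] [V.HasOrthogonalProjection]
  {A : H →L[ℂ] H} {x : H}

theorem offCorner_apply_of_mem (hx : x ∈ U) :
    offCorner U A x = A x - U.starProjection (A x) := by
  simp [offCorner, U.starProjection_eq_self_iff.2 hx]

theorem offCorner_apply_mem_orthogonal (hx : x ∈ U) : offCorner U A x ∈ Uᗮ := by
  rw [offCorner_apply_of_mem hx]
  exact U.sub_starProjection_mem_orthogonal _

theorem offCorner_apply_sub_starProjection (hUV : U ≤ V) (hx : x ∈ U) :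
    offCorner U A x - V.starProjection (offCorner U A x) = offCorner V A x := by
  rw [offCorner_apply_of_mem hx, offCorner_apply_of_mem (hUV hx), map_sub,
    V.starProjection_eq_self_iff.2 (hUV (U.starProjection_apply_mem _))]
  abel

theorem offCorner_sub_of_mapsTo {M : H →L[ℂ] H} (hM : ∀ x ∈ U, M x ∈ U) :
    offCorner U (A - M) = offCorner U A := by
  ext x
  have hx := U.starProjection_eq_self_iff.2 (hM _ (U.starProjection_apply_mem x))
  simp [offCorner, hx]

theorem norm_offCorner_le [CompleteSpace H] : ‖offCorner U A‖ ≤ ‖A‖ :=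
  calc ‖offCorner U A‖ ≤ ‖1 - U.starProjection‖ * ‖A‖ * ‖U.starProjection‖ :=
        (norm_mul_le _ _).trans (by gcongr; exact norm_mul_le _ _)
    _ ≤ 1 * ‖A‖ * 1 := by
        gcongr
        exacts [isStarProjection_starProjection.one_sub.norm_le,
          isStarProjection_starProjection.norm_le]
    _ = ‖A‖ := by ring

variable {W : ℕ → Submodule ℂ H} [∀ n, (W n).HasOrthogonalProjection] {ε : ℕ → ℝ}

theorem tendsto_starProjection_offCorner_apply (hW : Monotone W) (hε : Tendsto ε atTop (𝓝 0))
    (hA : ∀ n, ‖offCorner (W n) A‖ ≤ ε n) {n : ℕ} (hx : x ∈ W n) :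
    Tendsto (fun m ↦ (W m).starProjection (offCorner (W n) A x)) atTop
      (𝓝 (offCorner (W n) A x)) := by
  rw [tendsto_iff_norm_sub_tendsto_zero]
  refine squeeze_zero' (.of_forall fun _ ↦ norm_nonneg _) ?_ (by simpa using hε.mul_const ‖x‖)
  filter_upwards [eventually_ge_atTop n] with m hm
  rw [norm_sub_rev, offCorner_apply_sub_starProjection (hW hm) hx]
  exact le_of_opNorm_le _ (hA m) x

variable {H₂ : Type*} [CompleteSpace H] [NormedAddCommGroup H₂] [InnerProductSpace ℂ H₂]
  [CompleteSpace H₂] {J : ℕ → Type*} [∀ n, Fintype (J n)]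

theorem sum_norm_apply_offCorner_sq_le (hW : Monotone W) (hε : Tendsto ε atTop (𝓝 0))
    (hA : ∀ n, ‖offCorner (W n) A‖ ≤ ε n) (u : ∀ n, OrthonormalBasis (J n) ℂ (W n))
    {S : H →L[ℂ] H₂} {s : ℝ} (hs : ∀ n, ∑ j, ‖S (u n j)‖ ^ 2 ≤ s) (n : ℕ) :
    ∑ j, ‖S (offCorner (W n) A (u n j))‖ ^ 2 ≤ ε n ^ 2 * (s - ∑ j, ‖S (u n j)‖ ^ 2) := by
  have hlim : Tendsto
      (fun m ↦ ∑ j, ‖S ((W m).starProjection (offCorner (W n) A (u n j)))‖ ^ 2) atTop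
      (𝓝 (∑ j, ‖S (offCorner (W n) A (u n j))‖ ^ 2)) :=
    tendsto_finsetSum _ fun j _ ↦ (((S.continuous.tendsto _).comp
      (tendsto_starProjection_offCorner_apply hW hε hA (u n j).2)).norm).pow 2
  refine le_of_tendsto hlim ?_
  filter_upwards [eventually_ge_atTop n] with m hm
  have he : Orthonormal ℂ fun j ↦ (u n j : H) :=
    (u n).orthonormal.comp_linearIsometry (W n).subtypeₗᵢ
  refine (sum_norm_apply_starProjection_sq_le (hW hm) (u n) (u m) he (hA n)
    (fun j ↦ offCorner_apply_mem_orthogonal (u n j).2) S).trans ?_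
  gcongr
  exact hs m

theorem norm_sum_inner_offCorner_apply_starProjection_le {I J : Type*} [Fintype I] [Fintype J]
    (hUV : U ≤ V) (u : OrthonormalBasis I ℂ U) (v : OrthonormalBasis J ℂ V) (D : H →L[ℂ] H) :
    ‖∑ j, inner ℂ (offCorner V A (v j)) (D (U.starProjection (v j)))‖ ≤
      Fintype.card I * (‖offCorner V A‖ * ‖D‖) := by
  rw [sum_inner_apply_starProjection_eq hUV u v, ← nsmul_eq_mul]
  refine (norm_sum_le _ _).trans (Finset.sum_le_card_nsmul _ _ _ fun i _ ↦ ?_)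
  have hunit : ‖(u i : H)‖ = 1 := u.orthonormal.1 i
  refine (norm_inner_le_norm _ _).trans ?_
  gcongr <;> simpa [hunit] using le_opNorm _ (u i : H)

end OffCorner

theorem sum_mul_le_mul_sqrt {J : Type*} [Fintype J] {f g : J → ℝ} {ε a b : ℝ}
    (ha : 0 ≤ a) (hf : ε ^ 2 * ∑ j, f j ^ 2 ≤ a ^ 2) (hg : ∑ j, g j ^ 2 ≤ ε ^ 2 * b) :
    ∑ j, f j * g j ≤ a * √b :=
  calc ∑ j, f j * g j ≤ √(∑ j, f j ^ 2) * √(∑ j, g j ^ 2) := Real.sum_mul_le_sqrt_mul_sqrt _ f g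
    _ ≤ √(∑ j, f j ^ 2) * √(ε ^ 2 * b) := by gcongr
    _ = √(ε ^ 2 * ∑ j, f j ^ 2) * √b := by
        rw [Real.sqrt_mul (sq_nonneg ε), Real.sqrt_mul (sq_nonneg ε)]
        ring
    _ ≤ a * √b := by
        gcongr
        exact Real.sqrt_le_iff.2 ⟨ha, hf⟩

theorem limit_nonpos_of_le_mul_sqrt_add_mul_sqrt {h : ℕ → ℝ} {s C : ℝ}
    (hlim : Tendsto h atTop (𝓝 s)) {e : ℕ → ℕ → ℝ} (he : ∀ m, Tendsto (e m) atTop (𝓝 0))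
    (hle : ∀ m n, m ≤ n → h n ≤ C * √(s - h n) + C * √(h n - h m) + e m n) : s ≤ 0 := by
  have hgap : Tendsto (fun n ↦ C * √(s - h n)) atTop (𝓝 0) := by
    simpa using ((hlim.const_sub s).sqrt).const_mul C
  refine ge_of_tendsto' hgap fun m ↦ le_of_tendsto_of_tendsto hlim ?_
    ((eventually_ge_atTop m).mono fun n hn ↦ hle m n hn)
  simpa using (hgap.add (((hlim.sub_const (h m)).sqrt).const_mul C)).add (he m)

section Vanishing

variable {ι : Type*} [Fintype ι] {H H₂ : Type*} [NormedAddCommGroup H] [InnerProductSpace ℂ H]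
  [NormedAddCommGroup H₂] [InnerProductSpace ℂ H₂] [CompleteSpace H₂]
  {A : ι → H →L[ℂ] H} {B : ι → H₂ →L[ℂ] H₂}
  {Y Z : H →L[ℂ] H₂}

/-- On an approximate joint eigenvector `v` of the `A i`, the operator `Δ` acts as the normal
operator `N = ∑ c i • B i`. As `N` and its adjoint have the same norm on `Z v`, the relation
`N Z v ≈ 0` makes `⟪N Y v, Z v⟫` small. -/
theorem norm_apply_sq_le_of_elementaryOperator_apply_eq (hB : ∀ i, IsStarNormal (B i))
    (hBcomm : ∀ i j, Commute (B i) (B j)) (hYZ : elementaryOperator A B Y = Z)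
    (hZ : elementaryOperator A B Z = 0) {c : ι → ℂ} {v : H} {w : ι → H}
    (hv : ∀ i, A i v = c i • v + w i) :
    ‖Z v‖ ^ 2 ≤ ∑ i, ‖B i‖ * (‖Y v‖ * ‖Z (w i)‖) +
      ∑ i, (inner ℂ (B i (Y (w i))) (Z v)).re := by
  set N := ∑ i, c i • B i
  have hN : IsStarNormal N := isStarNormal_sum_smul hB hBcomm c
  have hZv : Z v = N (Y v) + ∑ i, B i (Y (w i)) := by
    rw [← elementaryOperator_apply_apply_of_eq_smul_add hv, hYZ]
  have hNZv : N (Z v) = -∑ i, B i (Z (w i)) := by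
    rw [eq_neg_iff_add_eq_zero, ← elementaryOperator_apply_apply_of_eq_smul_add hv, hZ, zero_apply]
  have hmain : (inner ℂ (N (Y v)) (Z v)).re ≤ ∑ i, ‖B i‖ * (‖Y v‖ * ‖Z (w i)‖) :=
    calc (inner ℂ (N (Y v)) (Z v)).re ≤ ‖inner ℂ (Y v) (adjoint N (Z v))‖ := by
          rw [adjoint_inner_right]
          exact Complex.re_le_norm _
      _ ≤ ‖Y v‖ * ‖∑ i, B i (Z (w i))‖ := by
          rw [← norm_neg (∑ i, _), ← hNZv, isStarNormal_iff_norm_eq_adjoint.1 hN]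
          exact norm_inner_le_norm _ _
      _ ≤ ‖Y v‖ * ∑ i, ‖B i‖ * ‖Z (w i)‖ := by
          gcongr
          exact norm_sum_le_of_le _ fun i _ ↦ le_opNorm _ _
      _ = ∑ i, ‖B i‖ * (‖Y v‖ * ‖Z (w i)‖) := by
          rw [Finset.mul_sum]
          exact Finset.sum_congr rfl fun i _ ↦ mul_left_comm _ _ _
  calc ‖Z v‖ ^ 2 = (inner ℂ (Z v) (Z v)).re := (inner_self_eq_norm_sq (𝕜 := ℂ) _).symm
    _ = (inner ℂ (N (Y v)) (Z v)).re + ∑ i, (inner ℂ (B i (Y (w i))) (Z v)).re := by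
        rw [← Complex.re_sum, ← sum_inner, ← Complex.add_re, ← inner_add_left, ← hZv]
    _ ≤ _ := by gcongr

variable [CompleteSpace H]

theorem re_inner_apply_le_add (b : H₂ →L[ℂ] H₂) (Y Z : H →L[ℂ] H₂) (v v₀ w : H) :
    (inner ℂ (b (Y w)) (Z v)).re ≤ ‖b‖ * (‖Y w‖ * ‖Z (v - v₀)‖) +
      (inner ℂ w ((adjoint (b ∘L Y) ∘L Z) v₀)).re := by
  have hsplit : inner ℂ (b (Y w)) (Z v) =
      inner ℂ (b (Y w)) (Z (v - v₀)) + inner ℂ w ((adjoint (b ∘L Y) ∘L Z) v₀) := by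
    rw [comp_apply, adjoint_inner_right, comp_apply, ← inner_add_right, map_sub, sub_add_cancel]
  rw [hsplit, Complex.add_re, ← mul_assoc]
  gcongr
  refine (Complex.re_le_norm _).trans ((norm_inner_le_norm _ _).trans ?_)
  gcongr
  exact le_opNorm _ _

section Stages

variable (hB : ∀ i, IsStarNormal (B i)) (hBcomm : ∀ i j, Commute (B i) (B j))
  (hYZ : elementaryOperator A B Y = Z) (hZ : elementaryOperator A B Z = 0)
  {I J : Type*} [Fintype I] [Fintype J]
  {U V : Submodule ℂ H} [U.HasOrthogonalProjection] [V.HasOrthogonalProjection] (hUV : U ≤ V)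
  (u : OrthonormalBasis I ℂ U) (v : OrthonormalBasis J ℂ V)
  (hv : ∀ i j, ∃ c : ℂ, A i (v j) = c • (v j : H) + offCorner V (A i) (v j))
include hB hBcomm hYZ hZ hUV u hv

theorem sum_norm_apply_sq_le_of_stages :
    ∑ j, ‖Z (v j)‖ ^ 2 ≤ ∑ i, (‖B i‖ * ∑ j, ‖Y (v j)‖ * ‖Z (offCorner V (A i) (v j))‖ +
      ‖B i‖ * ∑ j, ‖Y (offCorner V (A i) (v j))‖ * ‖Z (v j - U.starProjection (v j))‖ +
      Fintype.card I * (‖offCorner V (A i)‖ * ‖adjoint (B i ∘L Y) ∘L Z‖)) := by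
  choose c hc using hv
  have hpoint (j : J) : ‖Z (v j)‖ ^ 2 ≤
      ∑ i, (‖B i‖ * (‖Y (v j)‖ * ‖Z (offCorner V (A i) (v j))‖) +
        ‖B i‖ * (‖Y (offCorner V (A i) (v j))‖ * ‖Z (v j - U.starProjection (v j))‖) +
        (inner ℂ (offCorner V (A i) (v j))
          ((adjoint (B i ∘L Y) ∘L Z) (U.starProjection (v j)))).re) := by
    refine (norm_apply_sq_le_of_elementaryOperator_apply_eq hB hBcomm hYZ hZ
      fun i ↦ hc i j).trans ?_
    rw [← Finset.sum_add_distrib]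
    refine Finset.sum_le_sum fun i _ ↦ ?_
    rw [add_assoc]
    gcongr
    exact re_inner_apply_le_add _ _ _ _ _ _
  refine (Finset.sum_le_sum fun j _ ↦ hpoint j).trans ?_
  rw [Finset.sum_comm]
  gcongr with i
  rw [Finset.sum_add_distrib, Finset.sum_add_distrib, ← Finset.mul_sum, ← Finset.mul_sum,
    ← Complex.re_sum]
  gcongr
  exact (Complex.re_le_norm _).trans (norm_sum_inner_offCorner_apply_starProjection_le hUV u v _)

theorem sum_norm_apply_sq_le_mul_sqrt_of_stages {ε G s : ℝ} (hG : 0 ≤ G)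
    (hA : ∀ i, ‖offCorner V (A i)‖ ≤ ε) (hYv : ε ^ 2 * ∑ j, ‖Y (v j)‖ ^ 2 ≤ G ^ 2)
    (hYw : ∀ i, ∑ j, ‖Y (offCorner V (A i) (v j))‖ ^ 2 ≤ G ^ 2)
    (hZw : ∀ i, ∑ j, ‖Z (offCorner V (A i) (v j))‖ ^ 2 ≤
      ε ^ 2 * (s - ∑ j, ‖Z (v j)‖ ^ 2)) :
    ∑ j, ‖Z (v j)‖ ^ 2 ≤ (∑ i, ‖B i‖) * G * √(s - ∑ j, ‖Z (v j)‖ ^ 2) +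
      (∑ i, ‖B i‖) * G * √(∑ j, ‖Z (v j)‖ ^ 2 - ∑ j, ‖Z (u j)‖ ^ 2) +
      ∑ i, Fintype.card I * (ε * ‖adjoint (B i ∘L Y) ∘L Z‖) := by
  refine (sum_norm_apply_sq_le_of_stages hB hBcomm hYZ hZ hUV u v hv).trans ?_
  rw [mul_assoc, mul_assoc, Finset.sum_mul, Finset.sum_mul, ← Finset.sum_add_distrib,
    ← Finset.sum_add_distrib]
  refine Finset.sum_le_sum fun i _ ↦ ?_
  gcongr
  · exact sum_mul_le_mul_sqrt hG hYv (hZw i)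
  · exact sum_mul_le_mul_sqrt (ε := 1) hG (by simpa using hYw i)
      (by simpa using sum_norm_apply_sub_starProjection_sq_le hUV u v Z)
  · exact hA i

end Stages

/-- The Hilbert-Schmidt norms of `Z` on the `W n` increase to a finite limit, which is bounded by
its own increments and therefore vanishes. -/
theorem apply_eq_zero_of_mem_of_offCorner_tendsto_zero (hB : ∀ i, IsStarNormal (B i))
    (hBcomm : ∀ i j, Commute (B i) (B j)) (hYZ : elementaryOperator A B Y = Z)
    (hZ : elementaryOperator A B Z = 0) {J : ℕ → Type*} [∀ n, Fintype (J n)]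
    {W : ℕ → Submodule ℂ H} [∀ n, (W n).HasOrthogonalProjection] (hW : Monotone W)
    (u : ∀ n, OrthonormalBasis (J n) ℂ (W n)) {ε : ℕ → ℝ} (hε : Tendsto ε atTop (𝓝 0))
    (hA : ∀ i n, ‖offCorner (W n) (A i)‖ ≤ ε n)
    (hu : ∀ i n j, ∃ c : ℂ, A i (u n j) = c • (u n j : H) + offCorner (W n) (A i) (u n j)) {G : ℝ}
    (hG : 0 ≤ G) (hYu : ∀ n, ε n ^ 2 * ∑ j, ‖Y (u n j)‖ ^ 2 ≤ G ^ 2)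
    (hYw : ∀ i n, ∑ j, ‖Y (offCorner (W n) (A i) (u n j))‖ ^ 2 ≤ G ^ 2)
    (hZu : ∀ n, ∑ j, ‖Z (u n j)‖ ^ 2 ≤ G ^ 2) {n : ℕ} {x : H} (hx : x ∈ W n) : Z x = 0 := by
  set h : ℕ → ℝ := fun n ↦ ∑ j, ‖Z (u n j)‖ ^ 2
  have hmono : Monotone h := fun m n hmn ↦ sum_norm_apply_sq_mono (hW hmn) (u m) (u n) Z
  have hbdd : BddAbove (Set.range h) := ⟨G ^ 2, Set.forall_mem_range.2 hZu⟩
  set s := ⨆ n, h n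
  have hs (n : ℕ) : h n ≤ s := le_ciSup hbdd n
  have hs_nonpos : s ≤ 0 := by
    refine limit_nonpos_of_le_mul_sqrt_add_mul_sqrt (C := (∑ i, ‖B i‖) * G)
      (e := fun m n ↦ ∑ i, Fintype.card (J m) * (ε n * ‖adjoint (B i ∘L Y) ∘L Z‖))
      (tendsto_atTop_ciSup hmono hbdd) (fun m ↦ ?_) fun m n hmn ↦ ?_
    · simpa using tendsto_finsetSum Finset.univ fun i _ ↦
        (hε.mul_const ‖adjoint (B i ∘L Y) ∘L Z‖).const_mul (Fintype.card (J m) : ℝ)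
    · exact sum_norm_apply_sq_le_mul_sqrt_of_stages hB hBcomm hYZ hZ (hW hmn) (u m) (u n)
        (fun i ↦ hu i n) hG (fun i ↦ hA i n) (hYu n) (fun i ↦ hYw i n)
        fun i ↦ sum_norm_apply_offCorner_sq_le hW hε (hA i) u hs n
  have hZ_basis (j : J n) : Z (u n j) = 0 := by
    have hj : ‖Z (u n j)‖ ^ 2 ≤ h n :=
      Finset.single_le_sum (f := fun j ↦ ‖Z (u n j)‖ ^ 2) (fun _ _ ↦ by positivity)
        (Finset.mem_univ j)
    exact norm_eq_zero.1 (pow_eq_zero_iff two_ne_zero |>.1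
      (le_antisymm (hj.trans ((hs n).trans hs_nonpos)) (sq_nonneg _)))
  rw [← (W n).starProjection_eq_self_iff.2 hx, (u n).starProjection_eq_sum_rankOne]
  simp [hZ_basis]

end Vanishing

/-! ### Subspaces spanned by the components of a vector -/

namespace RefiningResolution

section CellSpan

variable {H : Type*} [NormedAddCommGroup H] [InnerProductSpace ℂ H] [CompleteSpace H]
  (R : RefiningResolution H) {n : ℕ} {x : H}

theorem proj_proj_apply_self (j : R.Cell n) (v : H) : R.proj n j (R.proj n j v) = R.proj n j v :=
  congr($((R.isStarProjection_proj n j).isIdempotentElem.eq) v)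

theorem proj_proj_apply_of_ne {i j : R.Cell n} (hij : i ≠ j) (v : H) :
    R.proj n i (R.proj n j v) = 0 :=
  congr($(R.proj_mul_proj_of_ne hij) v)

theorem inner_proj_apply_left (j : R.Cell n) (v w : H) :
    inner ℂ (R.proj n j v) w = inner ℂ v (R.proj n j w) := by
  rw [← adjoint_inner_right, ← star_eq_adjoint, (R.isStarProjection_proj n j).isSelfAdjoint.star_eq]

theorem sum_norm_proj_apply_sq (n : ℕ) (v : H) : ∑ j, ‖R.proj n j v‖ ^ 2 = ‖v‖ ^ 2 := by
  have hterm (j : R.Cell n) : ‖R.proj n j v‖ ^ 2 = RCLike.re (inner ℂ (R.proj n j v) v) := by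
    rw [← R.proj_proj_apply_self j v, inner_proj_apply_left, inner_self_eq_norm_sq,
      proj_proj_apply_self]
  simp only [hterm]
  rw [← map_sum, ← sum_inner, ← sum_apply, R.sum_proj, one_apply_eq_self, inner_self_eq_norm_sq]

theorem norm_le_of_forall_norm_mul_proj_le {D : H →L[ℂ] H} {ε : ℝ} (hε : 0 ≤ ε)
    (hcomm : ∀ j, Commute D (R.proj n j)) (hD : ∀ j, ‖D * R.proj n j‖ ≤ ε) : ‖D‖ ≤ ε := by
  refine opNorm_le_bound _ hε fun v ↦ pow_le_pow_iff_left₀ (norm_nonneg _) (by positivity)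
    two_ne_zero |>.1 ?_
  rw [mul_pow, ← R.sum_norm_proj_apply_sq n, ← R.sum_norm_proj_apply_sq n v, Finset.mul_sum]
  refine Finset.sum_le_sum fun j _ ↦ ?_
  rw [← mul_pow]
  gcongr
  have hblock : R.proj n j (D v) = (D * R.proj n j) (R.proj n j v) := by
    rw [mul_apply_eq_comp, proj_proj_apply_self]
    exact congr($((hcomm j).eq.symm) v)
  rw [hblock]
  exact le_of_opNorm_le _ (hD j) _

/-- The span of the components of `x` in the cells of stage `n`. -/
def cellSpan (x : H) (n : ℕ) : Submodule ℂ H :=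
  Submodule.span ℂ (Set.range fun j ↦ R.proj n j x)

instance : FiniteDimensional ℂ (R.cellSpan x n) :=
  FiniteDimensional.span_of_finite ℂ (Set.finite_range _)

theorem proj_apply_mem_cellSpan (j : R.Cell n) : R.proj n j x ∈ R.cellSpan x n :=
  Submodule.subset_span ⟨j, rfl⟩

theorem mem_cellSpan : x ∈ R.cellSpan x n := by
  have hsum : ∑ j, R.proj n j x = x := by rw [← sum_apply, R.sum_proj, one_apply_eq_self]
  rw [← hsum]
  exact Submodule.sum_mem _ fun j _ ↦ hsum.symm ▸ R.proj_apply_mem_cellSpan j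

theorem monotone_cellSpan : Monotone (R.cellSpan x) := by
  intro n m hnm
  refine Submodule.span_le.2 ?_
  rintro _ ⟨i, rfl⟩
  have hsum : R.proj n i x = ∑ j, (R.proj m j * R.proj n i) x := by
    rw [← sum_apply, ← Finset.sum_mul, R.sum_proj, one_mul]
  simp only [hsum]
  refine Submodule.sum_mem _ fun j _ ↦ ?_
  rcases R.proj_mul_proj_of_le hnm j i with h | h <;> rw [h]
  · exact Submodule.zero_mem _
  · exact R.proj_apply_mem_cellSpan j

theorem norm_offCorner_cellSpan_le {A : H →L[ℂ] H} {ε : ℝ} (hε : 0 ≤ ε)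
    (hcomm : ∀ j, Commute A (R.proj n j))
    (hscalar : ∀ j, ∃ c : ℂ, ‖(A - c • 1) * R.proj n j‖ ≤ ε) :
    ‖offCorner (R.cellSpan x n) A‖ ≤ ε := by
  choose c hc using hscalar
  set M := ∑ j, c j • R.proj n j
  have hMproj (j : R.Cell n) : M * R.proj n j = c j • R.proj n j := by
    rw [Finset.sum_mul, Finset.sum_eq_single_of_mem j (Finset.mem_univ j) fun i _ hij ↦ by
      rw [smul_mul_assoc, R.proj_mul_proj_of_ne hij, smul_zero], smul_mul_assoc,
      (R.isStarProjection_proj n j).isIdempotentElem.eq]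
  have hprojM (j : R.Cell n) : R.proj n j * M = c j • R.proj n j := by
    rw [Finset.mul_sum, Finset.sum_eq_single_of_mem j (Finset.mem_univ j) fun i _ hij ↦ by
      rw [mul_smul_comm, R.proj_mul_proj_of_ne hij.symm, smul_zero], mul_smul_comm,
      (R.isStarProjection_proj n j).isIdempotentElem.eq]
  have hM : ∀ y ∈ R.cellSpan x n, M y ∈ R.cellSpan x n := by
    refine (Submodule.span_le (p := (R.cellSpan x n).comap (M : H →ₗ[ℂ] H))).2 ?_
    rintro _ ⟨j, rfl⟩
    have happly : M (R.proj n j x) = c j • R.proj n j x := congr($(hMproj j) x)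
    change M (R.proj n j x) ∈ R.cellSpan x n
    rw [happly]
    exact Submodule.smul_mem _ _ (R.proj_apply_mem_cellSpan j)
  rw [← offCorner_sub_of_mapsTo hM]
  refine norm_offCorner_le.trans (R.norm_le_of_forall_norm_mul_proj_le hε
    (fun j ↦ (hcomm j).sub_left ((hMproj j).trans (hprojM j).symm)) fun j ↦ ?_)
  simpa [sub_mul, hMproj] using hc j

/-- The cells of stage `n` in which `x` has a nonzero component; they index an orthonormal basis of
`R.cellSpan x n`. -/
def SupportingCell (x : H) (n : ℕ) : Type := {j : R.Cell n // R.proj n j x ≠ 0}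

noncomputable instance : Fintype (R.SupportingCell x n) :=
  Fintype.ofInjective (Subtype.val : R.SupportingCell x n → R.Cell n) Subtype.val_injective

theorem exists_orthonormalBasis_cellSpan (x : H) (n : ℕ) :
    ∃ u : OrthonormalBasis (R.SupportingCell x n) ℂ (R.cellSpan x n),
      ∀ j, R.proj n j.1 (u j) = u j := by
  set v : R.SupportingCell x n → R.cellSpan x n :=
    fun j ↦ ((‖R.proj n j.1 x‖⁻¹ : ℝ) : ℂ) • ⟨R.proj n j.1 x, R.proj_apply_mem_cellSpan j.1⟩
  have hv_proj (j : R.SupportingCell x n) : R.proj n j.1 (v j) = v j := by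
    simp [v, proj_proj_apply_self]
  have hv : Orthonormal ℂ v := by
    refine ⟨fun j ↦ ?_, fun i j hij ↦ ?_⟩
    · simp [v, norm_smul, j.2]
    · have hne : i.1 ≠ j.1 := fun h ↦ hij (Subtype.ext h)
      change inner ℂ (v i : H) (v j) = 0
      rw [← hv_proj i, ← hv_proj j, inner_proj_apply_left,
        R.proj_proj_apply_of_ne hne, inner_zero_right]
  have hspan : ⊤ ≤ Submodule.span ℂ (Set.range v) := by
    rw [← Submodule.map_le_map_iff_of_injective (R.cellSpan x n).subtype_injective,
      Submodule.map_subtype_top, Submodule.map_span]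
    refine Submodule.span_le.2 ?_
    rintro _ ⟨j, rfl⟩
    by_cases hj : R.proj n j x = 0
    · simp [hj]
    · have hscale : R.proj n j x = (‖R.proj n j x‖ : ℂ) • (v ⟨j, hj⟩ : H) := by simp [v, hj]
      change R.proj n j x ∈ Submodule.span ℂ (Set.image (R.cellSpan x n).subtype (Set.range v))
      rw [hscale]
      exact Submodule.smul_mem _ _ (Submodule.subset_span ⟨v ⟨j, hj⟩, ⟨_, rfl⟩, rfl⟩)
  exact ⟨.mk hv hspan, fun j ↦ by simpa using hv_proj j⟩

variable {R} {u : OrthonormalBasis (R.SupportingCell x n) ℂ (R.cellSpan x n)}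
  (hu : ∀ j, R.proj n j.1 (u j) = u j) {A : H →L[ℂ] H} (hA : ∀ j, Commute A (R.proj n j))
include hu hA

theorem exists_apply_eq_smul_add_offCorner (j : R.SupportingCell x n) :
    ∃ c : ℂ, A (u j) = c • (u j : H) + offCorner (R.cellSpan x n) A (u j) := by
  have hproj_apply : R.proj n j.1 (A (u j)) = A (u j) := by
    rw [← mul_apply_eq_comp, ← (hA j.1).eq, mul_apply_eq_comp, hu]
  refine ⟨inner ℂ (u j : H) (A (u j)), ?_⟩
  have hdiag : (R.cellSpan x n).starProjection (A (u j)) =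
      (inner ℂ (u j : H) (A (u j)) : ℂ) • (u j : H) := by
    rw [u.starProjection_eq_sum_rankOne, sum_apply,
      Finset.sum_eq_single_of_mem j (Finset.mem_univ j)]
    · rfl
    · intro i _ hij
      have hne : i.1 ≠ j.1 := fun h ↦ hij (Subtype.ext h)
      have horth : inner ℂ (u i : H) (A (u j)) = 0 := by
        rw [← hu i, inner_proj_apply_left, ← hproj_apply, R.proj_proj_apply_of_ne hne,
          inner_zero_right]
      simp [horth]
  rw [offCorner_apply_of_mem (u j).2, hdiag, add_sub_cancel]

theorem proj_offCorner_apply (j : R.SupportingCell x n) :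
    R.proj n j.1 (offCorner (R.cellSpan x n) A (u j)) = offCorner (R.cellSpan x n) A (u j) := by
  obtain ⟨c, hc⟩ := exists_apply_eq_smul_add_offCorner hu hA j
  rw [← sub_eq_iff_eq_add'.2 hc, map_sub, map_smul, hu, ← mul_apply_eq_comp, ← (hA j.1).eq,
    mul_apply_eq_comp, hu]

end CellSpan

section Vanishing

variable {ι : Type*} [Fintype ι] {H₁ H₂ : Type*}
  [NormedAddCommGroup H₁] [InnerProductSpace ℂ H₁] [CompleteSpace H₁]
  [NormedAddCommGroup H₂] [InnerProductSpace ℂ H₂]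
  {R : RefiningResolution H₁} {n : ℕ} {x : H₁}

theorem sum_norm_apply_sq_le_card_mul {S : H₁ →L[ℂ] H₂} {δ η : ℝ}
    (hS : ∀ j, ‖S ∘L R.proj n j‖ ≤ δ) {w : R.SupportingCell x n → H₁}
    (hw_proj : ∀ j, R.proj n j.1 (w j) = w j) (hw : ∀ j, ‖w j‖ ≤ η) :
    ∑ j, ‖S (w j)‖ ^ 2 ≤ Fintype.card (R.Cell n) * (δ * η) ^ 2 := by
  have hterm (j : R.SupportingCell x n) : ‖S (w j)‖ ^ 2 ≤ (δ * η) ^ 2 := by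
    have hSw : S (w j) = (S ∘L R.proj n j.1) (w j) := by rw [comp_apply, hw_proj]
    gcongr
    rw [hSw]
    exact le_of_opNorm_le_of_le _ (hS _) (hw j)
  have hcard : Fintype.card (R.SupportingCell x n) ≤ Fintype.card (R.Cell n) :=
    Fintype.card_le_of_injective Subtype.val Subtype.val_injective
  calc ∑ j, ‖S (w j)‖ ^ 2 ≤ Fintype.card (R.SupportingCell x n) * (δ * η) ^ 2 := by
        simpa using Finset.sum_le_card_nsmul Finset.univ _ _ fun j _ ↦ hterm j
    _ ≤ Fintype.card (R.Cell n) * (δ * η) ^ 2 := by gcongr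

variable [CompleteSpace H₂] {A : ι → H₁ →L[ℂ] H₁} {B : ι → H₂ →L[ℂ] H₂}
  (hB : ∀ i, IsStarNormal (B i)) (hBcomm : ∀ i j, Commute (B i) (B j)) {p : ℕ}
  (hcard : ∀ n, Fintype.card (R.Cell n) = ((2 ^ n) ^ (p + 1)) ^ 2)
  (hA : ∀ i n j, Commute (A i) (R.proj n j)) {K : ℝ} (hK : 0 < K)
  (hAK : ∀ i, R.NearlyScalar (A i) K) {T : H₁ →L[ℂ] H₂}
include hB hBcomm hcard hA hK hAK

/-- The number of cells grows like `4 ^ (n * (p + 1))` and is compensated by the decay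
`4 ^ (-n * (r + s))` of each summand. -/
theorem sum_norm_elementaryOperator_pow_apply_sq_le {M : ℕ}
    (hT : (elementaryOperator A B ^ M) T = 0) {r s : ℕ} (hrs : r + s = p + 1)
    {w : R.SupportingCell x n → H₁} (hw_proj : ∀ j, R.proj n j.1 (w j) = w j)
    (hw : ∀ j, ‖w j‖ ≤ (K / 2 ^ n) ^ s) :
    ∑ j, ‖(elementaryOperator A B ^ r) T (w j)‖ ^ 2 ≤
      ((3 * ((1 + ∑ i, ‖B i‖) * K)) ^ (p + 1) * ‖T‖) ^ 2 := by
  set q : ℝ := 3 * ((1 + ∑ i, ‖B i‖) * (K / 2 ^ n)) with hq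
  have hKq : K / 2 ^ n ≤ q := by
    have hε : 0 < K / 2 ^ n := by positivity
    have hB_nonneg : 0 ≤ ∑ i, ‖B i‖ := by positivity
    rw [hq]
    nlinarith
  have hdecay (j : R.Cell n) : ‖(elementaryOperator A B ^ r) T ∘L R.proj n j‖ ≤ q ^ r * ‖T‖ :=
    norm_elementaryOperator_pow_apply_comp_le hB hBcomm (R.isStarProjection_proj n j)
      (fun i ↦ hA i n j) (by positivity) (fun i ↦ hAK i n j) hT r
  calc ∑ j, ‖(elementaryOperator A B ^ r) T (w j)‖ ^ 2
      ≤ Fintype.card (R.Cell n) * (q ^ r * ‖T‖ * (K / 2 ^ n) ^ s) ^ 2 :=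
        sum_norm_apply_sq_le_card_mul hdecay hw_proj hw
    _ ≤ Fintype.card (R.Cell n) * (q ^ r * ‖T‖ * q ^ s) ^ 2 := by gcongr
    _ = ((2 ^ n) ^ (p + 1) * q ^ (p + 1) * ‖T‖) ^ 2 := by
        rw [hcard, ← hrs]
        push_cast
        ring
    _ = ((3 * ((1 + ∑ i, ‖B i‖) * K)) ^ (p + 1) * ‖T‖) ^ 2 := by
        rw [← mul_pow]
        congr 3
        rw [hq]
        field_simp

theorem elementaryOperator_pow_apply_eq_zero_of_nearlyScalar
    (hT : (elementaryOperator A B ^ (p + 2)) T = 0) : (elementaryOperator A B ^ (p + 1)) T = 0 := by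
  ext x
  choose u hu using R.exists_orthonormalBasis_cellSpan x
  have hbound {n r s : ℕ} {w : R.SupportingCell x n → H₁} (hrs : r + s = p + 1) :=
    sum_norm_elementaryOperator_pow_apply_sq_le hB hBcomm hcard hA hK hAK hT hrs (w := w)
  have hoff i n : ‖offCorner (R.cellSpan x n) (A i)‖ ≤ K / 2 ^ n :=
    R.norm_offCorner_cellSpan_le (by positivity) (hA i n) (hAK i n)
  have hu_norm n (j : R.SupportingCell x n) : ‖(u n j : H₁)‖ = 1 := (u n).orthonormal.1 j
  refine apply_eq_zero_of_mem_of_offCorner_tendsto_zero (Y := (elementaryOperator A B ^ p) T)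
    (n := 0) (ε := fun n ↦ K / 2 ^ n) (G := (3 * ((1 + ∑ i, ‖B i‖) * K)) ^ (p + 1) * ‖T‖)
    hB hBcomm (by rw [pow_succ', mul_apply_eq_comp])
    (by rw [← hT, pow_succ' _ (p + 1), mul_apply_eq_comp]) R.monotone_cellSpan u ?_ hoff
    (fun i n ↦ exists_apply_eq_smul_add_offCorner (hu n) (hA i n)) (by positivity)
    (fun n ↦ ?_) (fun i n ↦ ?_) (fun n ↦ ?_) R.mem_cellSpan
  · exact tendsto_const_nhds.div_atTop (tendsto_pow_atTop_atTop_of_one_lt one_lt_two)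
  · have hscaled := hbound rfl (w := fun j ↦ ((K / 2 ^ n : ℝ) : ℂ) • (u n j : H₁))
      (fun j ↦ by rw [map_smul, hu])
      fun j ↦ by rw [norm_smul, hu_norm, mul_one, pow_one, Complex.norm_of_nonneg (by positivity)]
    refine le_of_eq_of_le ?_ hscaled
    simp only [map_smul, norm_smul, mul_pow, ← Finset.mul_sum,
      Complex.norm_of_nonneg (show 0 ≤ K / 2 ^ n by positivity)]
  · exact hbound rfl (proj_offCorner_apply (hu n) (hA i n)) fun j ↦ by
      simpa using le_of_opNorm_le_of_le _ (hoff i n) (hu_norm n j).le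
  · exact hbound (s := 0) rfl (hu n) fun j ↦ (hu_norm n j).le

end Vanishing

end RefiningResolution

/-! ### Reduction to a tuple containing the identity -/

theorem isStarNormal_mul_of_commute {R : Type*} [CStarAlgebra R] {a b : R} (ha : IsStarNormal a)
    (hb : IsStarNormal b) (hab : Commute a b) : IsStarNormal (a * b) := by
  refine ⟨?_⟩
  rw [star_mul]
  exact ((hb.commute_star_left hab.symm).mul_right hb.star_comm_self).mul_left
    (ha.star_comm_self.mul_right (ha.commute_star_left hab))

theorem isStarNormal_mul_add_one_sub {R : Type*} [CStarAlgebra R] {a F : R} (ha : IsStarNormal a)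
    (hF : IsStarProjection F) (haF : Commute a F) : IsStarNormal (a * F + (1 - F)) := by
  have haF_normal := isStarNormal_mul_of_commute ha hF.isSelfAdjoint.isStarNormal haF
  have hF_normal := hF.one_sub.isSelfAdjoint.isStarNormal
  refine Commute.isStarNormal_add ?_
  rw [hF.one_sub.isSelfAdjoint.star_eq]
  exact (Commute.one_right _).sub_right (haF.mul_left (.refl F))

theorem star_mul_self_of_mul_add_one_sub {R : Type*} [Ring R] [StarRing R] {a F : R}
    (hF : IsStarProjection F) (haF : Commute a F) :
    star (a * F + (1 - F)) * (a * F + (1 - F)) = star a * a * F + (1 - F) := by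
  have hstar : star (a * F + (1 - F)) = star a * F + (1 - F) := by
    have hstarF : Commute (star a) F := by simpa [hF.isSelfAdjoint.star_eq] using haF.star_star
    simp [hF.isSelfAdjoint.star_eq, hstarF.eq]
  have hdiag : star a * F * (a * F) = star a * a * F := by
    rw [haF.eq, mul_assoc, ← mul_assoc F, hF.isIdempotentElem.eq, ← haF.eq, mul_assoc]
  have hcross : (1 - F) * (a * F) = 0 := by
    rw [haF.eq, ← mul_assoc, hF.one_sub_mul_self, zero_mul]
  rw [hstar, add_mul, mul_add, mul_add, hdiag, hcross, mul_assoc _ F (1 - F),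
    hF.mul_one_sub_self, mul_zero, add_zero, zero_add, hF.one_sub.isIdempotentElem.eq]

section SpectralCutModulus

variable {H H₂ : Type*} [NormedAddCommGroup H] [InnerProductSpace ℂ H] [CompleteSpace H]
  [NormedAddCommGroup H₂] [InnerProductSpace ℂ H₂] {a W : H →L[ℂ] H} {δ : ℝ}

theorem commute_spectralCut_star_mul_self (ha : IsStarNormal a) (hW : Commute W a) :
    Commute W (spectralCut (star a * a) δ) :=
  commute_spectralCut (.star_mul_self a) ((ha.commute_star_right hW).mul_right hW)

theorem norm_mul_one_sub_spectralCut_sq_le (hδ : 0 ≤ δ) :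
    ‖a * (1 - spectralCut (star a * a) δ)‖ ^ 2 ≤ δ := by
  set F := spectralCut (star a * a) δ
  have hF : IsStarProjection (1 - F) := isStarProjection_spectralCut.one_sub
  calc ‖a * (1 - F)‖ ^ 2 = ‖(1 - F) * (star a * a * (1 - F))‖ := by
        rw [sq, ← CStarRing.norm_star_mul_self, star_mul, hF.isSelfAdjoint.star_eq]
        simp only [mul_assoc]
    _ ≤ ‖star a * a * (1 - F)‖ :=
        (norm_mul_le _ _).trans (mul_le_of_le_one_left (norm_nonneg _) hF.norm_le)
    _ ≤ δ := norm_mul_one_sub_spectralCut_le (star_mul_self_nonneg a) hδ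

theorem isUnit_mul_spectralCut_add (ha : IsStarNormal a) (hδ : 0 < δ) (hδ1 : δ ≤ 1) :
    IsUnit (a * spectralCut (star a * a) δ + (1 - spectralCut (star a * a) δ)) := by
  set F := spectralCut (star a * a) δ
  have hF : IsStarProjection F := isStarProjection_spectralCut
  have haF : Commute a F := commute_spectralCut_star_mul_self ha (.refl a)
  have hmodulus : star (a * F + (1 - F)) * (a * F + (1 - F)) =
      excess (star a * a) δ + (1 - δ) • (1 - F) + algebraMap ℝ _ δ := by
    rw [star_mul_self_of_mul_add_one_sub hF haF,
      ← sub_smul_one_mul_spectralCut (.star_mul_self a) δ, Algebra.algebraMap_eq_smul_one,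
      Complex.coe_smul]
    change _ = (star a * a - δ • 1) * F + _ + _
    rw [sub_mul, smul_mul_assoc, one_mul]
    module
  have hle : algebraMap ℝ (H →L[ℂ] H) δ ≤ star (a * F + (1 - F)) * (a * F + (1 - F)) := by
    rw [hmodulus]
    exact le_add_of_nonneg_left (add_nonneg excess_nonneg
      (smul_nonneg (sub_nonneg.2 hδ1) hF.one_sub.nonneg))
  have hunit := CStarAlgebra.isUnit_of_le _ hle (isStrictlyPositive_algebraMap hδ)
  exact ((isStarNormal_mul_add_one_sub ha hF haF).star_comm_self.isUnit_mul_iff.1 hunit).2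

theorem comp_eq_zero_of_forall_comp_spectralCut_eq_zero (ha : IsStarNormal a) {Z : H →L[ℂ] H₂}
    (hZ : ∀ δ : ℝ, 0 < δ → δ ≤ 1 → Z ∘L spectralCut (star a * a) δ = 0) : Z ∘L a = 0 := by
  have hbound (δ : ℝ) (hδ : 0 < δ) (hδ1 : δ ≤ 1) : ‖Z ∘L a‖ ≤ ‖Z‖ * √δ := by
    set F := spectralCut (star a * a) δ
    have haF : a * F = F * a := (commute_spectralCut_star_mul_self ha (.refl a)).eq
    have hsplit : Z ∘L a = Z ∘L (a * (1 - F)) := by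
      rw [mul_sub, mul_one, haF, comp_sub]
      change _ = _ - (Z ∘L F) ∘L a
      rw [hZ δ hδ hδ1, zero_comp, sub_zero]
    rw [hsplit]
    refine (opNorm_comp_le _ _).trans ?_
    gcongr
    exact Real.le_sqrt_of_sq_le (norm_mul_one_sub_spectralCut_sq_le hδ.le)
  have hlim : Tendsto (fun δ : ℝ ↦ ‖Z‖ * √δ) (𝓝[>] 0) (𝓝 0) := by
    have : Continuous fun δ : ℝ ↦ ‖Z‖ * √δ := by fun_prop
    simpa using (this.tendsto 0).mono_left nhdsWithin_le_nhds
  refine norm_le_zero_iff.1 (ge_of_tendsto hlim ?_)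
  filter_upwards [Ioc_mem_nhdsGT one_pos] with δ hδ using hbound δ hδ.1 hδ.2

end SpectralCutModulus

section Reduction

variable {ι : Type*} [Fintype ι] {H₁ H₂ : Type*}
  [NormedAddCommGroup H₁] [InnerProductSpace ℂ H₁]
  [NormedAddCommGroup H₂] [InnerProductSpace ℂ H₂]
  {A : ι → H₁ →L[ℂ] H₁} {B : ι → H₂ →L[ℂ] H₂} {T : H₁ →L[ℂ] H₂}

theorem elementaryOperator_mul_pow_apply_eq_zero {X : H₁ →L[ℂ] H₁} (hX : ∀ i, Commute (A i) X)
    {n : ℕ} (hT : (elementaryOperator A B ^ n) T = 0) :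
    (elementaryOperator (fun i ↦ A i * X) B ^ n) T = 0 := by
  have hfactor : elementaryOperator (fun i ↦ A i * X) B =
      precomp H₂ X * elementaryOperator A B := by
    ext S x
    simp [elementaryOperator_apply_apply]
  have hcomm : Commute (precomp H₂ X) (elementaryOperator A B) := by
    ext S x
    have happly (i : ι) : A i (X x) = X (A i x) := congr($((hX i).eq) x)
    simp [elementaryOperator_apply_apply, happly]
  rw [hfactor, hcomm.mul_pow, mul_apply_eq_comp, hT, map_zero]

/-- Normality turns `Z A i = 0` into `A i Z* = 0`, whence `Z Z* = Δ(Y) Z* = 0`. -/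
theorem elementaryOperator_apply_eq_zero_of_forall_comp_eq_zero
    [CompleteSpace H₁] [CompleteSpace H₂] (hA : ∀ i, IsStarNormal (A i))
    (hT : ∀ i, elementaryOperator A B T ∘L A i = 0) :
    elementaryOperator A B T = 0 := by
  set Z := elementaryOperator A B T
  have hA_adjoint (i : ι) (y : H₂) : A i (adjoint Z y) = 0 := by
    rw [← (hA i).adjoint_apply_eq_zero_iff, ← comp_apply, ← adjoint_comp, hT i, map_zero,
      zero_apply]
  have hZZ : adjoint (adjoint Z) ∘L adjoint Z = 0 := by
    ext y
    simpa [hA_adjoint] using elementaryOperator_apply_apply (A := A) (B := B) T (adjoint Z y)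
  simpa using adjoint_comp_self_eq_zero_iff.1 hZZ

variable [CompleteSpace H₁] [CompleteSpace H₂] {p : ℕ} (hcard : Fintype.card ι = p + 2)
  (hA : ∀ i, IsStarNormal (A i)) (hAcomm : ∀ i j, Commute (A i) (A j))
  (hB : ∀ i, IsStarNormal (B i)) (hBcomm : ∀ i j, Commute (B i) (B j))
  (hT : (elementaryOperator A B ^ (p + 2)) T = 0) {l : ι}
include hcard hA hAcomm hB hBcomm hT

theorem elementaryOperator_pow_apply_eq_zero_of_eq_one (hl : A l = 1) :
    (elementaryOperator A B ^ (p + 1)) T = 0 := by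
  classical
  obtain ⟨R, hRcard, hRcomm, K, hK⟩ :=
    RefiningResolution.exists_nearlyScalar_of_commute (Finset.univ.erase l) hA hAcomm
  have hs : (Finset.univ.erase l).card = p + 1 := by
    rw [Finset.card_erase_of_mem (Finset.mem_univ l), Finset.card_univ, hcard]
    rfl
  refine R.elementaryOperator_pow_apply_eq_zero_of_nearlyScalar hB hBcomm (hs ▸ hRcard)
    (fun i ↦ hRcomm _ fun j _ ↦ hAcomm i j) (lt_max_of_lt_right one_pos) (fun i ↦ ?_) hT
    (K := max K 1)
  obtain rfl | hi := eq_or_ne i l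
  · exact hl ▸ R.nearlyScalar_one (by positivity)
  · exact (hK i (Finset.mem_erase.2 ⟨hi, Finset.mem_univ i⟩)).mono (le_max_left _ _)

theorem elementaryOperator_pow_apply_eq_zero_of_isUnit (hl : IsUnit (A l)) :
    (elementaryOperator A B ^ (p + 1)) T = 0 := by
  obtain ⟨X, hX⟩ := hl
  have hAX (i : ι) : Commute (A i) X := hX ▸ hAcomm i l
  have hAinv (i : ι) : Commute (A i) ↑X⁻¹ := (hAX i).units_inv_right
  have hX_normal : IsStarNormal (X : H₁ →L[ℂ] H₁) := hX ▸ hA l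
  have hker := elementaryOperator_pow_apply_eq_zero_of_eq_one (l := l) hcard
    (fun i ↦ isStarNormal_mul_of_commute (hA i) inferInstance (hAinv i))
    (fun i j ↦ ((hAcomm i j).mul_right (hAinv i)).mul_left
      ((hAinv j).symm.mul_right (.refl _)))
    hB hBcomm (elementaryOperator_mul_pow_apply_eq_zero hAinv hT) (by rw [← hX, X.mul_inv])
  simpa only [mul_assoc, X.inv_mul, mul_one] using elementaryOperator_mul_pow_apply_eq_zero
    (fun i ↦ (hAX i).mul_left ((Commute.refl (X : H₁ →L[ℂ] H₁)).units_inv_left)) hker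

theorem elementaryOperator_pow_apply_comp_spectralCut_eq_zero {δ : ℝ} (hδ : 0 < δ) (hδ1 : δ ≤ 1) :
    (elementaryOperator A B ^ (p + 1)) T ∘L spectralCut (star (A l) * A l) δ = 0 := by
  set F := spectralCut (star (A l) * A l) δ
  have hF : IsStarProjection F := isStarProjection_spectralCut
  have hAF (i : ι) : Commute (A i) F := commute_spectralCut_star_mul_self (hA l) (hAcomm i l)
  have hFF : Commute F (1 - F) := (Commute.one_right F).sub_right (.refl F)
  have hAF' (i : ι) : Commute (A i * F) (1 - F) :=
    ((Commute.one_right _).sub_right (hAF i)).mul_left hFF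
  set A' : ι → H₁ →L[ℂ] H₁ := fun i ↦ A i * F + (1 - F)
  have hA' (i : ι) : IsStarNormal (A' i) := isStarNormal_mul_add_one_sub (hA i) hF (hAF i)
  have hA'comm (i j : ι) : Commute (A' i) (A' j) := by
    have hprod : Commute (A i * F) (A j * F) :=
      ((hAcomm i j).mul_right (hAF i)).mul_left ((hAF j).symm.mul_right (.refl F))
    exact (hprod.add_right (hAF' i)).add_left ((hAF' j).symm.add_right (.refl _))
  have hcut (i : ι) : A i ∘L F = F ∘L A' i := by
    change A i * F = F * (A i * F + (1 - F))
    rw [mul_add, hF.mul_one_sub_self, add_zero, ← mul_assoc, ← (hAF i).eq, mul_assoc,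
      hF.isIdempotentElem.eq]
  rw [elementaryOperator_pow_apply_comp hcut]
  refine elementaryOperator_pow_apply_eq_zero_of_isUnit (l := l) hcard hA' hA'comm hB hBcomm ?_
    (isUnit_mul_spectralCut_add (hA l) hδ hδ1)
  rw [← elementaryOperator_pow_apply_comp hcut, hT, zero_comp]

theorem elementaryOperator_pow_apply_eq_zero :
    (elementaryOperator A B ^ (p + 1)) T = 0 := by
  rw [pow_succ', mul_apply_eq_comp]
  refine elementaryOperator_apply_eq_zero_of_forall_comp_eq_zero hA fun l ↦
    comp_eq_zero_of_forall_comp_spectralCut_eq_zero (hA l) fun δ hδ hδ1 ↦ ?_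
  rw [← mul_apply_eq_comp, ← pow_succ']
  exact elementaryOperator_pow_apply_comp_spectralCut_eq_zero hcard hA hAcomm hB hBcomm hT hδ hδ1

end Reduction

theorem ascent_le_card_sub_one_of_commuting_normal_general {ι : Type*} [Fintype ι]
    {H₁ H₂ : Type*} [NormedAddCommGroup H₁] [InnerProductSpace ℂ H₁] [CompleteSpace H₁]
    [NormedAddCommGroup H₂] [InnerProductSpace ℂ H₂] [CompleteSpace H₂]
    (hι : 2 ≤ Fintype.card ι) (A : ι → H₁ →L[ℂ] H₁) (B : ι → H₂ →L[ℂ] H₂)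
    (hAcomm : ∀ i j, A i ∘L A j = A j ∘L A i)
    (hAnormal : ∀ i, adjoint (A i) ∘L A i = A i ∘L adjoint (A i))
    (hBcomm : ∀ i j, B i ∘L B j = B j ∘L B i)
    (hBnormal : ∀ i, adjoint (B i) ∘L B i = B i ∘L adjoint (B i))
    (T : H₁ →L[ℂ] H₂) :
    (fun S : H₁ →L[ℂ] H₂ ↦ ∑ i, B i ∘L S ∘L A i)^[Fintype.card ι - 1] T = 0 ↔
      (fun S : H₁ →L[ℂ] H₂ ↦ ∑ i, B i ∘L S ∘L A i)^[Fintype.card ι] T = 0 := by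
  obtain ⟨p, hp⟩ := Nat.exists_eq_add_of_le' hι
  have hΔ : (fun S : H₁ →L[ℂ] H₂ ↦ ∑ i, B i ∘L S ∘L A i) = elementaryOperator A B :=
    funext fun S ↦ (elementaryOperator_apply S).symm
  rw [hΔ, hp, ← FunLike.coe_pow_eq_iterate, ← FunLike.coe_pow_eq_iterate]
  change (elementaryOperator A B ^ (p + 1)) T = 0 ↔ (elementaryOperator A B ^ (p + 2)) T = 0
  refine ⟨fun hT ↦ by rw [pow_succ', mul_apply_eq_comp, hT, map_zero], fun hT ↦ ?_⟩
  exact elementaryOperator_pow_apply_eq_zero hp (fun i ↦ ⟨hAnormal i⟩) hAcomm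
    (fun i ↦ ⟨hBnormal i⟩) hBcomm hT

/-- For the multiplication operator `Δ(T) = ∑_{i=1}^k B i T A i`, where `{A i}` and `{B i}`
are commuting families of bounded normal operators on separable Hilbert spaces and `k ≥ 2`,
one has `ker Δ^{k-1} = ker Δ^k`, i.e. the ascent of `Δ` is at most `k - 1`. -/
theorem ascent_le_card_sub_one_of_commuting_normal
    {H₁ H₂ : Type*}
    [NormedAddCommGroup H₁] [InnerProductSpace ℂ H₁] [CompleteSpace H₁]
    [TopologicalSpace.SeparableSpace H₁]
    [NormedAddCommGroup H₂] [InnerProductSpace ℂ H₂] [CompleteSpace H₂]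
    [TopologicalSpace.SeparableSpace H₂]
    (k : ℕ) (hk : 2 ≤ k)
    (A : Fin k → (H₁ →L[ℂ] H₁)) (B : Fin k → (H₂ →L[ℂ] H₂))
    (hAcomm : ∀ i j, A i ∘L A j = A j ∘L A i)
    (hAnormal : ∀ i, adjoint (A i) ∘L A i = A i ∘L adjoint (A i))
    (hBcomm : ∀ i j, B i ∘L B j = B j ∘L B i)
    (hBnormal : ∀ i, adjoint (B i) ∘L B i = B i ∘L adjoint (B i))
    (T : H₁ →L[ℂ] H₂) :
    (fun S : H₁ →L[ℂ] H₂ => ∑ i, B i ∘L S ∘L A i)^[k - 1] T = 0 ↔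
      (fun S : H₁ →L[ℂ] H₂ => ∑ i, B i ∘L S ∘L A i)^[k] T = 0 := by
  simpa using ascent_le_card_sub_one_of_commuting_normal_general (by simpa using hk) A B hAcomm
    hAnormal hBcomm hBnormal T
end
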